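/- arXiv:2201.06172 — 4 statements merged into one kernel-verified Lean document; each statement's English description precedes it below -/
import Mathlib

section
/- Let n ≥ 1 with n ≡ 0 (mod 4) and let H(x) = x^{3^n − 3} be a power function over GF(3^n). Then H is differentially (−1,6)-uniform, and its (−1)-differential spectrum is given by ω_0 = (5·3^n − 3)/8, ω_1 = 1, ω_2 = (3^n + 3)/4, ω_4 = (3^n − 17)/8, ω_6 = 1, and ω_i = 0 for i ∈ {3, 5} and for i ≥ 7. -/
/-!
Write `q = 3 ^ n` and let `χ` be the quadratic character of `F`. Since `x ^ (q - 3) = (x⁻¹) ^ 2`,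
the substitution `x = y + 1` turns `(x + 1) ^ d + x ^ d = b` into
`b (y² - 1)² + y² + 1 = 0`, apart from the two extra solutions `y = ±1` when `b = 1`
(`eqn_iff`). If `b ≠ 0` and the quartic has a root, then `b + 1` is a square `s²`, and the quartic
factors as `((s - 1) y² - s) ((s + 1) y² - s)` (`quartic_factor`). For `s ≠ 0` it therefore has
`2 + χ(s / (s - 1)) + χ(s / (s + 1))` roots, and the product of the two character values is `χ b`.
Hence, for `b ∉ {0, 1, -1}`, the count is `0` if `b + 1` is a nonsquare, `2` if `b + 1` is a square
and `b` is not, and `0` or `4` if both are squares. The exceptional values are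
`δ(0) = 2`, `δ(-1) = 1` and `δ(1) = 6`; the last one uses `16 ∣ q - 1`, which makes the elements of
order `8` squares.

This gives the pointwise identity `4 [δ(b) = 2] = (1 - χ b) (1 + χ (b + 1)) + 2 [b = 0]`. Summing
it over `b`, with `∑ χ(b) χ(b + 1) = -1` (a Jacobi sum), gives `4 ω₂ = q + 3`. The two remaining
unknowns `ω₀` and `ω₄` follow from `∑ ω_i = q` and `∑ i ω_i = q`.
-/

open Finset

/-- `cdelta F d c b` is the number of `x` in the finite field `F` with
`(x+1)^d - c * x^d = b`, i.e. the entry `δ_c(b)` of the `c`-DDT of `x ↦ x^d`. -/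
noncomputable def cdelta (F : Type*) [Field F] (d : ℕ) (c b : F) : ℕ :=
  Nat.card {x : F // (x + 1) ^ d - c * x ^ d = b}

/-- `comega F d c i` is the number of `b` in `F` with `δ_c(b) = i`,
i.e. the value `ω_i` of the `c`-differential spectrum of `x ↦ x^d`. -/
noncomputable def comega (F : Type*) [Field F] (d : ℕ) (c : F) (i : ℕ) : ℕ :=
  Nat.card {b : F // cdelta F d c b = i}

open scoped Classical in
/-- The quadratic character of `F`, valued in `ℤ`. -/
noncomputable def chi (F : Type*) [Field F] (x : F) : ℤ :=
  if x = 0 then 0 else if IsSquare x then 1 else -1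

/-- The equation `(x + 1) ^ d + x ^ d = b` with `x = y + 1`, where `x ↦ x ^ d` is the inverse
square; the disjunct `y ^ 2 = 1 ∧ b = 1` is the contribution of `x ∈ {0, -1}`. -/
lemma eqn_iff {F : Type*} [Field F] (h3 : (3 : F) = 0) (d : ℕ)
    (hd : ∀ x : F, x ^ d = (x⁻¹) ^ 2) (b y : F) :
    (y + 1 + 1) ^ d - (-1) * (y + 1) ^ d = b ↔
      (y ^ 2 = 1 ∧ b = 1) ∨ b * (y ^ 2 - 1) ^ 2 + y ^ 2 + 1 = 0 := by
  have h2 : (2 : F) ≠ 0 := fun h => one_ne_zero (α := F) (by linear_combination h3 - h)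
  rw [hd, hd]
  by_cases h1 : y = 1
  · subst h1
    have e1 : (1 + 1 + 1 : F) = 0 := by linear_combination h3
    have e2 : (1 + 1 : F) = -1 := by linear_combination h3
    rw [e1, e2]
    have e3 : (-1 : F)⁻¹ = -1 := by norm_num
    rw [e3]
    constructor
    · intro h
      left
      refine ⟨by ring, ?_⟩
      rw [← h]; simp
    · rintro (⟨-, rfl⟩ | h)
      · simp
      · exact absurd (by linear_combination h) h2
  by_cases h1' : y = -1
  · subst h1'
    constructor
    · intro h
      left
      refine ⟨by ring, ?_⟩
      rw [← h]; simp
    · rintro (⟨-, rfl⟩ | h)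
      · simp
      · exact absurd (by linear_combination h) h2
  have n1 : y - 1 ≠ 0 := sub_ne_zero.mpr h1
  have n2 : y + 1 ≠ 0 := fun h => h1' (by linear_combination h)
  have e : y + 1 + 1 = y - 1 := by linear_combination h3
  have n3 : ¬ (y ^ 2 = 1 ∧ b = 1) := by
    rintro ⟨h, -⟩
    exact mul_ne_zero n1 n2 (by linear_combination h)
  rw [e]
  simp only [n3, false_or]
  have key : (y - 1)⁻¹ ^ 2 - (-1) * (y + 1)⁻¹ ^ 2
      = -(y ^ 2 + 1) / ((y - 1) * (y + 1)) ^ 2 := by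
    field_simp
    linear_combination (y ^ 2 + 1) * h3
  rw [key, div_eq_iff (pow_ne_zero 2 (mul_ne_zero n1 n2))]
  constructor
  · intro h; linear_combination -h
  · intro h; linear_combination -h

/-- In characteristic `3` the discriminant of `b (w - 1) ^ 2 + w + 1` is a square times `b + 1`, so
the polynomial splits when `b + 1 = s ^ 2`. -/
lemma quartic_factor {F : Type*} [Field F] (h3 : (3 : F) = 0) {b s : F} (hs : b + 1 = s ^ 2)
    (w : F) : b * (w - 1) ^ 2 + w + 1 = ((s - 1) * w - s) * ((s + 1) * w - s) := by
  obtain rfl : b = s ^ 2 - 1 := by linear_combination hs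
  linear_combination w * h3

/-- A root of the quartic forces `b + 1` to be a square. -/
lemma isSquare_of_root {F : Type*} [Field F] (h3 : (3 : F) = 0) {b y : F}
    (h : b * (y ^ 2 - 1) ^ 2 + y ^ 2 + 1 = 0) : IsSquare (b + 1) := by
  have hw : y ^ 2 - 1 ≠ 0 := by
    intro h0
    have h1 : (1 : F) = 0 := by
      linear_combination h3 - h + (b * (y ^ 2 - 1) + 1) * h0
    exact one_ne_zero h1
  -- With `v = 1 / (y ^ 2 - 1)` the equation reads `b = v ^ 2 - v`, so `b + 1 = (v + 1) ^ 2`.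
  refine ⟨(y ^ 2 - 1)⁻¹ + 1, ?_⟩
  field_simp
  linear_combination h + (-1 - (y ^ 2 - 1)) * h3

/-- The number of roots of the quartic `b (y² - 1)² + y² + 1`. -/
def rootCount {F : Type*} [Field F] [Fintype F] [DecidableEq F] (b : F) : ℕ :=
  #{y : F | b * (y ^ 2 - 1) ^ 2 + y ^ 2 + 1 = 0}

lemma rootCount_eq_zero {F : Type*} [Field F] [Fintype F] [DecidableEq F] (h3 : (3 : F) = 0)
    {b : F} (hb : ¬ IsSquare (b + 1)) : rootCount b = 0 := by
  rw [rootCount, Finset.card_eq_zero, Finset.filter_eq_empty_iff]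
  exact fun y _ h => hb (isSquare_of_root h3 h)

lemma card_sqrts {F : Type*} [Field F] [Fintype F] [DecidableEq F] (hr : ringChar F ≠ 2) (a : F) :
    ((#{y : F | y ^ 2 = a} : ℕ) : ℤ) = quadraticChar F a + 1 := by
  rw [← quadraticChar_card_sqrts hr a]
  congr 2
  ext y
  simp

lemma rootCount_eq {F : Type*} [Field F] [Fintype F] [DecidableEq F] (h3 : (3 : F) = 0)
    (hr : ringChar F ≠ 2) {b s : F} (hs : b + 1 = s ^ 2) (hs0 : s ≠ 0) (hb : b ≠ 0) :
    (rootCount b : ℤ) =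
      2 + quadraticChar F (s / (s - 1)) + quadraticChar F (s / (s + 1)) := by
  have hbs : b = (s - 1) * (s + 1) := by linear_combination hs
  have n1 : s - 1 ≠ 0 := fun h => hb (by rw [hbs, h, zero_mul])
  have n2 : s + 1 ≠ 0 := fun h => hb (by rw [hbs, h, mul_zero])
  have hset : ({y : F | b * (y ^ 2 - 1) ^ 2 + y ^ 2 + 1 = 0} : Finset F) =
      ({y : F | y ^ 2 = s / (s - 1)} : Finset F) ∪ ({y : F | y ^ 2 = s / (s + 1)} : Finset F) := by
    ext y
    simp only [Finset.mem_filter, Finset.mem_univ, true_and, Finset.mem_union]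
    rw [quartic_factor h3 hs, mul_eq_zero, sub_eq_zero, sub_eq_zero, eq_div_iff n1, eq_div_iff n2,
      mul_comm (s - 1), mul_comm (s + 1)]
  have hdisj : Disjoint ({y : F | y ^ 2 = s / (s - 1)} : Finset F)
      ({y : F | y ^ 2 = s / (s + 1)} : Finset F) := by
    rw [Finset.disjoint_filter]
    intro y _ h h'
    rw [h, div_eq_div_iff n1 n2] at h'
    exact hs0 (by linear_combination s * h3 - h')
  rw [rootCount, hset, Finset.card_union_of_disjoint hdisj, Nat.cast_add, card_sqrts hr,
    card_sqrts hr]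
  ring

lemma quadraticChar_mul_eq {F : Type*} [Field F] [Fintype F] [DecidableEq F]
    {b s : F} (hs : b + 1 = s ^ 2) (hs0 : s ≠ 0) (hb : b ≠ 0) :
    quadraticChar F (s / (s - 1)) * quadraticChar F (s / (s + 1)) = quadraticChar F b := by
  have hbs : b = (s - 1) * (s + 1) := by linear_combination hs
  have n1 : s - 1 ≠ 0 := fun h => hb (by rw [hbs, h, zero_mul])
  have n2 : s + 1 ≠ 0 := fun h => hb (by rw [hbs, h, mul_zero])
  have e : s / (s - 1) * (s / (s + 1)) = b * (s / b) ^ 2 := by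
    rw [hbs]; field_simp
  rw [← map_mul, e, map_mul, quadraticChar_sq_one' (div_ne_zero hs0 hb), mul_one]

/-- The value of `δ` in terms of the quartic: `x ∈ {0, -1}` adds two solutions when `b = 1`. -/
lemma cdelta_eq {F : Type*} [Field F] [Fintype F] [DecidableEq F] (h3 : (3 : F) = 0) (d : ℕ)
    (hd : ∀ x : F, x ^ d = (x⁻¹) ^ 2) (b : F) :
    cdelta F d (-1) b = rootCount b + if b = 1 then 2 else 0 := by
  have h2 : (2 : F) ≠ 0 := fun h => one_ne_zero (α := F) (by linear_combination h3 - h)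
  have e1 : cdelta F d (-1) b =
      #{y : F | (y ^ 2 = 1 ∧ b = 1) ∨ b * (y ^ 2 - 1) ^ 2 + y ^ 2 + 1 = 0} := by
    rw [cdelta, ← Fintype.card_subtype, ← Nat.card_eq_fintype_card]
    refine Nat.card_congr ((Equiv.subRight (1 : F)).subtypeEquiv fun x => ?_)
    rw [← eqn_iff h3 d hd]
    simp
  rw [e1, Finset.filter_or, Finset.card_union_of_disjoint, add_comm]
  · congr 1
    split_ifs with hb
    · have : ({y : F | y ^ 2 = 1 ∧ b = 1} : Finset F) = {1, -1} := by
        ext y; simp [hb]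
      rw [this, Finset.card_pair]
      exact fun h => h2 (by linear_combination h)
    · simp [hb]
  · rw [Finset.disjoint_filter]
    rintro y _ ⟨h, -⟩ h'
    exact h2 (by rw [h] at h'; linear_combination h')

lemma rootCount_zero {F : Type*} [Field F] [Fintype F] [DecidableEq F] (h3 : (3 : F) = 0)
    (hm : IsSquare (-1 : F)) : rootCount (0 : F) = 2 := by
  have h2 : (2 : F) ≠ 0 := fun h => one_ne_zero (α := F) (by linear_combination h3 - h)
  obtain ⟨i, hi⟩ := hm
  have hi0 : i ≠ 0 := by rintro rfl; simp at hi
  have : ({y : F | 0 * (y ^ 2 - 1) ^ 2 + y ^ 2 + 1 = 0} : Finset F) = {i, -i} := by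
    ext y
    simp only [Finset.mem_filter, Finset.mem_univ, true_and, Finset.mem_insert,
      Finset.mem_singleton]
    rw [← sq_eq_sq_iff_eq_or_eq_neg]
    constructor
    · intro h; linear_combination h + hi
    · intro h; linear_combination h - hi
  rw [rootCount, this, Finset.card_pair]
  intro h
  exact mul_ne_zero h2 hi0 (by linear_combination h)

lemma rootCount_neg_one {F : Type*} [Field F] [Fintype F] [DecidableEq F] (h3 : (3 : F) = 0) :
    rootCount (-1 : F) = 1 := by
  have : ({y : F | -1 * (y ^ 2 - 1) ^ 2 + y ^ 2 + 1 = 0} : Finset F) = {0} := by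
    ext y
    simp only [Finset.mem_filter, Finset.mem_univ, true_and, Finset.mem_singleton]
    have e : -1 * (y ^ 2 - 1) ^ 2 + y ^ 2 + 1 = -y ^ 4 := by linear_combination y ^ 2 * h3
    rw [e, neg_eq_zero, pow_eq_zero_iff (by norm_num)]
  rw [rootCount, this, Finset.card_singleton]

/-- For `b = 1` one has `s = i` with `i² = -1` and `s / (s - 1) = i - 1`. Since `(i - 1)² = i`, this
element has order `8`, so it is a square as soon as `16 ∣ q - 1`. -/
lemma rootCount_one {F : Type*} [Field F] [Fintype F] [DecidableEq F] (h3 : (3 : F) = 0)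
    (hr : ringChar F ≠ 2) (hm : IsSquare (-1 : F)) (hc : 8 ∣ Fintype.card F / 2) :
    rootCount (1 : F) = 4 := by
  obtain ⟨i, hi⟩ := hm
  have hi0 : i ≠ 0 := by rintro rfl; simp at hi
  have hs : (1 : F) + 1 = i ^ 2 := by linear_combination h3 + hi
  have hp := quadraticChar_mul_eq hs hi0 one_ne_zero
  have n1 : i - 1 ≠ 0 := fun h => one_ne_zero (α := F) (by
    linear_combination h3 + hi + (i + 1) * h)
  have e : i / (i - 1) = i - 1 := by
    rw [div_eq_iff n1]
    linear_combination hi + i * h3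
  have hsq : (i - 1) ^ 2 = i := by linear_combination -hi - i * h3
  have h8 : (i - 1) ^ 8 = 1 := by
    have : (i - 1) ^ 8 = ((i - 1) ^ 2) ^ 4 := by ring
    rw [this, hsq]
    linear_combination (1 - i ^ 2) * hi
  have hw : quadraticChar F (i / (i - 1)) = 1 := by
    rw [e, quadraticChar_one_iff_isSquare n1, FiniteField.isSquare_iff hr n1]
    obtain ⟨k, hk⟩ := hc
    rw [hk, pow_mul, h8, one_pow]
  rw [hw, map_one, one_mul] at hp
  have := rootCount_eq h3 hr hs hi0 one_ne_zero
  rw [hw, hp] at this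
  exact_mod_cast this

/-- For `b ≠ 0` with `b + 1` a nonzero square, `χ b = -1` makes the two character values opposite
and `χ b = 1` makes them equal. -/
lemma rootCount_cases {F : Type*} [Field F] [Fintype F] [DecidableEq F] (h3 : (3 : F) = 0)
    (hr : ringChar F ≠ 2) {b : F} (hb : b ≠ 0) (hb1 : b + 1 ≠ 0) (hs : IsSquare (b + 1)) :
    (quadraticChar F b = -1 ∧ rootCount b = 2) ∨
      (quadraticChar F b = 1 ∧ (rootCount b = 0 ∨ rootCount b = 4)) := by
  obtain ⟨s, hs⟩ := hs
  rw [← pow_two] at hs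
  have hs0 : s ≠ 0 := by rintro rfl; exact hb1 (by rw [hs]; ring)
  have hbs : b = (s - 1) * (s + 1) := by linear_combination hs
  have n1 : s - 1 ≠ 0 := fun h => hb (by rw [hbs, h, zero_mul])
  have n2 : s + 1 ≠ 0 := fun h => hb (by rw [hbs, h, mul_zero])
  have hp := quadraticChar_mul_eq hs hs0 hb
  have hc := rootCount_eq h3 hr hs hs0 hb
  rcases quadraticChar_dichotomy (div_ne_zero hs0 n1) with h1 | h1 <;>
  rcases quadraticChar_dichotomy (div_ne_zero hs0 n2) with h2 | h2 <;>
  rw [h1, h2] at hp hc <;> rw [← hp] <;> norm_num <;> omega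

lemma sum_quadraticChar_shift {F : Type*} [Field F] [Fintype F] [DecidableEq F]
    (hr : ringChar F ≠ 2) (hm : quadraticChar F (-1) = 1) :
    ∑ b : F, quadraticChar F b * quadraticChar F (b + 1) = -1 := by
  have h := jacobiSum_nontrivial_inv (quadraticChar_ne_one hr)
  rw [(quadraticChar_isQuadratic F).inv, hm, jacobiSum] at h
  rw [← h]
  refine Fintype.sum_equiv (Equiv.neg F) _ _ fun b => ?_
  rw [Equiv.neg_apply, neg_eq_neg_one_mul b, map_mul, hm, one_mul]
  congr 2
  ring

/-- All values of `δ`, indexed by the quadratic characters of `b` and `b + 1`. -/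
lemma delta_cases {F : Type*} [Field F] [Fintype F] [DecidableEq F] (h3 : (3 : F) = 0)
    (hr : ringChar F ≠ 2) (hm : IsSquare (-1 : F)) (hc : 8 ∣ Fintype.card F / 2) (d : ℕ)
    (hd : ∀ x : F, x ^ d = (x⁻¹) ^ 2) (b : F) :
    (b = 0 ∧ cdelta F d (-1) b = 2) ∨ (b = -1 ∧ cdelta F d (-1) b = 1) ∨
    (b = 1 ∧ cdelta F d (-1) b = 6) ∨
    (b ≠ 0 ∧ b ≠ -1 ∧ b ≠ 1 ∧
      ((quadraticChar F (b + 1) = -1 ∧ cdelta F d (-1) b = 0) ∨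
       (quadraticChar F (b + 1) = 1 ∧ quadraticChar F b = -1 ∧ cdelta F d (-1) b = 2) ∨
       (quadraticChar F (b + 1) = 1 ∧ quadraticChar F b = 1 ∧
        (cdelta F d (-1) b = 0 ∨ cdelta F d (-1) b = 4)))) := by
  have h2 : (2 : F) ≠ 0 := fun h => one_ne_zero (α := F) (by linear_combination h3 - h)
  by_cases b0 : b = 0
  · left
    subst b0
    exact ⟨rfl, by rw [cdelta_eq h3 d hd, rootCount_zero h3 hm]; simp⟩
  by_cases bm : b = -1
  · right; left
    subst bm
    have : (-1 : F) ≠ 1 := fun h => h2 (by linear_combination -h)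
    exact ⟨rfl, by rw [cdelta_eq h3 d hd, rootCount_neg_one h3]; simp [this]⟩
  by_cases b1 : b = 1
  · right; right; left
    subst b1
    exact ⟨rfl, by rw [cdelta_eq h3 d hd, rootCount_one h3 hr hm hc]; simp⟩
  right; right; right
  refine ⟨b0, bm, b1, ?_⟩
  have hb1 : b + 1 ≠ 0 := fun h => bm (by linear_combination h)
  rw [cdelta_eq h3 d hd, if_neg b1, add_zero]
  by_cases hsq : IsSquare (b + 1)
  · right
    rw [(quadraticChar_one_iff_isSquare hb1).mpr hsq]
    rcases rootCount_cases h3 hr b0 hb1 hsq with h | h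
    · exact Or.inl ⟨rfl, h⟩
    · exact Or.inr ⟨rfl, h⟩
  · left
    exact ⟨quadraticChar_neg_one_iff_not_isSquare.mpr hsq, rootCount_eq_zero h3 hsq⟩

lemma comega_eq {F : Type*} [Field F] [Fintype F] (d : ℕ) (c : F) (i : ℕ) :
    comega F d c i = #{b : F | cdelta F d c b = i} := by
  classical
  rw [comega, ← Fintype.card_subtype, Nat.card_eq_fintype_card]

/-- Each `x` lies in exactly one fibre, so the values of `δ` add up to `q`. -/
lemma sum_cdelta {F : Type*} [Field F] [Fintype F] (d : ℕ) (c : F) :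
    ∑ b : F, cdelta F d c b = Fintype.card F := by
  classical
  rw [← Finset.card_univ, Finset.card_eq_sum_card_fiberwise
    (f := fun x : F => (x + 1) ^ d - c * x ^ d) (t := Finset.univ) (by simp)]
  refine Finset.sum_congr rfl fun b _ => ?_
  rw [cdelta, ← Fintype.card_subtype, Nat.card_eq_fintype_card]

theorem stmt_12 (n : ℕ) (hn : 1 ≤ n) (hn4 : n % 4 = 0)
    (F : Type*) [Field F] [Fintype F] (hF : Fintype.card F = 3 ^ n) :
    (∀ b, cdelta F (3 ^ n - 3) (-1 : F) b ≤ 6) ∧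
    (∃ b, cdelta F (3 ^ n - 3) (-1 : F) b = 6) ∧
    comega F (3 ^ n - 3) (-1 : F) 0 = (5 * 3 ^ n - 3) / 8 ∧
    comega F (3 ^ n - 3) (-1 : F) 1 = 1 ∧
    comega F (3 ^ n - 3) (-1 : F) 2 = (3 ^ n + 3) / 4 ∧
    comega F (3 ^ n - 3) (-1 : F) 3 = 0 ∧
    comega F (3 ^ n - 3) (-1 : F) 4 = (3 ^ n - 17) / 8 ∧
    comega F (3 ^ n - 3) (-1 : F) 5 = 0 ∧
    comega F (3 ^ n - 3) (-1 : F) 6 = 1 ∧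
    ∀ i, 7 ≤ i → comega F (3 ^ n - 3) (-1 : F) i = 0 := by
  classical
  have : Fact (Nat.Prime 3) := ⟨by norm_num⟩
  have : CharP F 3 := charP_of_card_eq_prime_pow hF
  have h3 : (3 : F) = 0 := by exact_mod_cast CharP.cast_eq_zero F 3
  have h2 : (2 : F) ≠ 0 := fun h => one_ne_zero (α := F) (by linear_combination h3 - h)
  have hr : ringChar F ≠ 2 := by rw [ringChar.eq F 3]; norm_num
  obtain ⟨m, hm⟩ : ∃ m, n = 4 * m := ⟨n / 4, by omega⟩
  -- `81 ≡ 1 (mod 16)`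
  have hq16 : 3 ^ n % 16 = 1 := by rw [hm, pow_mul, Nat.pow_mod]; norm_num
  have hq81 : 81 ≤ 3 ^ n := by
    calc 81 = 3 ^ 4 := by norm_num
      _ ≤ 3 ^ n := Nat.pow_le_pow_right (by norm_num) (by omega)
  have hc : 8 ∣ Fintype.card F / 2 := by rw [hF]; omega
  have hneg : IsSquare (-1 : F) := by
    rw [FiniteField.isSquare_iff hr (by simp)]
    obtain ⟨k, hk⟩ := hc
    rw [hk, pow_mul]; norm_num
  have hd : ∀ x : F, x ^ (3 ^ n - 3) = (x⁻¹) ^ 2 := by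
    intro x
    by_cases hx : x = 0
    · subst hx
      rw [zero_pow (by omega)]; simp
    · have := FiniteField.pow_card_sub_one_eq_one x hx
      rw [hF, show 3 ^ n - 1 = (3 ^ n - 3) + 2 by omega, pow_add] at this
      rw [inv_pow]
      exact eq_inv_of_mul_eq_one_left this
  have hcases := delta_cases h3 hr hneg hc (3 ^ n - 3) hd
  have hsum := sum_cdelta (3 ^ n - 3) (-1 : F)
  rw [hF] at hsum
  simp only [comega_eq]
  generalize cdelta F (3 ^ n - 3) (-1 : F) = D at hcases hsum ⊢
  have hne : (1 : F) ≠ -1 := fun h => h2 (by linear_combination h)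
  have D1 : D 1 = 6 := by
    rcases hcases 1 with h | h | h | h
    · exact absurd h.1 one_ne_zero
    · exact absurd h.1 hne
    · exact h.2
    · exact absurd rfl h.2.2.1
  have hvals : ∀ b, D b = 0 ∨ D b = 1 ∨ D b = 2 ∨ D b = 4 ∨ D b = 6 := by
    intro b
    rcases hcases b with h | h | h | ⟨-, -, -, h | h | h⟩ <;> omega
  have w1 : #{b : F | D b = 1} = 1 := by
    rw [Finset.card_eq_one]
    refine ⟨-1, ?_⟩
    ext b
    simp only [Finset.mem_filter, Finset.mem_univ, true_and, Finset.mem_singleton]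
    rcases hcases b with h | h | h | ⟨-, hb, -, h | h | h⟩
    · simp [h.1, h.1 ▸ h.2]
    · simp [h.1, h.1 ▸ h.2]
    · simp [h.1, D1, hne]
    all_goals
      simp only [hb, iff_false]
      omega
  have w6 : #{b : F | D b = 6} = 1 := by
    rw [Finset.card_eq_one]
    refine ⟨1, ?_⟩
    ext b
    simp only [Finset.mem_filter, Finset.mem_univ, true_and, Finset.mem_singleton]
    rcases hcases b with h | h | h | ⟨-, -, hb, h | h | h⟩
    · simp [h.1, h.1 ▸ h.2]
    · simp [h.1, h.1 ▸ h.2, hne.symm]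
    · simp [h.1, D1]
    all_goals
      simp only [hb, iff_false]
      omega
  have hχm : quadraticChar F (-1) = 1 := (quadraticChar_one_iff_isSquare (by simp)).mpr hneg
  have hχ2 : quadraticChar F (1 + 1) = 1 := by
    rw [show (1 + 1 : F) = -1 by linear_combination h3, hχm]
  have w2 : 4 * (#{b : F | D b = 2} : ℤ) = 3 ^ n + 3 := by
    have hpt : ∀ b : F, 4 * (if D b = 2 then (1 : ℤ) else 0) =
        (1 - quadraticChar F b) * (1 + quadraticChar F (b + 1)) + 2 * (if b = 0 then 1 else 0) := by
      intro b
      rcases hcases b with h | h | h | ⟨hb, -, -, h | h | h⟩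
      · obtain ⟨rfl, h⟩ := h
        simp [h]
      · obtain ⟨rfl, h⟩ := h
        simp [h, hχm]
      · obtain ⟨rfl, h⟩ := h
        simp [h]
      · simp [h.1, h.2, hb]
      · simp [h.1, h.2.1, h.2.2, hb]
      · have : D b ≠ 2 := by omega
        simp [h.1, h.2.1, this, hb]
    have hs := Finset.sum_congr (rfl : (Finset.univ : Finset F) = _) fun b _ => hpt b
    have hsh : ∑ b : F, quadraticChar F (b + 1) = 0 := by
      rw [← quadraticChar_sum_zero hr]
      exact Equiv.sum_comp (Equiv.addRight (1 : F)) fun b => quadraticChar F b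
    have hexp : ∀ b : F, (1 - quadraticChar F b) * (1 + quadraticChar F (b + 1)) =
        1 - quadraticChar F b + quadraticChar F (b + 1)
          - quadraticChar F b * quadraticChar F (b + 1) := fun b => by ring
    simp only [hexp] at hs
    rw [← Finset.mul_sum, Finset.sum_add_distrib, Finset.sum_sub_distrib, Finset.sum_add_distrib,
      Finset.sum_sub_distrib, hsh, quadraticChar_sum_zero hr, sum_quadraticChar_shift hr hχm,
      ← Finset.mul_sum, Finset.sum_boole, Finset.sum_ite_eq' Finset.univ (0 : F)] at hs
    simp only [Finset.sum_const, Finset.card_univ, hF, Finset.mem_univ, if_true] at hs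
    push_cast at hs
    rw [hs]
    simp
    ring
  have w2' : 4 * #{b : F | D b = 2} = 3 ^ n + 3 := by exact_mod_cast w2
  have hcount : #{b : F | D b = 0} + #{b : F | D b = 1} + #{b : F | D b = 2} +
      #{b : F | D b = 4} + #{b : F | D b = 6} = 3 ^ n := by
    rw [← hF, ← Finset.card_univ, Finset.card_eq_sum_ones (Finset.univ : Finset F)]
    simp only [Finset.card_filter, ← Finset.sum_add_distrib]
    refine Finset.sum_congr rfl fun b _ => ?_
    rcases hvals b with h | h | h | h | h <;> simp [h]
  have hweight : #{b : F | D b = 1} + 2 * #{b : F | D b = 2} +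
      4 * #{b : F | D b = 4} + 6 * #{b : F | D b = 6} = 3 ^ n := by
    rw [← hsum]
    simp only [Finset.card_filter, Finset.mul_sum, ← Finset.sum_add_distrib]
    refine Finset.sum_congr rfl fun b _ => ?_
    rcases hvals b with h | h | h | h | h <;> simp [h]
  have hempty : ∀ i, i ≠ 0 → i ≠ 1 → i ≠ 2 → i ≠ 4 → i ≠ 6 → #{b : F | D b = i} = 0 := by
    intro i h0 h1 h2 h4 h6
    rw [Finset.card_eq_zero, Finset.filter_eq_empty_iff]
    intro b _ h
    rcases hvals b with h' | h' | h' | h' | h' <;> omega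
  rw [w1] at hcount hweight
  rw [w6] at hcount hweight
  refine ⟨fun b => by rcases hvals b with h | h | h | h | h <;> omega, ⟨1, D1⟩, ?_, w1, ?_,
    hempty 3 (by norm_num) (by norm_num) (by norm_num) (by norm_num) (by norm_num), ?_,
    hempty 5 (by norm_num) (by norm_num) (by norm_num) (by norm_num) (by norm_num), w6,
    fun i hi => hempty i (by omega) (by omega) (by omega) (by omega) (by omega)⟩
  -- `ω₀ = (5 q - 5) / 8`, which equals `⌊(5 q - 3) / 8⌋` because `q ≡ 1 (mod 8)`
  · omega
  · omega
  · omega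
end

section
/- Let p be a prime with p ≡ 1 (mod 4), and let n, k be positive integers with gcd(n, k) = 1 and 2n/gcd(2n, k) even. Let F(x) = x^{(p^k + 1)/2} be a power function over GF(p^n). If n is odd, then the (−1)-differential spectrum of F is given by ω_0 = (p^n + 1)(p − 1)/(2(p + 1)), ω_1 = (p^n − 3)/2, ω_{(p+3)/4} = 2, ω_{(p+1)/2} = (p^n − p)/(p + 1), and ω_i = 0 for all other i. -/
/-!
Write `q = p ^ n` and `2 d = p ^ k + 1`. In characteristic `p`, if `z = w ^ 2` and
`2 x + 1 = (z + z⁻¹) / 2`, then `x = ((w - w⁻¹) / 2) ^ 2` and `x + 1 = ((w + w⁻¹) / 2) ^ 2`, and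
expanding the `(p ^ k + 1)`-st powers with Frobenius gives
`(x + 1) ^ d + x ^ d = (z ^ d + z ^ (-d)) / 2` (`sum_pow_eq_halfSum`). So, after the bijection
`y = 2 x + 1`, the `(-1)`-differential function is the Chebyshev polynomial `T_d`, and `δ(b)` is
the number of preimages of `b` under `T_d`.

The elements of the field with `q` elements are exactly the values `(z + z⁻¹) / 2` with
`z ^ (q - 1) = 1` or `z ^ (q + 1) = 1` (`halfSum_mem_range_iff`), each `z` being determined up to
inversion. The two groups of roots of unity meet in `±1`. Since `n` and `k` are odd and coprime,
`gcd (d, q - 1) = 1` and `gcd (d, q + 1) = (p + 1) / 2 = e`, and `d` and `e` are odd. Hence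
`z ↦ z ^ d` permutes the `(q - 1)`-th roots of unity and is `e`-to-one on the `(q + 1)`-th ones.
For `b = (c + c⁻¹) / 2` this yields

* `δ(b) = (e + 1) / 2 = (p + 3) / 4` if `c = ±1`, because inversion acts on the `e` solutions of
  `z ^ d = c` with the single fixed point `c`;
* `δ(b) = 1` if `c ≠ ±1` is a `(q - 1)`-th root of unity;
* `δ(b) = e` if `c ≠ ±1` is the `d`-th power of a `(q + 1)`-th root of unity;
* `δ(b) = 0` for the remaining `(q + 1)`-th roots of unity `c`.

The spectrum follows by counting such `c` up to inversion (`comega_eq`,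
`two_mul_card_image_halfSum`).
-/

open Finset

/-! ### Arithmetic of the exponents -/

/-- As `p ^ k + 1 ≡ 2` modulo `4`, its half is an odd integer. -/
theorem half_odd {p k : ℕ} (hp4 : p % 4 = 1) :
    2 * ((p ^ k + 1) / 2) = p ^ k + 1 ∧ Odd ((p ^ k + 1) / 2) := by
  have h : p ^ k % 4 = 1 := by
    have : p ^ k ≡ 1 ^ k [MOD 4] := Nat.ModEq.pow k hp4
    simpa [Nat.ModEq] using this
  refine ⟨by omega, ?_⟩
  rw [Nat.odd_iff]
  omega

/-- For odd `n` coprime to `k`, the parity condition on `2n / gcd (2n, k)` says that `k` is odd. -/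
theorem odd_of_even_div {n k : ℕ} (hgcd : Nat.gcd n k = 1)
    (heven : Even (2 * n / Nat.gcd (2 * n) k)) (hnodd : Odd n) : Odd k := by
  by_contra h
  rw [Nat.not_odd_iff_even] at h
  obtain ⟨j, rfl⟩ := h
  have hnj : Nat.Coprime n j :=
    Nat.Coprime.coprime_dvd_right (Dvd.intro_left 2 (by ring)) hgcd
  have : Nat.gcd (2 * n) (j + j) = 2 := by
    rw [← two_mul, Nat.gcd_mul_left, hnj]
  rw [this, Nat.mul_div_cancel_left _ (by norm_num)] at heven
  exact (Nat.not_even_iff_odd.mpr hnodd) heven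

/-- The gcd is odd; it divides `gcd (p ^ (2k) - 1, p ^ n - 1) = p - 1`, and `p ^ k + 1 ≡ 2`
modulo `p - 1`, so it divides `2`. -/
theorem gcd_sub_one {p n k : ℕ} (hp4 : p % 4 = 1) (hgcd : Nat.gcd n k = 1)
    (hnodd : Odd n) : Nat.gcd ((p ^ k + 1) / 2) (p ^ n - 1) = 1 := by
  obtain ⟨h2d, hd⟩ := half_odd (k := k) hp4
  set d := (p ^ k + 1) / 2
  set g := Nat.gcd d (p ^ n - 1)
  have hgd : g ∣ p ^ k + 1 := h2d ▸ (Nat.gcd_dvd_left _ _).mul_left 2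
  have hgn : g ∣ p ^ n - 1 := Nat.gcd_dvd_right _ _
  have hgo : Odd g := Odd.of_dvd_nat hd (Nat.gcd_dvd_left _ _)
  have h1 : g ∣ p ^ (2 * k) - 1 := by
    refine hgd.trans ⟨p ^ k - 1, ?_⟩
    rw [mul_comm 2 k, pow_mul, ← Nat.sq_sub_sq, one_pow]
  have h2 : g ∣ p - 1 := by
    have := Nat.dvd_gcd h1 hgn
    have hc : Nat.gcd (2 * k) n = 1 :=
      Nat.Coprime.mul_left (Nat.coprime_two_left.mpr hnodd) (Nat.Coprime.symm hgcd)
    rwa [Nat.pow_sub_one_gcd_pow_sub_one, hc, pow_one] at this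
  have h3 : g ∣ p ^ k - 1 := h2.trans (by simpa using Nat.sub_dvd_pow_sub_pow p 1 k)
  have h4 : g ∣ 2 := by
    have hk : 1 ≤ p ^ k := Nat.one_le_pow _ _ (by omega)
    have := Nat.dvd_sub hgd h3
    rwa [show p ^ k + 1 - (p ^ k - 1) = 2 by omega] at this
  have h5 : g ≤ 2 := Nat.le_of_dvd (by norm_num) h4
  obtain ⟨m, hm⟩ := hgo
  omega

theorem half_dvd {p m : ℕ} (hp4 : p % 4 = 1) (hm : Odd m) :
    (p + 1) / 2 ∣ (p ^ m + 1) / 2 := by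
  have h : p + 1 ∣ p ^ m + 1 := by simpa using hm.nat_add_dvd_pow_add_pow p 1
  obtain ⟨h2d, -⟩ := half_odd (k := m) hp4
  rw [← h2d, show p + 1 = 2 * ((p + 1) / 2) by omega] at h
  exact Nat.dvd_of_mul_dvd_mul_left (by norm_num) h

/-- The gcd is odd; it divides `gcd (p ^ (2k) - 1, p ^ (2n) - 1) = p ^ 2 - 1`, and
`p ^ k + 1 ≡ p + 1` modulo `p ^ 2 - 1` for odd `k`, so it divides `p + 1`. -/
theorem gcd_add_one {p n k : ℕ} (hp4 : p % 4 = 1) (hgcd : Nat.gcd n k = 1)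
    (hnodd : Odd n) (hkodd : Odd k) :
    Nat.gcd ((p ^ k + 1) / 2) (p ^ n + 1) = (p + 1) / 2 := by
  obtain ⟨h2d, hd⟩ := half_odd (k := k) hp4
  obtain ⟨h2n, -⟩ := half_odd (k := n) hp4
  have he := half_dvd hp4 hkodd
  have he' : (p + 1) / 2 ∣ p ^ n + 1 := h2n ▸ (half_dvd hp4 hnodd).mul_left 2
  set d := (p ^ k + 1) / 2
  refine Nat.dvd_antisymm ?_ (Nat.dvd_gcd he he')
  set g := Nat.gcd d (p ^ n + 1)
  have hgd : g ∣ p ^ k + 1 := h2d ▸ (Nat.gcd_dvd_left _ _).mul_left 2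
  have hgn : g ∣ p ^ n + 1 := Nat.gcd_dvd_right _ _
  have hgo : Odd g := Odd.of_dvd_nat hd (Nat.gcd_dvd_left _ _)
  have key : ∀ m, p ^ m + 1 ∣ p ^ (2 * m) - 1 := fun m => ⟨p ^ m - 1, by
    rw [mul_comm 2 m, pow_mul, ← Nat.sq_sub_sq, one_pow]⟩
  have h2 : g ∣ p ^ 2 - 1 := by
    have := Nat.dvd_gcd (hgd.trans (key k)) (hgn.trans (key n))
    rwa [Nat.pow_sub_one_gcd_pow_sub_one, Nat.gcd_mul_left, Nat.gcd_comm k n, hgcd, mul_one]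
      at this
  have h3 : g ∣ p + 1 := by
    obtain ⟨j, rfl⟩ := hkodd
    have hj : g ∣ p ^ (2 * j) - 1 := by
      refine h2.trans ?_
      rw [pow_mul]
      simpa using Nat.sub_dvd_pow_sub_pow (p ^ 2) 1 j
    have h1 : 1 ≤ p ^ (2 * j) := Nat.one_le_pow _ _ (by omega)
    obtain ⟨t, ht⟩ := Nat.exists_eq_add_of_le h1
    rw [ht, Nat.add_sub_cancel_left] at hj
    rw [pow_succ, ht, show (1 + t) * p + 1 = t * p + (p + 1) by ring] at hgd
    exact (Nat.dvd_add_right (hj.mul_right p)).mp hgd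
  have h4 : g ∣ 2 * ((p + 1) / 2) := by rwa [show 2 * ((p + 1) / 2) = p + 1 by omega]
  exact (Nat.coprime_two_right.mpr hgo).dvd_of_dvd_mul_left h4

/-! ### The map `z ↦ (z + z⁻¹) / 2` -/

/-- The map `z ↦ (z + z⁻¹) / 2`, an algebraic substitute for the cosine: it identifies exactly
`z` and `z⁻¹`. -/
noncomputable def halfSum {K : Type*} [Field K] (z : K) : K := (z + z⁻¹) / 2

section
variable {K : Type*} [Field K]

theorem halfSum_inv (z : K) : halfSum z⁻¹ = halfSum z := by
  simp [halfSum, add_comm]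

theorem halfSum_eq_iff (h2 : (2 : K) ≠ 0) {z w : K} (hz : z ≠ 0) (hw : w ≠ 0) :
    halfSum z = halfSum w ↔ z = w ∨ z = w⁻¹ := by
  constructor
  · intro h
    have h' : z + z⁻¹ = w + w⁻¹ := by
      unfold halfSum at h
      field_simp at h ⊢
      exact h
    have : (z - w) * (z * w - 1) = 0 := by
      field_simp at h'
      linear_combination h'
    rcases mul_eq_zero.mp this with h | h
    · left; exact sub_eq_zero.mp h
    · right; exact eq_inv_of_mul_eq_one_left (sub_eq_zero.mp h)
  · rintro (rfl | rfl)
    · rfl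
    · exact halfSum_inv w

theorem eq_one_or_of_eq_inv {z : K} (hz : z ≠ 0) (h : z = z⁻¹) : z = 1 ∨ z = -1 := by
  rw [← sq_eq_one_iff, sq]
  nth_rewrite 2 [h]
  exact mul_inv_cancel₀ hz

theorem exists_halfSum [IsAlgClosed K] (h2 : (2 : K) ≠ 0) (y : K) :
    ∃ z : K, z ≠ 0 ∧ y = halfSum z := by
  obtain ⟨r, hr⟩ := IsAlgClosed.exists_pow_nat_eq (y ^ 2 - 1) (n := 2) (by norm_num)
  have h1 : (y + r) * (y - r) = 1 := by linear_combination -hr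
  have h0 : y + r ≠ 0 := left_ne_zero_of_mul_eq_one h1
  refine ⟨y + r, h0, ?_⟩
  rw [halfSum, inv_eq_of_mul_eq_one_right h1]
  field_simp
  ring

/-- In characteristic `p` the polynomial `(x+1)^d + x^d` with `2d = p^k + 1` is the Chebyshev
polynomial `T_d` evaluated at `2x + 1`. -/
theorem sum_pow_eq_halfSum [IsAlgClosed K] (p k d : ℕ) [Fact p.Prime] [CharP K p]
    (h2 : (2 : K) ≠ 0) (hd : 2 * d = p ^ k + 1) {x z : K} (hz : z ≠ 0)
    (h : 2 * x + 1 = halfSum z) : (x + 1) ^ d + x ^ d = halfSum (z ^ d) := by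
  obtain ⟨w, rfl⟩ := IsAlgClosed.exists_pow_nat_eq z (n := 2) (by norm_num)
  have hw : w ≠ 0 := by rintro rfl; simp at hz
  -- with `z = w²` both `x` and `x + 1` are explicit squares
  have hx : x = ((w - w⁻¹) / 2) ^ 2 := by
    have : 2 * x = 2 * ((w - w⁻¹) / 2) ^ 2 := by
      rw [eq_sub_of_add_eq h, halfSum]; field_simp; ring
    exact mul_left_cancel₀ h2 this
  have hx1 : x + 1 = ((w + w⁻¹) / 2) ^ 2 := by
    rw [hx]; field_simp; ring
  have hq2 : (2 : K) ^ p ^ k = 2 := by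
    rw [← one_add_one_eq_two, add_pow_char_pow]; simp
  rw [hx1, hx, ← pow_mul, ← pow_mul, ← pow_mul, hd, pow_succ, pow_succ _ (p ^ k),
    pow_succ w, div_pow, div_pow, sub_pow_char_pow, add_pow_char_pow, hq2, inv_pow, halfSum]
  have hwq : w ^ p ^ k ≠ 0 := pow_ne_zero _ hw
  generalize w ^ p ^ k = W at *
  field_simp
  ring

open scoped Classical in
/-- Off the fixed points `±1` of inversion, `halfSum` is two-to-one. -/
theorem two_mul_card_image_halfSum (h2 : (2 : K) ≠ 0) (S : Finset K)
    (h0 : ∀ z ∈ S, z ≠ 0 ∧ z ≠ 1 ∧ z ≠ -1) (hinv : ∀ z ∈ S, z⁻¹ ∈ S) :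
    2 * (S.image halfSum).card = S.card := by
  rw [Finset.card_eq_sum_card_image halfSum S, Finset.sum_const_nat (m := 2), mul_comm]
  intro y hy
  obtain ⟨z, hz, rfl⟩ := Finset.mem_image.mp hy
  obtain ⟨hz0, hz1, hz2⟩ := h0 z hz
  have : S.filter (fun w => halfSum w = halfSum z) = {z, z⁻¹} := by
    ext w
    simp only [Finset.mem_filter, Finset.mem_insert, Finset.mem_singleton]
    constructor
    · rintro ⟨hw, h⟩
      exact (halfSum_eq_iff h2 (h0 w hw).1 hz0).mp h
    · rintro (rfl | rfl)
      · exact ⟨hz, rfl⟩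
      · exact ⟨hinv z hz, halfSum_inv z⟩
  rw [this, Finset.card_pair]
  intro h
  rcases eq_one_or_of_eq_inv hz0 h with h | h
  · exact hz1 h
  · exact hz2 h

end

/-! ### Power maps on roots of unity -/

/-- The finite set of `m`-th roots of unity in `K`. -/
noncomputable abbrev rootSet (K : Type*) [Field K] (m : ℕ) : Finset K :=
  Polynomial.nthRootsFinset m (1 : K)

section
variable {K : Type*} [Field K]

theorem mem_rootSet {m : ℕ} (hm : 0 < m) {z : K} : z ∈ rootSet K m ↔ z ^ m = 1 :=
  Polynomial.mem_nthRootsFinset hm 1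

theorem card_rootSet [IsAlgClosed K] {m : ℕ} (hm : (m : K) ≠ 0) : (rootSet K m).card = m := by
  have : NeZero (m : K) := ⟨hm⟩
  obtain ⟨ζ, hζ⟩ := HasEnoughRootsOfUnity.exists_primitiveRoot K m
  exact hζ.card_nthRootsFinset

open scoped Classical in
/-- Every nonempty fiber of `z ↦ z ^ d` on the `m`-th roots of unity is a coset of the
`gcd d m`-th roots of unity. -/
theorem card_pow_fiber {m d e : ℕ} (hm : 0 < m) (hg : Nat.gcd d m = e)
    (he : (rootSet K e).card = e) {z₀ : K} (hz₀ : z₀ ∈ rootSet K m) :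
    ((rootSet K m).filter (fun z => z ^ d = z₀ ^ d)).card = e := by
  have hepos : 0 < e := hg ▸ Nat.gcd_pos_of_pos_right _ hm
  have h1 : z₀ ^ m = 1 := (mem_rootSet hm).mp hz₀
  have h0 : z₀ ≠ 0 := by
    rintro rfl
    rw [zero_pow hm.ne'] at h1
    exact zero_ne_one h1
  have : (rootSet K m).filter (fun z => z ^ d = z₀ ^ d)
      = (rootSet K e).image (fun u => z₀ * u) := by
    ext z
    simp only [Finset.mem_filter, Finset.mem_image, mem_rootSet hm, mem_rootSet hepos]
    constructor
    · rintro ⟨hz, hzd⟩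
      refine ⟨z / z₀, ?_, by field_simp⟩
      rw [← hg, pow_gcd_eq_one, div_pow, div_pow, hz, hzd, h1]
      exact ⟨div_self (pow_ne_zero _ h0), div_one 1⟩
    · rintro ⟨u, hu, rfl⟩
      rw [← hg, pow_gcd_eq_one] at hu
      simp [mul_pow, hu.1, hu.2, h1]
  rw [this, Finset.card_image_of_injective _ (mul_right_injective₀ h0), he]

open scoped Classical in
theorem card_pow_image {m d e : ℕ} (hm : 0 < m) (hg : Nat.gcd d m = e)
    (he : (rootSet K e).card = e) :
    ((rootSet K m).image (fun z => z ^ d)).card * e = (rootSet K m).card := by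
  rw [Finset.card_eq_sum_card_image (fun z => z ^ d) (rootSet K m), Finset.sum_const_nat]
  intro c hc
  obtain ⟨z, hz, rfl⟩ := Finset.mem_image.mp hc
  exact card_pow_fiber hm hg he hz

/-- The numerical hypotheses on `q`, `d` and `e = gcd (d, q + 1)` under which the fibers of
`z ↦ z ^ d` on the roots of unity of orders `q - 1` and `q + 1` are counted. -/
structure FiberData (K : Type*) [Field K] (q d e : ℕ) : Prop where
  two_ne : (2 : K) ≠ 0
  one_lt : 1 < q
  odd_q : Odd q
  odd_d : Odd d
  gcd_sub : Nat.gcd d (q - 1) = 1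
  gcd_add : Nat.gcd d (q + 1) = e
  card_sub : (rootSet K (q - 1)).card = q - 1
  card_add : (rootSet K (q + 1)).card = q + 1
  card_e : (rootSet K e).card = e

open scoped Classical in
/-- The elements `z` of order dividing `q - 1` or `q + 1` with `z ^ d = c`. -/
noncomputable def powFiber (K : Type*) [Field K] (q d : ℕ) (c : K) : Finset K :=
  (rootSet K (q - 1) ∪ rootSet K (q + 1)).filter (fun z => z ^ d = c)

open scoped Classical in
/-- The image of the `(q+1)`-th roots of unity under `z ↦ z ^ d`. -/
noncomputable def powImage (K : Type*) [Field K] (q d : ℕ) : Finset K :=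
  (rootSet K (q + 1)).image (fun z => z ^ d)

namespace FiberData
variable {q d e : ℕ} (H : FiberData K q d e)
include H

theorem mem_sub {z : K} : z ∈ rootSet K (q - 1) ↔ z ^ (q - 1) = 1 :=
  mem_rootSet (by have := H.one_lt; omega)

omit H in
theorem mem_add {z : K} : z ∈ rootSet K (q + 1) ↔ z ^ (q + 1) = 1 :=
  mem_rootSet (by omega)

theorem ne_zero {z : K} (hz : z ∈ rootSet K (q - 1) ∨ z ∈ rootSet K (q + 1)) : z ≠ 0 := by
  rintro rfl
  have := H.one_lt
  rw [H.mem_sub, mem_add, zero_pow (by omega), zero_pow (by omega)] at hz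
  simp at hz

theorem one_ne_neg_one : (1 : K) ≠ -1 := by
  intro h
  apply H.two_ne
  linear_combination h

/-- The two groups of roots of unity meet only in `±1`. -/
theorem mem_both_iff {z : K} :
    z ∈ rootSet K (q - 1) ∧ z ∈ rootSet K (q + 1) ↔ z = 1 ∨ z = -1 := by
  have h1 := H.one_lt
  obtain ⟨t, ht⟩ := H.odd_q
  rw [H.mem_sub, mem_add]
  constructor
  · rintro ⟨ha, hb⟩
    rw [show q + 1 = (q - 1) + 2 by omega, pow_add, ha, one_mul] at hb
    exact sq_eq_one_iff.mp hb
  · have e1 : Even (q - 1) := ⟨t, by omega⟩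
    have e2 : Even (q + 1) := ⟨t + 1, by omega⟩
    rintro (rfl | rfl)
    · simp
    · exact ⟨e1.neg_one_pow, e2.neg_one_pow⟩

theorem inv_mem_sub {z : K} (hz : z ∈ rootSet K (q - 1)) : z⁻¹ ∈ rootSet K (q - 1) := by
  rw [H.mem_sub] at *; simp [hz]

omit H in
theorem inv_mem_add {z : K} (hz : z ∈ rootSet K (q + 1)) : z⁻¹ ∈ rootSet K (q + 1) := by
  rw [mem_add] at *; simp [hz]

theorem pow_mem_sub {z : K} (hz : z ∈ rootSet K (q - 1)) : z ^ d ∈ rootSet K (q - 1) := by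
  rw [H.mem_sub] at *; rw [pow_right_comm, hz, one_pow]

omit H in
theorem pow_mem_add {z : K} (hz : z ∈ rootSet K (q + 1)) : z ^ d ∈ rootSet K (q + 1) := by
  rw [mem_add] at *; rw [pow_right_comm, hz, one_pow]

omit H in
theorem mem_powFiber {c z : K} : z ∈ powFiber K q d c ↔
    (z ∈ rootSet K (q - 1) ∨ z ∈ rootSet K (q + 1)) ∧ z ^ d = c := by
  simp only [powFiber, Finset.mem_filter, Finset.mem_union]

theorem pow_eq_self {c : K} (hc : c = 1 ∨ c = -1) : c ^ d = c := by
  rcases hc with rfl | rfl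
  · simp
  · exact H.odd_d.neg_one_pow

/-- As `d` is coprime to `q - 1`, the map `z ↦ z ^ d` permutes the `(q - 1)`-th roots of unity. -/
theorem pow_bijective_sub {c : K} (hc : c ∈ rootSet K (q - 1)) :
    ∃ z ∈ rootSet K (q - 1), z ^ d = c ∧ ∀ w ∈ rootSet K (q - 1), w ^ d = c → w = z := by
  classical
  have hpos : 0 < q - 1 := by have := H.one_lt; omega
  have he : (rootSet K 1).card = 1 :=
    Finset.card_eq_one.mpr ⟨1, by ext z; rw [mem_rootSet one_pos]; simp⟩
  have himg : (rootSet K (q - 1)).image (fun z => z ^ d) = rootSet K (q - 1) := by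
    apply Finset.eq_of_subset_of_card_le
    · intro c hc
      obtain ⟨z, hz, rfl⟩ := Finset.mem_image.mp hc
      exact H.pow_mem_sub hz
    · rw [← card_pow_image hpos H.gcd_sub he, mul_one]
  rw [← himg] at hc
  obtain ⟨z, hz, rfl⟩ := Finset.mem_image.mp hc
  refine ⟨z, hz, rfl, fun w hw hwz => ?_⟩
  have := card_pow_fiber hpos H.gcd_sub he hz
  exact Finset.card_le_one.mp this.le w (Finset.mem_filter.mpr ⟨hw, hwz⟩) z
    (Finset.mem_filter.mpr ⟨hz, rfl⟩)

open scoped Classical in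
theorem card_image_sub {c : K} (hc : c ∈ rootSet K (q - 1)) (hc1 : c ≠ 1) (hc2 : c ≠ -1) :
    ((powFiber K q d c).image halfSum).card = 1 := by
  obtain ⟨z, hz, hzc, huniq⟩ := H.pow_bijective_sub hc
  have : powFiber K q d c = {z} := by
    ext w
    rw [mem_powFiber, Finset.mem_singleton]
    constructor
    · rintro ⟨hw | hw, hwc⟩
      · exact huniq w hw hwc
      · have := H.mem_both_iff.mp ⟨hc, hwc ▸ pow_mem_add hw⟩
        tauto
    · rintro rfl
      exact ⟨Or.inl hz, hzc⟩
  simp [this]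

open scoped Classical in
/-- For a `(q + 1)`-th root of unity `c`, all relevant `d`-th roots of `c` are `(q + 1)`-th roots
of unity. -/
theorem powFiber_add {c : K} (hc : c ∈ rootSet K (q + 1)) :
    powFiber K q d c = (rootSet K (q + 1)).filter (fun z => z ^ d = c) := by
  ext w
  rw [mem_powFiber, Finset.mem_filter]
  constructor
  · rintro ⟨hw | hw, hwc⟩
    · -- here `c = ±1`, and `c` is its own unique `d`-th root of order dividing `q - 1`
      have hcA : c ∈ rootSet K (q - 1) := hwc ▸ H.pow_mem_sub hw
      obtain ⟨z, -, -, huniq⟩ := H.pow_bijective_sub hcA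
      have := huniq w hw hwc
      have := huniq c hcA (H.pow_eq_self (H.mem_both_iff.mp ⟨hcA, hc⟩))
      refine ⟨?_, hwc⟩
      simp_all
    · exact ⟨hw, hwc⟩
  · rintro ⟨hw, hwc⟩
    exact ⟨Or.inr hw, hwc⟩

omit H in
theorem powImage_subset {c : K} (hc : c ∈ powImage K q d) : c ∈ rootSet K (q + 1) := by
  classical
  obtain ⟨z, hz, rfl⟩ := Finset.mem_image.mp hc
  exact pow_mem_add hz

theorem card_powFiber {c : K} (hc : c ∈ powImage K q d) : (powFiber K q d c).card = e := by
  classical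
  rw [H.powFiber_add (FiberData.powImage_subset hc)]
  obtain ⟨z, hz, rfl⟩ := Finset.mem_image.mp hc
  exact card_pow_fiber (by omega) H.gcd_add H.card_e hz

open scoped Classical in
theorem card_image_none {c : K} (hc : c ∈ rootSet K (q + 1)) (hc' : c ∉ powImage K q d) :
    ((powFiber K q d c).image halfSum).card = 0 := by
  rw [H.powFiber_add hc, Finset.card_eq_zero, Finset.image_eq_empty, Finset.filter_eq_empty_iff]
  intro z hz hzc
  exact hc' (Finset.mem_image.mpr ⟨z, hz, hzc⟩)

open scoped Classical in
theorem card_image_add {c : K} (hc : c ∈ powImage K q d) (hc1 : c ≠ 1) (hc2 : c ≠ -1) :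
    ((powFiber K q d c).image halfSum).card = e := by
  rw [Finset.card_image_of_injOn, H.card_powFiber hc]
  intro z hz w hw hzw
  have hz' := mem_powFiber.mp hz
  have hw' := mem_powFiber.mp hw
  rcases (halfSum_eq_iff H.two_ne (H.ne_zero hz'.1) (H.ne_zero hw'.1)).mp hzw with h | h
  · exact h
  · exfalso
    have : c = c⁻¹ := by
      nth_rewrite 1 [← hz'.2]
      rw [h, inv_pow, hw'.2]
    rcases eq_one_or_of_eq_inv (H.ne_zero (Or.inr (FiberData.powImage_subset hc))) this with h | h
    · exact hc1 h
    · exact hc2 h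

theorem unit_mem_powImage {c : K} (hc : c = 1 ∨ c = -1) : c ∈ powImage K q d := by
  classical
  exact Finset.mem_image.mpr ⟨c, (H.mem_both_iff.mpr hc).2, H.pow_eq_self hc⟩

open scoped Classical in
/-- For `c = ±1`, inversion acts on the `e` solutions of `z ^ d = c` with `c` as its only fixed
point. -/
theorem card_image_unit {c : K} (hc : c = 1 ∨ c = -1) :
    2 * ((powFiber K q d c).image halfSum).card = e + 1 := by
  have hci := H.unit_mem_powImage hc
  have hcinv : c⁻¹ = c := by rcases hc with rfl | rfl <;> simp
  have hcard := H.card_powFiber hci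
  have hmem : c ∈ powFiber K q d c :=
    mem_powFiber.mpr ⟨Or.inr (FiberData.powImage_subset hci), H.pow_eq_self hc⟩
  have hc0 : c ≠ 0 := H.ne_zero (Or.inr (FiberData.powImage_subset hci))
  have key := two_mul_card_image_halfSum H.two_ne ((powFiber K q d c).erase c)
    (by
      intro z hz
      obtain ⟨hzc, hz⟩ := Finset.mem_erase.mp hz
      obtain ⟨hz, hzd⟩ := mem_powFiber.mp hz
      refine ⟨H.ne_zero hz, ?_, ?_⟩ <;> intro h
      · exact hzc ((H.pow_eq_self (Or.inl h)).symm.trans hzd)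
      · exact hzc ((H.pow_eq_self (Or.inr h)).symm.trans hzd))
    (by
      intro z hz
      obtain ⟨hzc, hz⟩ := Finset.mem_erase.mp hz
      obtain ⟨hz, hzd⟩ := mem_powFiber.mp hz
      refine Finset.mem_erase.mpr ⟨?_, mem_powFiber.mpr ⟨?_, ?_⟩⟩
      · intro h; apply hzc; rw [← inv_inv z, h, hcinv]
      · exact hz.imp H.inv_mem_sub inv_mem_add
      · rw [inv_pow, hzd, hcinv])
  have hnot : halfSum c ∉ ((powFiber K q d c).erase c).image halfSum := by
    intro h
    obtain ⟨z, hz, hzc⟩ := Finset.mem_image.mp h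
    obtain ⟨hne, hz⟩ := Finset.mem_erase.mp hz
    have := (halfSum_eq_iff H.two_ne (H.ne_zero (mem_powFiber.mp hz).1) hc0).mp hzc
    rw [hcinv] at this
    tauto
  rw [← Finset.insert_erase hmem, Finset.image_insert, Finset.card_insert_of_notMem hnot,
    mul_add, key, Finset.card_erase_of_mem hmem, hcard]
  have : 0 < e := hcard ▸ Finset.card_pos.mpr ⟨c, hmem⟩
  omega

end FiberData
end
/-! ### Descent to the finite field -/

section
variable {F K : Type*} [Field F] [Fintype F] [Field K] [Algebra F K]

theorem mem_range_of_pow_card (y : K) (hy : y ^ Fintype.card F = y) :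
    ∃ x : F, algebraMap F K x = y := by
  classical
  have hq := Fintype.one_lt_card (α := F)
  have hne := FiniteField.X_pow_card_sub_X_ne_zero K hq
  have hmem : ∀ z : K, z ^ Fintype.card F = z →
      z ∈ (Polynomial.X ^ Fintype.card F - Polynomial.X : Polynomial K).roots.toFinset := by
    intro z hz
    rw [Multiset.mem_toFinset, Polynomial.mem_roots hne]
    simp [hz]
  have heq : Finset.univ.image (algebraMap F K)
      = (Polynomial.X ^ Fintype.card F - Polynomial.X : Polynomial K).roots.toFinset := by
    apply Finset.eq_of_subset_of_card_le
    · intro z hz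
      obtain ⟨x, -, rfl⟩ := Finset.mem_image.mp hz
      apply hmem
      rw [← map_pow, FiniteField.pow_card]
    · rw [Finset.card_image_of_injective _ (algebraMap F K).injective, Finset.card_univ]
      refine (Multiset.toFinset_card_le _).trans ((Polynomial.card_roots' _).trans ?_)
      rw [FiniteField.X_pow_card_sub_X_natDegree_eq K hq]
  have := hmem y hy
  rw [← heq] at this
  obtain ⟨x, -, hx⟩ := Finset.mem_image.mp this
  exact ⟨x, hx⟩

theorem halfSum_pow_card (p n : ℕ) [Fact p.Prime] [CharP K p] (z : K) :
    halfSum z ^ p ^ n = halfSum (z ^ p ^ n) := by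
  have h2 : (2 : K) ^ p ^ n = 2 := by
    rw [← one_add_one_eq_two, add_pow_char_pow]; simp
  rw [halfSum, div_pow, add_pow_char_pow, h2, inv_pow, halfSum]

variable {p n d e : ℕ} [Fact p.Prime] [CharP K p] [IsAlgClosed K]

omit [IsAlgClosed K] in
/-- `halfSum z` lies in the field with `q` elements exactly when the order of `z` divides
`q - 1` or `q + 1`, since Frobenius must fix `z` or invert it. -/
theorem halfSum_mem_range_iff (H : FiberData K (p ^ n) d e) (hF : Fintype.card F = p ^ n)
    {z : K} (hz : z ≠ 0) : (∃ x : F, algebraMap F K x = halfSum z) ↔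
      z ∈ rootSet K (p ^ n - 1) ∨ z ∈ rootSet K (p ^ n + 1) := by
  have h1 := H.one_lt
  rw [H.mem_sub, FiberData.mem_add]
  have ea : z ^ p ^ n = z ↔ z ^ (p ^ n - 1) = 1 := by
    obtain ⟨m, hm⟩ := Nat.exists_eq_add_of_lt h1
    rw [show p ^ n = (p ^ n - 1) + 1 by omega, pow_succ, Nat.add_sub_cancel]
    exact mul_eq_right₀ hz
  have eb : z ^ p ^ n = z⁻¹ ↔ z ^ (p ^ n + 1) = 1 := by
    rw [pow_succ]
    exact (mul_eq_one_iff_eq_inv₀ hz).symm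
  rw [← ea, ← eb, ← halfSum_eq_iff H.two_ne (pow_ne_zero _ hz) hz, ← halfSum_pow_card]
  constructor
  · rintro ⟨x, hx⟩
    rw [← hx, ← map_pow, ← hF, FiniteField.pow_card]
  · intro h
    rw [← hF] at h
    exact mem_range_of_pow_card _ h

/-- Every `b` in the finite field is `halfSum c` for a root of unity `c` of order dividing `q - 1` or
`q + 1`. -/
theorem exists_param (H : FiberData K (p ^ n) d e) (hF : Fintype.card F = p ^ n) (b : F) :
    ∃ c : K, (c ∈ rootSet K (p ^ n - 1) ∨ c ∈ rootSet K (p ^ n + 1)) ∧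
      algebraMap F K b = halfSum c := by
  obtain ⟨c, hc, hb⟩ := exists_halfSum H.two_ne (algebraMap F K b)
  exact ⟨c, (halfSum_mem_range_iff H hF hc).mp ⟨b, hb⟩, hb⟩

open scoped Classical in
/-- After the substitution `2 x + 1 = halfSum z`, the equation `(x+1)^d + x^d = halfSum c`
becomes `z ^ d = c`. -/
theorem cdelta_eq_s15 {k : ℕ} (H : FiberData K (p ^ n) d e) (hF : Fintype.card F = p ^ n)
    (hd : 2 * d = p ^ k + 1) {b : F} {c : K}
    (hc : c ∈ rootSet K (p ^ n - 1) ∨ c ∈ rootSet K (p ^ n + 1))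
    (hb : algebraMap F K b = halfSum c) :
    cdelta F d (-1) b = ((powFiber K (p ^ n) d c).image halfSum).card := by
  have h2 := H.two_ne
  have hc0 := H.ne_zero hc
  have hinj : Function.Injective (fun x : F => 2 * algebraMap F K x + 1) := by
    intro x y hxy
    exact (algebraMap F K).injective (mul_left_cancel₀ h2 (add_right_cancel hxy))
  have hiff : ∀ (x : F) (z : K), z ≠ 0 → 2 * algebraMap F K x + 1 = halfSum z →
      ((x + 1) ^ d - (-1) * x ^ d = b ↔ halfSum (z ^ d) = halfSum c) := by
    intro x z hz h
    rw [← (algebraMap F K).injective.eq_iff, hb, ← sum_pow_eq_halfSum p k d h2 hd hz h]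
    simp
  rw [cdelta, Nat.card_eq_fintype_card, Fintype.card_subtype,
    ← Finset.card_image_of_injective _ hinj]
  congr 1
  ext y
  simp only [Finset.mem_image, Finset.mem_filter, Finset.mem_univ, true_and,
    FiberData.mem_powFiber]
  constructor
  · rintro ⟨x, hx, rfl⟩
    obtain ⟨z, hz, hxz⟩ := exists_halfSum h2 (2 * algebraMap F K x + 1)
    have hmem := (halfSum_mem_range_iff H hF hz).mp ⟨2 * x + 1, by
      rw [map_add, map_mul, map_one, map_ofNat]; exact hxz⟩
    have := (hiff x z hz hxz).mp hx
    rcases (halfSum_eq_iff h2 (pow_ne_zero _ hz) hc0).mp this with h | h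
    · exact ⟨z, ⟨hmem, h⟩, hxz.symm⟩
    · exact ⟨z⁻¹, ⟨hmem.imp H.inv_mem_sub FiberData.inv_mem_add, by rw [inv_pow, h, inv_inv]⟩,
        by rw [halfSum_inv, hxz]⟩
  · rintro ⟨z, ⟨hmem, rfl⟩, rfl⟩
    have hz := H.ne_zero hmem
    obtain ⟨t, ht⟩ := (halfSum_mem_range_iff H hF hz).mpr hmem
    have hx : 2 * algebraMap F K ((t - 1) / 2) + 1 = halfSum z := by
      rw [← ht, map_div₀, map_sub, map_one, map_ofNat]
      field_simp
      ring
    exact ⟨(t - 1) / 2, (hiff _ z hz hx).mpr rfl, hx⟩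

open scoped Classical in
/-- Counting the `b` with `δ(b) = i` through their parameters `c`, where `b = halfSum c`. -/
theorem comega_eq_s15 (H : FiberData K (p ^ n) d e) (hF : Fintype.card F = p ^ n) (i : ℕ)
    (S : Finset K)
    (hS : ∀ z ∈ S, z ∈ rootSet K (p ^ n - 1) ∨ z ∈ rootSet K (p ^ n + 1))
    (h : ∀ (b : F) (c : K), (c ∈ rootSet K (p ^ n - 1) ∨ c ∈ rootSet K (p ^ n + 1)) →
      algebraMap F K b = halfSum c → (cdelta F d (-1) b = i ↔ c ∈ S)) :
    comega F d (-1) i = (S.image halfSum).card := by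
  rw [comega, Nat.card_eq_fintype_card, Fintype.card_subtype,
    ← Finset.card_image_of_injective _ (algebraMap F K).injective]
  congr 1
  ext y
  simp only [Finset.mem_image, Finset.mem_filter, Finset.mem_univ, true_and]
  constructor
  · rintro ⟨b, hb, rfl⟩
    obtain ⟨c, hc, hbc⟩ := exists_param H hF b
    exact ⟨c, (h b c hc hbc).mp hb, hbc.symm⟩
  · rintro ⟨c, hc, rfl⟩
    obtain ⟨b, hb⟩ := (halfSum_mem_range_iff H hF (H.ne_zero (hS c hc))).mpr (hS c hc)
    exact ⟨b, (h b c (hS c hc) hb).mpr hc, hb⟩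

end

/-! ### The spectrum -/

theorem fiberData (K : Type*) [Field K] [IsAlgClosed K] {p n k : ℕ} [Fact p.Prime] [CharP K p]
    (hp4 : p % 4 = 1) (hn : 1 ≤ n) (hgcd : Nat.gcd n k = 1) (hnodd : Odd n) (hkodd : Odd k) :
    FiberData K (p ^ n) ((p ^ k + 1) / 2) ((p + 1) / 2) := by
  have hp : p.Prime := Fact.out
  have hpK : (p : K) = 0 := CharP.cast_eq_zero K p
  have h2 : (2 : K) ≠ 0 := by
    intro h
    have := (CharP.cast_eq_zero_iff K p 2).mp (by exact_mod_cast h)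
    have := Nat.le_of_dvd (by norm_num) this
    have := hp.two_le
    omega
  have hlt : 1 < p ^ n := Nat.one_lt_pow (by omega) hp.one_lt
  have hqK : ((p ^ n : ℕ) : K) = 0 := by
    rw [Nat.cast_pow, hpK, zero_pow (by omega)]
  refine ⟨h2, hlt, Odd.pow (Nat.odd_iff.mpr (by omega)), (half_odd hp4).2, gcd_sub_one hp4 hgcd hnodd,
    gcd_add_one hp4 hgcd hnodd hkodd, card_rootSet ?_, card_rootSet ?_, card_rootSet ?_⟩
  · rw [Nat.cast_sub hlt.le, hqK]; simp
  · rw [Nat.cast_add, hqK]; simp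
  · intro h
    have : ((2 * ((p + 1) / 2) : ℕ) : K) = 0 := by rw [Nat.cast_mul, h, mul_zero]
    rw [show 2 * ((p + 1) / 2) = p + 1 by omega, Nat.cast_add, hpK] at this
    simp at this

/-- The four possible values of `δ` are distinct, so a description of the cases in which they occur
determines exactly when each of them is taken. -/
theorem value_iff {v p : ℕ} (hp5 : 5 ≤ p) (hp4 : p % 4 = 1) {P a b I : Prop} (h1 : a ∧ b ↔ P)
    (hI : I → b) (hP : P → I)
    (h : (v = (p + 3) / 4 ∧ P) ∨ (v = 1 ∧ a ∧ ¬ P) ∨ (v = (p + 1) / 2 ∧ I ∧ ¬ P) ∨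
      (v = 0 ∧ b ∧ ¬ I)) :
    (v = (p + 3) / 4 ↔ P) ∧ (v = 1 ↔ a ∧ ¬ P) ∧ (v = (p + 1) / 2 ↔ I ∧ ¬ P) ∧
      (v = 0 ↔ b ∧ ¬ I) := by
  have e1 : (p + 3) / 4 ≠ 0 := by omega
  have e2 : (p + 3) / 4 ≠ 1 := by omega
  have e3 : (p + 3) / 4 ≠ (p + 1) / 2 := by omega
  have e4 : (p + 1) / 2 ≠ 0 := by omega
  have e5 : (p + 1) / 2 ≠ 1 := by omega
  generalize (p + 3) / 4 = x at *
  generalize (p + 1) / 2 = y at *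
  clear hp5 hp4
  by_cases P <;> by_cases a <;> by_cases b <;> by_cases I <;> simp_all <;> grind

open scoped Classical in
/-- The spectrum, computed with roots of unity in an arbitrary algebraically closed extension `K`
of `F`. -/
theorem power_spectrum {F K : Type*} [Field F] [Fintype F] [Field K] [Algebra F K] [IsAlgClosed K]
    {p n k : ℕ} [Fact p.Prime] [CharP K p] (hp4 : p % 4 = 1) (hn : 1 ≤ n)
    (H : FiberData K (p ^ n) ((p ^ k + 1) / 2) ((p + 1) / 2))
    (hF : Fintype.card F = p ^ n) :
    comega F ((p ^ k + 1) / 2) (-1 : F) 0 = (p ^ n + 1) * (p - 1) / (2 * (p + 1)) ∧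
    comega F ((p ^ k + 1) / 2) (-1 : F) 1 = (p ^ n - 3) / 2 ∧
    comega F ((p ^ k + 1) / 2) (-1 : F) ((p + 3) / 4) = 2 ∧
    comega F ((p ^ k + 1) / 2) (-1 : F) ((p + 1) / 2) = (p ^ n - p) / (p + 1) ∧
    ∀ i, i ≠ 0 → i ≠ 1 → i ≠ (p + 3) / 4 → i ≠ (p + 1) / 2 →
      comega F ((p ^ k + 1) / 2) (-1 : F) i = 0 := by
  have hp : p.Prime := Fact.out
  have hd := (half_odd (k := k) hp4).1
  have hp5 : 5 ≤ p := by have := hp.two_le; omega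
  set d := (p ^ k + 1) / 2
  set q := p ^ n with hq
  have hq5 : 5 ≤ q := hp5.trans (Nat.le_self_pow (by omega) p)
  have hqodd : q % 2 = 1 := Nat.odd_iff.mp H.odd_q
  set A := rootSet K (q - 1)
  set B := rootSet K (q + 1)
  set I := powImage K q d
  have hIB : ∀ c ∈ I, c ∈ B := fun c hc => FiberData.powImage_subset hc
  have hpm : ∀ c : K, c ∈ A ∧ c ∈ B ↔ c = 1 ∨ c = -1 := fun c => H.mem_both_iff
  have hpmI : ∀ c : K, c = 1 ∨ c = -1 → c ∈ I := fun c hc => H.unit_mem_powImage hc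
  have hne : (1 : K) ≠ -1 := H.one_ne_neg_one
  have hIinv : ∀ c ∈ I, c⁻¹ ∈ I := by
    intro c hc
    obtain ⟨z, hz, rfl⟩ := Finset.mem_image.mp hc
    exact Finset.mem_image.mpr ⟨z⁻¹, FiberData.inv_mem_add hz, inv_pow z d⟩
  have hcardI : I.card * ((p + 1) / 2) = q + 1 :=
    (card_pow_image (by omega) H.gcd_add H.card_e).trans H.card_add
  have hpair : ({1, -1} : Finset K).card = 2 := Finset.card_pair hne
  have hpairinv : ∀ c : K, c ∉ ({1, -1} : Finset K) → c⁻¹ ∉ ({1, -1} : Finset K) := by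
    intro c hc h
    simp only [Finset.mem_insert, Finset.mem_singleton] at h hc
    apply hc
    rw [← inv_inv c]
    rcases h with h | h <;> simp [h]
  -- the value of `δ` at `halfSum c`, by the position of `c`
  have val : ∀ (b : F) (c : K), (c ∈ A ∨ c ∈ B) → algebraMap F K b = halfSum c →
      (cdelta F d (-1) b = (p + 3) / 4 ∧ c ∈ ({1, -1} : Finset K)) ∨
      (cdelta F d (-1) b = 1 ∧ c ∈ A \ {1, -1}) ∨
      (cdelta F d (-1) b = (p + 1) / 2 ∧ c ∈ I \ {1, -1}) ∨
      (cdelta F d (-1) b = 0 ∧ c ∈ B \ I) := by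
    intro b c hc hb
    have hv : cdelta F d (-1) b = ((powFiber K q d c).image halfSum).card :=
      cdelta_eq_s15 H hF hd hc hb
    rw [hv]
    simp only [Finset.mem_sdiff, Finset.mem_insert, Finset.mem_singleton]
    by_cases h1 : c = 1 ∨ c = -1
    · have := H.card_image_unit h1
      exact Or.inl ⟨by omega, h1⟩
    · obtain ⟨h1a, h1b⟩ := not_or.mp h1
      by_cases hA : c ∈ A
      · exact Or.inr (Or.inl ⟨H.card_image_sub hA h1a h1b, hA, h1⟩)
      · have hB := hc.resolve_left hA
        by_cases hI : c ∈ I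
        · exact Or.inr (Or.inr (Or.inl ⟨H.card_image_add hI h1a h1b, hI, h1⟩))
        · exact Or.inr (Or.inr (Or.inr ⟨H.card_image_none hB hI, hB, hI⟩))
  have hAinv : ∀ c ∈ A, c⁻¹ ∈ A := fun c hc => H.inv_mem_sub hc
  have hBinv : ∀ c ∈ B, c⁻¹ ∈ B := fun c hc => FiberData.inv_mem_add hc
  have hsubA : ({1, -1} : Finset K) ⊆ A := fun c hc => ((hpm c).mpr (by simpa using hc)).1
  have hsubI : ({1, -1} : Finset K) ⊆ I := fun c hc => hpmI c (by simpa using hc)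
  have hpB : ∀ c ∈ ({1, -1} : Finset K), c ∈ B := fun c hc => hIB c (hsubI hc)
  have hz : ∀ c : K, (c ∈ A ∨ c ∈ B) → c ∉ ({1, -1} : Finset K) → c ≠ 0 ∧ c ≠ 1 ∧ c ≠ -1 := by
    intro c hc hc'
    simp only [Finset.mem_insert, Finset.mem_singleton, not_or] at hc'
    exact ⟨H.ne_zero hc, hc'⟩
  have viff : ∀ (b : F) (c : K), (c ∈ A ∨ c ∈ B) → algebraMap F K b = halfSum c →
      (cdelta F d (-1) b = (p + 3) / 4 ↔ c ∈ ({1, -1} : Finset K)) ∧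
      (cdelta F d (-1) b = 1 ↔ c ∈ A \ {1, -1}) ∧
      (cdelta F d (-1) b = (p + 1) / 2 ↔ c ∈ I \ {1, -1}) ∧
      (cdelta F d (-1) b = 0 ↔ c ∈ B \ I) := by
    intro b c hc hb
    have hv := val b c hc hb
    simp only [Finset.mem_sdiff] at hv ⊢
    exact value_iff hp5 hp4 ((hpm c).trans (by simp)) (hIB c) (fun h => hsubI h) hv
  have cA : (A \ {1, -1}).card = q - 3 := by
    rw [Finset.card_sdiff_of_subset hsubA, hpair, H.card_sub]; omega
  have cI : (I \ {1, -1}).card = I.card - 2 := by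
    rw [Finset.card_sdiff_of_subset hsubI, hpair]
  have cB : (B \ I).card = q + 1 - I.card := by
    rw [Finset.card_sdiff_of_subset hIB, H.card_add]
  have hI2 : 2 ≤ I.card := hpair ▸ Finset.card_le_card hsubI
  refine ⟨?_, ?_, ?_, ?_, ?_⟩
  · rw [comega_eq_s15 H hF 0 (B \ I)]
    · have := two_mul_card_image_halfSum H.two_ne (B \ I)
        (fun c hc => hz c (Or.inr (Finset.mem_sdiff.mp hc).1)
          (fun h => (Finset.mem_sdiff.mp hc).2 (hsubI h)))
        (fun c hc => by
          rw [Finset.mem_sdiff] at hc ⊢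
          exact ⟨hBinv c hc.1, fun h => hc.2 (inv_inv c ▸ hIinv _ h)⟩)
      symm
      apply Nat.div_eq_of_eq_mul_left (by omega)
      rw [cB] at this
      obtain ⟨s, hs⟩ : ∃ s, (p + 1) / 2 = s + 1 := ⟨(p + 1) / 2 - 1, by omega⟩
      rw [show p - 1 = 2 * s by omega, show p + 1 = 2 * (s + 1) by omega]
      rw [← hcardI, hs, show I.card * (s + 1) - I.card = I.card * s by
        rw [mul_add, mul_one, Nat.add_sub_cancel]] at this
      rw [← hcardI, hs]
      linear_combination 2 * (s + 1) * this.symm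
    · intro z hz
      exact Or.inr (Finset.mem_sdiff.mp hz).1
    · exact fun b c hc hb => (viff b c hc hb).2.2.2
  · rw [comega_eq_s15 H hF 1 (A \ {1, -1})]
    · have := two_mul_card_image_halfSum H.two_ne (A \ {1, -1})
        (fun c hc => hz c (Or.inl (Finset.mem_sdiff.mp hc).1) (Finset.mem_sdiff.mp hc).2)
        (fun c hc => by
          rw [Finset.mem_sdiff] at hc ⊢
          exact ⟨hAinv c hc.1, hpairinv c hc.2⟩)
      omega
    · intro z hz
      exact Or.inl (Finset.mem_sdiff.mp hz).1
    · exact fun b c hc hb => (viff b c hc hb).2.1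
  · rw [comega_eq_s15 H hF _ {1, -1}]
    · rw [Finset.image_insert, Finset.image_singleton, Finset.card_pair]
      rw [Ne, halfSum_eq_iff H.two_ne (by simp) (by simp)]
      simp [hne, inv_neg]
    · intro z hz
      exact Or.inl (hsubA hz)
    · exact fun b c hc hb => (viff b c hc hb).1
  · rw [comega_eq_s15 H hF _ (I \ {1, -1})]
    · have := two_mul_card_image_halfSum H.two_ne (I \ {1, -1})
        (fun c hc => hz c (Or.inr (hIB c (Finset.mem_sdiff.mp hc).1)) (Finset.mem_sdiff.mp hc).2)
        (fun c hc => by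
          rw [Finset.mem_sdiff] at hc ⊢
          exact ⟨hIinv c hc.1, hpairinv c hc.2⟩)
      symm
      apply Nat.div_eq_of_eq_mul_left (by omega)
      obtain ⟨t, ht⟩ := Nat.exists_eq_add_of_le hI2
      obtain ⟨s, hs⟩ : ∃ s, (p + 1) / 2 = s + 1 := ⟨(p + 1) / 2 - 1, by omega⟩
      rw [cI, ht, Nat.add_sub_cancel_left] at this
      rw [ht, hs] at hcardI
      have hq' : q = p + t * (s + 1) := by
        have : (2 + t) * (s + 1) = 2 * (s + 1) + t * (s + 1) := by ring
        omega
      rw [hq', Nat.add_sub_cancel_left, ← this, show p + 1 = 2 * (s + 1) by omega]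
      ring
    · intro z hz
      exact Or.inr (hIB z (Finset.mem_sdiff.mp hz).1)
    · exact fun b c hc hb => (viff b c hc hb).2.2.1
  · intro i h0 h1 h2 h3
    rw [comega_eq_s15 H hF i ∅]
    · simp
    · simp
    · intro b c hc hb
      rcases val b c hc hb with h | h | h | h <;> rw [h.1] <;> simp <;> omega

theorem stmt_15 (p n k : ℕ) (hp : p.Prime) (hp4 : p % 4 = 1)
    (hn : 1 ≤ n) (hk : 1 ≤ k) (hgcd : Nat.gcd n k = 1)
    (heven : Even (2 * n / Nat.gcd (2 * n) k)) (hnodd : Odd n)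
    (F : Type*) [Field F] [Fintype F] (hF : Fintype.card F = p ^ n) :
    comega F ((p ^ k + 1) / 2) (-1 : F) 0 = (p ^ n + 1) * (p - 1) / (2 * (p + 1)) ∧
    comega F ((p ^ k + 1) / 2) (-1 : F) 1 = (p ^ n - 3) / 2 ∧
    comega F ((p ^ k + 1) / 2) (-1 : F) ((p + 3) / 4) = 2 ∧
    comega F ((p ^ k + 1) / 2) (-1 : F) ((p + 1) / 2) = (p ^ n - p) / (p + 1) ∧
    ∀ i, i ≠ 0 → i ≠ 1 → i ≠ (p + 3) / 4 → i ≠ (p + 1) / 2 →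
      comega F ((p ^ k + 1) / 2) (-1 : F) i = 0 := by
  have : Fact p.Prime := ⟨hp⟩
  have : CharP F p := charP_of_card_eq_prime_pow hF
  have : CharP (AlgebraicClosure F) p :=
    charP_of_injective_algebraMap (algebraMap F (AlgebraicClosure F)).injective p
  exact power_spectrum hp4 hn (fiberData (AlgebraicClosure F) hp4 hn hgcd hnodd
    (odd_of_even_div hgcd heven hnodd)) hF
end

section
/- Let p be a prime with p ≡ 1 (mod 4), and let n, k be positive integers with gcd(n, k) = 1 and 2n/gcd(2n, k) even. Let F(x) = x^{(p^k + 1)/2} be a power function over GF(p^n). If n is even, then the (−1)-differential spectrum of F is given by ω_0 = (p^n − 1)(p − 1)/(2(p + 1)), ω_1 = (p^n − 1)/2, ω_{(p+3)/4} = 2, ω_{(p+1)/2} = (p^n − p − 2)/(p + 1), and ω_i = 0 for all other i. -/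
/-!
Write `q = p ^ n`, `d = (p ^ k + 1) / 2` and `J s = (s + s⁻¹) / 2`. In the coordinate `z = 2 x + 1`
the function `x ↦ (x + 1) ^ d + x ^ d` becomes a map `T` on `F` satisfying
`T (J s) = J (s ^ d)` (`centredDelta_joukowski`): for `z = J s` one has `x = (s - 1)² / (4 s)` and
`x + 1 = (s + 1)² / (4 s)`, and `(s ± 1) ^ (2 d) = (s ± 1) ^ (p ^ k + 1)` is computed by Frobenius.
So `T` is a Dickson (Chebyshev) polynomial map, and its fibres are governed by the power map
`s ↦ s ^ d` on the two groups `Fˣ` and `μ_{q+1} ⊆ F̄ˣ`, since every `z ∈ F` is `J s` for some `s` in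
one of them.

As `n` is even and coprime to `k`, `k` is odd. Then `d` is odd and coprime to `q + 1`
(`dvd_two_of_dvd_pow_add_one`), while `gcd (q - 1, d) = (p + 1) / 2 =: e` (`p_add_one_half_gcd`).
Hence

* off `J (Fˣ)` the map `T` is a permutation, and it sends `J (Fˣ)` to itself, so every
  `b ∉ J (Fˣ)` has exactly one preimage (`existsUnique_centredDelta`);
* if `b = J w` with `w ∈ Fˣ`, the preimages of `b` are the `J u` with `u ^ d = w`
  (`cdelta_joukowski`). There are none if `w` is not a `d`-th power, `e` if it is one and `w ≠ ±1`,
  and `(e + 1) / 2 = (p + 3) / 4` if `w = ±1`, because `J` identifies `u` with `u⁻¹`.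

The numbers of `b` in these classes follow since `J` is two-to-one off `±1`
(`two_mul_card_image_joukowski`) and there are `(q - 1) / e` nonzero `d`-th powers; the class of
`b ∉ J (Fˣ)` is what remains.
-/

open Finset

/-! ### Greatest common divisors -/

/-- Modulo `p ^ 2 - 1`, `(p ^ k + 1) / 2` is `(p + 1) / 2` plus a multiple of `(p ^ 2 - 1) / 2`;
being odd, it has the same gcd with `p ^ 2 - 1` as with `(p ^ 2 - 1) / 2`. -/
theorem p_add_one_half_gcd {p n k : ℕ} (hp4 : p % 4 = 1) (hgcd : Nat.gcd n k = 1)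
    (hneven : Even n) (hp1 : 1 < p) :
    Nat.gcd (p ^ n - 1) ((p ^ k + 1) / 2) = (p + 1) / 2 := by
  have hkodd : Odd k := by
    by_contra h
    rw [Nat.not_odd_iff_even] at h
    have := Nat.dvd_gcd hneven.two_dvd h.two_dvd
    rw [hgcd] at this
    omega
  obtain ⟨j, hj⟩ := hkodd
  obtain ⟨r, hr⟩ : ∃ r, p = 4 * r + 1 := ⟨p / 4, by omega⟩
  -- `p² - 1 = 2R`
  obtain ⟨R, hR⟩ : ∃ R, p ^ 2 - 1 = 2 * R ∧ R = (2 * r) * (2 * (2 * r + 1)) := by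
    refine ⟨_, ?_, rfl⟩
    rw [hr]
    apply Nat.sub_eq_of_eq_add
    ring
  obtain ⟨hR, hR'⟩ := hR
  obtain ⟨m, hm⟩ : ∃ m, (p ^ 2) ^ j = (2 * R) * m + 1 := by
    have h1 : p ^ 2 - 1 ∣ (p ^ 2) ^ j - 1 ^ j := Nat.sub_dvd_pow_sub_pow _ 1 j
    rw [one_pow, hR] at h1
    obtain ⟨m, hm⟩ := h1
    have : 0 < (p ^ 2) ^ j := by positivity
    exact ⟨m, by omega⟩
  have hk2 : p ^ k = p * (2 * R * m + 1) := by
    rw [hj, pow_succ, pow_mul, hm, mul_comm]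
  have hd : (p ^ k + 1) / 2 = (p + 1) / 2 + R * (p * m) := by
    rw [hk2]
    have : p * (2 * R * m + 1) + 1 = (p + 1) + 2 * (R * (p * m)) := by ring
    rw [this]
    omega
  have hhalf : (p + 1) / 2 = 2 * r + 1 := by omega
  have hdodd : Nat.Coprime ((p ^ k + 1) / 2) 2 := by
    rw [Nat.coprime_two_right, hd, hhalf, hR']
    exact ⟨r + (r * (2 * (2 * r + 1))) * (p * m), by ring⟩
  -- `(p ^ k + 1) / 2` divides `p ^ (2 * k) - 1`, whose gcd with `p ^ n - 1` is `p ^ 2 - 1`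
  have hsq : p ^ 2 - 1 ∣ p ^ n - 1 := by
    obtain ⟨t, ht⟩ := hneven.two_dvd
    rw [ht, pow_mul]
    simpa using Nat.sub_dvd_pow_sub_pow (p ^ 2) 1 t
  have hg2 : Nat.gcd n (2 * k) = 2 := by
    rw [Nat.Coprime.gcd_mul_right_cancel_right 2 (Nat.Coprime.symm hgcd)]
    exact Nat.gcd_eq_right hneven.two_dvd
  have hdvd : (p ^ k + 1) / 2 ∣ p ^ (2 * k) - 1 := by
    have h1 : (p ^ k + 1) / 2 ∣ p ^ k + 1 := by
      refine Nat.div_dvd_of_dvd ?_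
      have : p ^ k % 2 = 1 := by rw [Nat.pow_mod, show p % 2 = 1 by omega]; simp
      omega
    refine h1.trans ?_
    have := Nat.sq_sub_sq (p ^ k) 1
    rw [mul_comm 2 k, pow_mul]
    simp only [one_pow] at this
    exact ⟨_, this⟩
  have hA : Nat.gcd (p ^ n - 1) ((p ^ k + 1) / 2) = Nat.gcd (p ^ 2 - 1) ((p ^ k + 1) / 2) := by
    apply Nat.dvd_antisymm
    · apply Nat.dvd_gcd _ (Nat.gcd_dvd_right _ _)
      have h := Nat.dvd_gcd (Nat.gcd_dvd_left (p ^ n - 1) ((p ^ k + 1) / 2))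
        ((Nat.gcd_dvd_right _ _).trans hdvd)
      rwa [Nat.pow_sub_one_gcd_pow_sub_one, hg2] at h
    · exact Nat.dvd_gcd ((Nat.gcd_dvd_left _ _).trans hsq) (Nat.gcd_dvd_right _ _)
  rw [hA, hR, Nat.Coprime.gcd_mul_left_cancel R hdodd.symm, hd, Nat.gcd_add_mul_left_right, hhalf,
    hR']
  exact Nat.gcd_eq_right ⟨2 * r * 2, by ring⟩

theorem dvd_two_of_dvd_pow_add_one {p n k g : ℕ} (hn : Even n) (hk : Odd k)
    (h1 : g ∣ p ^ n + 1) (h2 : g ∣ p ^ k + 1) : g ∣ 2 := by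
  have e1 : ((p : ZMod g)) ^ n = -1 := by
    have := (ZMod.natCast_eq_zero_iff _ _).2 h1
    push_cast at this
    exact eq_neg_of_add_eq_zero_left this
  have e2 : ((p : ZMod g)) ^ k = -1 := by
    have := (ZMod.natCast_eq_zero_iff _ _).2 h2
    push_cast at this
    exact eq_neg_of_add_eq_zero_left this
  have e3 : ((-1 : ZMod g)) ^ k = (-1) ^ n := by
    calc ((-1 : ZMod g)) ^ k = ((p : ZMod g) ^ n) ^ k := by rw [e1]
      _ = ((p : ZMod g) ^ k) ^ n := by rw [← pow_mul, ← pow_mul, mul_comm]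
      _ = (-1) ^ n := by rw [e2]
  rw [hk.neg_one_pow, hn.neg_one_pow] at e3
  rw [← ZMod.natCast_eq_zero_iff]
  push_cast
  linear_combination -e3

/-! ### The Dickson functional equation -/

/-- The map `s ↦ (s + s⁻¹) / 2`. -/
def joukowski {K : Type*} [Field K] (s : K) : K := (s + s⁻¹) / 2

/-- The function `x ↦ (x + 1)^d + x^d` in the coordinate `z = 2 * x + 1`. -/
def centredDelta {K : Type*} [Field K] (d : ℕ) (z : K) : K :=
  ((z - 1) / 2 + 1) ^ d - (-1) * ((z - 1) / 2) ^ d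

section Field

variable {K : Type*} [Field K]

theorem joukowski_inv (s : K) : joukowski s⁻¹ = joukowski s := by
  simp [joukowski, add_comm]

theorem joukowski_eq_iff (h2 : (2 : K) ≠ 0) {s t : K} (hs : s ≠ 0) (ht : t ≠ 0) :
    joukowski s = joukowski t ↔ s = t ∨ s = t⁻¹ := by
  constructor
  · intro h
    have h' : (s - t) * (s * t - 1) = 0 := by
      unfold joukowski at h
      field_simp at h
      linear_combination h
    rcases mul_eq_zero.1 h' with h | h
    · exact Or.inl (sub_eq_zero.1 h)
    · exact Or.inr (eq_inv_of_mul_eq_one_left (sub_eq_zero.1 h))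
  · rintro (rfl | rfl)
    · rfl
    · exact joukowski_inv t

theorem centredDelta_joukowski (p k d : ℕ) [Fact p.Prime] [CharP K p] (h2 : (2 : K) ≠ 0)
    (hd : 2 * d = p ^ k + 1) {s : K} (hs : s ≠ 0) :
    centredDelta d (joukowski s) = joukowski (s ^ d) := by
  have e2 : (2 : K) ^ p ^ k = 2 := by
    have := add_pow_char_pow (1 : K) 1 p k
    rw [one_pow] at this
    norm_num at this
    exact this
  have e4 : (4 : K) ^ d = 4 := by
    rw [show (4 : K) = 2 ^ 2 by norm_num, ← pow_mul, hd, pow_succ, e2]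
    ring
  have h4 : (4 : K) ≠ 0 := by
    rw [show (4 : K) = 2 ^ 2 by norm_num]
    exact pow_ne_zero _ h2
  have x1 : (joukowski s - 1) / 2 + 1 = (s + 1) ^ 2 / (4 * s) := by
    unfold joukowski
    rw [show (4 : K) = 2 * 2 by norm_num]
    field_simp
    ring
  have x2 : (joukowski s - 1) / 2 = (s - 1) ^ 2 / (4 * s) := by
    unfold joukowski
    rw [show (4 : K) = 2 * 2 by norm_num]
    field_simp
    ring
  have hsd : s ^ d * s ^ d = s ^ p ^ k * s := by
    rw [← pow_add, ← two_mul, hd, pow_succ]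
  have hsd0 : s ^ d ≠ 0 := pow_ne_zero _ hs
  rw [centredDelta, x1, x2, div_pow, div_pow, ← pow_mul, ← pow_mul, hd, pow_succ, pow_succ,
    add_pow_char_pow, sub_pow_char_pow, one_pow, mul_pow, e4]
  unfold joukowski
  generalize s ^ p ^ k = a at *
  generalize s ^ d = c at *
  rw [show (4 : K) = 2 * 2 by norm_num]
  field_simp
  linear_combination -2 * hsd

theorem centredDelta_map {L : Type*} [Field L] (f : K →+* L) (d : ℕ) (z : K) :
    f (centredDelta d z) = centredDelta d (f z) := by
  simp [centredDelta, map_ofNat]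

theorem joukowski_map {L : Type*} [Field L] (f : K →+* L) (s : K) :
    f (joukowski s) = joukowski (f s) := by
  simp [joukowski, map_ofNat]

end Field

/-! ### Fibres over elements not of the form `(s + s⁻¹) / 2` -/

/-- An element of a finite field outside the image of `joukowski` becomes `joukowski s` in the
algebraic closure, with `s` in the group of elements of order dividing `q + 1`. -/
theorem exists_joukowski_of_not_split (p n : ℕ) [Fact p.Prime] {F : Type*} [Field F] [Fintype F]
    [CharP F p] (hp2 : p ≠ 2) (hF : Fintype.card F = p ^ n) (h2 : (2 : F) ≠ 0) {z : F}
    (hz : ∀ s : F, s ≠ 0 → joukowski s ≠ z) :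
    ∃ s : AlgebraicClosure F, s ≠ 0 ∧ joukowski s = algebraMap F _ z ∧ s ^ (p ^ n + 1) = 1 := by
  have : CharP (AlgebraicClosure F) p :=
    charP_of_injective_algebraMap (algebraMap F _).injective p
  have h2' : (2 : AlgebraicClosure F) ≠ 0 := by
    have := (map_ne_zero (algebraMap F (AlgebraicClosure F))).2 h2
    rwa [map_ofNat] at this
  -- a square root `r` of `z ^ 2 - 1` in `F` would give `z = joukowski (z + r)`
  have hns : ¬ IsSquare (z ^ 2 - 1) := by
    rintro ⟨r, hr⟩
    have hm : (z + r) * (z - r) = 1 := by linear_combination hr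
    have h0 : z + r ≠ 0 := left_ne_zero_of_mul_eq_one hm
    refine hz (z + r) h0 ?_
    rw [joukowski, inv_eq_of_mul_eq_one_right hm]
    field_simp
    ring
  have hrc : ringChar F ≠ 2 := by rwa [ringChar.eq F p]
  have h0 : z ^ 2 - 1 ≠ 0 := by
    intro h
    rw [h] at hns
    exact hns (IsSquare.zero)
  have hpow : (z ^ 2 - 1) ^ (Fintype.card F / 2) = -1 :=
    (FiniteField.pow_dichotomy hrc h0).resolve_left fun h =>
      hns ((FiniteField.isSquare_iff hrc h0).2 h)
  have hodd : 2 * (Fintype.card F / 2) + 1 = p ^ n := by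
    have := FiniteField.odd_card_of_char_ne_two hrc
    omega
  obtain ⟨r, hr⟩ := IsAlgClosed.exists_pow_nat_eq
    (algebraMap F (AlgebraicClosure F) (z ^ 2 - 1)) (n := 2) (by norm_num)
  have hrq : r ^ p ^ n = -r := by
    rw [← hodd, pow_succ, pow_mul, hr, ← map_pow, hpow]
    simp
  set Z := algebraMap F (AlgebraicClosure F) z with hZ
  have hzq : Z ^ p ^ n = Z := by
    rw [hZ, ← map_pow, ← hF, FiniteField.pow_card]
  have hr' : r ^ 2 = Z ^ 2 - 1 := by rw [hr]; simp [hZ]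
  have hm : (Z + r) * (Z - r) = 1 := by linear_combination -hr'
  refine ⟨Z + r, left_ne_zero_of_mul_eq_one hm, ?_, ?_⟩
  · rw [joukowski, inv_eq_of_mul_eq_one_right hm]
    field_simp
    ring
  · rw [pow_succ, add_pow_char_pow, hzq, hrq]
    linear_combination hm

section Nonsplit

variable {p n k d : ℕ} [Fact p.Prime] {F : Type*} [Field F] [Fintype F] [CharP F p]

/-- `centredDelta` preserves the complement of the image of `joukowski`: an element `s` of order
dividing `q + 1` with `s ^ d ∈ F` satisfies `s ^ (2 * d) = 1`, hence `s = ± 1`. -/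
theorem centredDelta_not_split (hp2 : p ≠ 2) (hF : Fintype.card F = p ^ n) (h2 : (2 : F) ≠ 0)
    (hn : Even n) (hk : Odd k) (hd : 2 * d = p ^ k + 1) {z : F}
    (hz : ∀ s : F, s ≠ 0 → joukowski s ≠ z) :
    ∀ w : F, w ≠ 0 → joukowski w ≠ centredDelta d z := by
  intro w hw hwz
  have : CharP (AlgebraicClosure F) p :=
    charP_of_injective_algebraMap (algebraMap F _).injective p
  have h2' : (2 : AlgebraicClosure F) ≠ 0 := by
    have := (map_ne_zero (algebraMap F (AlgebraicClosure F))).2 h2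
    rwa [map_ofNat] at this
  obtain ⟨s, hs0, hs, hsq⟩ := exists_joukowski_of_not_split p n hp2 hF h2 hz
  have h := congrArg (algebraMap F (AlgebraicClosure F)) hwz
  rw [joukowski_map, centredDelta_map, ← hs, centredDelta_joukowski p k d h2' hd hs0] at h
  have hW : (algebraMap F (AlgebraicClosure F) w) ^ p ^ n = algebraMap F (AlgebraicClosure F) w := by
    rw [← map_pow, ← hF, FiniteField.pow_card]
  have hW0 : algebraMap F (AlgebraicClosure F) w ≠ 0 := (map_ne_zero _).2 hw
  have hfix : (s ^ d) ^ p ^ n = s ^ d := by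
    rcases (joukowski_eq_iff h2' hW0 (pow_ne_zero d hs0)).1 h with h | h
    · rw [← h, hW]
    · rw [← inv_inv (s ^ d), ← h, inv_pow, hW]
  have h2d : s ^ (p ^ k + 1) = 1 := by
    rw [← hd, mul_comm, pow_mul, pow_two]
    nth_rw 1 [← hfix]
    rw [← pow_succ, ← pow_mul, mul_comm, pow_mul, hsq, one_pow]
  have hs2 : s ^ 2 = 1 := orderOf_dvd_iff_pow_eq_one.1 <| dvd_two_of_dvd_pow_add_one hn hk
    (orderOf_dvd_of_pow_eq_one hsq) (orderOf_dvd_of_pow_eq_one h2d)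
  rcases mul_self_eq_one_iff.1 ((pow_two s).symm.trans hs2) with h1 | h1
  · refine hz 1 one_ne_zero ((algebraMap F (AlgebraicClosure F)).injective ?_)
    rw [joukowski_map, ← hs, h1, map_one]
  · refine hz (-1) (neg_ne_zero.2 one_ne_zero) ((algebraMap F (AlgebraicClosure F)).injective ?_)
    rw [joukowski_map, ← hs, h1, map_neg, map_one]

/-- `centredDelta` is injective off the image of `joukowski`, because `d` is coprime to `q + 1`. -/
theorem centredDelta_inj_not_split (hp2 : p ≠ 2) (hF : Fintype.card F = p ^ n) (h2 : (2 : F) ≠ 0)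
    (hn : Even n) (hk : Odd k) (hd : 2 * d = p ^ k + 1) (hdodd : Odd d) {z z' : F}
    (hz : ∀ s : F, s ≠ 0 → joukowski s ≠ z) (hz' : ∀ s : F, s ≠ 0 → joukowski s ≠ z')
    (h : centredDelta d z = centredDelta d z') : z = z' := by
  have : CharP (AlgebraicClosure F) p :=
    charP_of_injective_algebraMap (algebraMap F _).injective p
  have h2' : (2 : AlgebraicClosure F) ≠ 0 := by
    have := (map_ne_zero (algebraMap F (AlgebraicClosure F))).2 h2
    rwa [map_ofNat] at this
  obtain ⟨s, hs0, hs, hsq⟩ := exists_joukowski_of_not_split p n hp2 hF h2 hz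
  obtain ⟨t, ht0, ht, htq⟩ := exists_joukowski_of_not_split p n hp2 hF h2 hz'
  have h := congrArg (algebraMap F (AlgebraicClosure F)) h
  rw [centredDelta_map, centredDelta_map, ← hs, ← ht, centredDelta_joukowski p k d h2' hd hs0,
    centredDelta_joukowski p k d h2' hd ht0,
    joukowski_eq_iff h2' (pow_ne_zero d hs0) (pow_ne_zero d ht0)] at h
  have key : ∀ x : AlgebraicClosure F, x ^ (p ^ n + 1) = 1 → x ^ d = 1 → x = 1 := by
    intro x h1 h3
    have g1 : orderOf x ∣ d := orderOf_dvd_of_pow_eq_one h3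
    have g2 : orderOf x ∣ 2 := dvd_two_of_dvd_pow_add_one hn hk
      (orderOf_dvd_of_pow_eq_one h1) (g1.trans ⟨2, by rw [← hd, mul_comm]⟩)
    have g3 : orderOf x ∣ Nat.gcd d 2 := Nat.dvd_gcd g1 g2
    rw [Nat.coprime_two_right.2 hdodd, Nat.dvd_one, orderOf_eq_one_iff] at g3
    exact g3
  apply (algebraMap F (AlgebraicClosure F)).injective
  rw [← hs, ← ht, joukowski_eq_iff h2' hs0 ht0]
  rcases h with h | h
  · left
    have := key (s * t⁻¹) (by rw [mul_pow, inv_pow, hsq, htq]; simp)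
      (by rw [mul_pow, inv_pow, h]; exact mul_inv_cancel₀ (pow_ne_zero d ht0))
    exact eq_of_div_eq_one ((div_eq_mul_inv s t).trans this)
  · right
    have := key (s * t) (by rw [mul_pow, hsq, htq]; simp)
      (by rw [mul_pow, h]; exact inv_mul_cancel₀ (pow_ne_zero d ht0))
    exact eq_inv_of_mul_eq_one_left this

/-- Off the image of `joukowski`, `centredDelta` is a permutation, and no point of that image is
mapped out of it; so an element off the image has exactly one preimage. -/
theorem existsUnique_centredDelta (hp2 : p ≠ 2) (hF : Fintype.card F = p ^ n) (h2 : (2 : F) ≠ 0)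
    (hn : Even n) (hk : Odd k) (hd : 2 * d = p ^ k + 1) (hdodd : Odd d) {b : F}
    (hb : ∀ s : F, s ≠ 0 → joukowski s ≠ b) : ∃! z : F, centredDelta d z = b := by
  have hinj : Function.Injective
      (fun z : {z : F // ∀ s : F, s ≠ 0 → joukowski s ≠ z} =>
        (⟨centredDelta d z.1, centredDelta_not_split hp2 hF h2 hn hk hd z.2⟩ :
          {z : F // ∀ s : F, s ≠ 0 → joukowski s ≠ z})) := by
    intro z z' h
    exact Subtype.ext (centredDelta_inj_not_split hp2 hF h2 hn hk hd hdodd z.2 z'.2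
      (congrArg Subtype.val h))
  obtain ⟨z, hz⟩ := Finite.injective_iff_surjective.1 hinj ⟨b, hb⟩
  have hzb : centredDelta d z.1 = b := congrArg Subtype.val hz
  refine ⟨z.1, hzb, fun y hy => ?_⟩
  refine centredDelta_inj_not_split hp2 hF h2 hn hk hd hdodd ?_ z.2 (hy.trans hzb.symm)
  rintro s hs rfl
  refine hb (s ^ d) (pow_ne_zero d hs) ?_
  rw [← hy, centredDelta_joukowski p k d h2 hd hs]

end Nonsplit

/-! ### Fibres over elements of the form `(w + w⁻¹) / 2` -/

section Split

variable {F : Type*} [Field F] [Fintype F]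

omit [Fintype F] in
open scoped Classical in
/-- `joukowski` is two-to-one on a set of units stable under inversion and avoiding `±1`. -/
theorem two_mul_card_image_joukowski (h2 : (2 : F) ≠ 0) (S : Finset Fˣ)
    (hinv : ∀ u ∈ S, u⁻¹ ∈ S) (hne : ∀ u ∈ S, u ≠ u⁻¹) :
    2 * (S.image fun u : Fˣ => joukowski (u : F)).card = S.card := by
  rw [Finset.card_eq_sum_card_image (fun u : Fˣ => joukowski (u : F)) S, mul_comm]
  symm
  apply Finset.sum_const_nat
  intro b hb
  obtain ⟨s, hs, rfl⟩ := Finset.mem_image.1 hb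
  have : (S.filter fun a : Fˣ => joukowski (a : F) = joukowski (s : F)) = {s, s⁻¹} := by
    ext a
    simp only [Finset.mem_filter, Finset.mem_insert, Finset.mem_singleton,
      joukowski_eq_iff h2 a.ne_zero s.ne_zero, ← Units.val_inv_eq_inv_val, Units.val_inj]
    constructor
    · exact fun h => h.2
    · rintro (rfl | rfl)
      · exact ⟨hs, Or.inl rfl⟩
      · exact ⟨hinv _ hs, Or.inr rfl⟩
  rw [this, Finset.card_pair (hne s hs)]

open scoped Classical in
theorem cdelta_eq_card_centredDelta (h2 : (2 : F) ≠ 0) (d : ℕ) (b : F) :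
    cdelta F d (-1) b = (univ.filter fun z : F => centredDelta d z = b).card := by
  rw [cdelta, ← Fintype.card_subtype, ← Nat.card_eq_fintype_card]
  refine Nat.card_congr ⟨fun x => ⟨2 * x.1 + 1, ?_⟩, fun z => ⟨(z.1 - 1) / 2, z.2⟩, ?_, ?_⟩
  · rw [centredDelta, show (2 * x.1 + 1 - 1) / 2 = x.1 by field_simp; ring]
    exact x.2
  · intro x
    apply Subtype.ext
    simp [h2]
  · intro z
    apply Subtype.ext
    simp only
    field_simp
    ring

omit [Fintype F] in
theorem centredDelta_neg {d : ℕ} (h2 : (2 : F) ≠ 0) (hd : Odd d) (z : F) :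
    centredDelta d (-z) = -centredDelta d z := by
  rw [centredDelta, centredDelta, show (-z - 1) / 2 + 1 = -((z - 1) / 2) by field_simp; ring,
    show (-z - 1) / 2 = -((z - 1) / 2 + 1) by field_simp; ring, hd.neg_pow, hd.neg_pow]
  ring

theorem cdelta_neg {d : ℕ} (h2 : (2 : F) ≠ 0) (hd : Odd d) (b : F) :
    cdelta F d (-1) (-b) = cdelta F d (-1) b := by
  classical
  rw [cdelta_eq_card_centredDelta h2, cdelta_eq_card_centredDelta h2]
  refine Finset.card_equiv (Equiv.neg F) fun z => ?_
  simp [centredDelta_neg h2 hd, neg_eq_iff_eq_neg]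

variable {p n k d : ℕ} [Fact p.Prime] [CharP F p]

theorem cdelta_of_not_split (hp2 : p ≠ 2) (hF : Fintype.card F = p ^ n) (h2 : (2 : F) ≠ 0)
    (hn : Even n) (hk : Odd k) (hd : 2 * d = p ^ k + 1) (hdodd : Odd d) {b : F}
    (hb : ∀ s : F, s ≠ 0 → joukowski s ≠ b) : cdelta F d (-1) b = 1 := by
  classical
  rw [cdelta_eq_card_centredDelta h2, Finset.card_eq_one]
  obtain ⟨z, hz, hu⟩ := existsUnique_centredDelta hp2 hF h2 hn hk hd hdodd hb
  refine ⟨z, Finset.ext fun y => ?_⟩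
  simp only [Finset.mem_filter, Finset.mem_univ, true_and, Finset.mem_singleton]
  exact ⟨hu y, fun h => h ▸ hz⟩

open scoped Classical in
/-- The preimages of `joukowski w` are the `joukowski u` with `u ^ d = w`; the units with
`u ^ d = w⁻¹` give the same points, by inversion. -/
theorem cdelta_joukowski (hp2 : p ≠ 2) (hF : Fintype.card F = p ^ n) (h2 : (2 : F) ≠ 0)
    (hn : Even n) (hk : Odd k) (hd : 2 * d = p ^ k + 1) (w : Fˣ) :
    cdelta F d (-1) (joukowski (w : F)) =
      ((univ.filter fun u : Fˣ => u ^ d = w).image fun u : Fˣ => joukowski (u : F)).card := by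
  rw [cdelta_eq_card_centredDelta h2]
  congr 1
  ext z
  simp only [Finset.mem_filter, Finset.mem_univ, true_and, Finset.mem_image]
  constructor
  · intro h
    have : ∃ s : F, s ≠ 0 ∧ joukowski s = z := by
      by_contra! hz
      exact centredDelta_not_split hp2 hF h2 hn hk hd hz w w.ne_zero h.symm
    obtain ⟨s, hs, rfl⟩ := this
    rw [centredDelta_joukowski p k d h2 hd hs,
      joukowski_eq_iff h2 (pow_ne_zero d hs) w.ne_zero] at h
    rcases h with h | h
    · exact ⟨Units.mk0 s hs, Units.ext (by simpa using h), rfl⟩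
    · refine ⟨(Units.mk0 s hs)⁻¹, Units.ext ?_, ?_⟩
      · simp [h]
      · simp [joukowski_inv]
  · rintro ⟨u, rfl, rfl⟩
    rw [centredDelta_joukowski p k d h2 hd u.ne_zero, Units.val_pow_eq_pow_val]

omit [Fact p.Prime] [CharP F p] in
open scoped Classical in
theorem card_units_pow_eq_one {e : ℕ} (he : Nat.gcd (p ^ n - 1) d = e)
    (hF : Fintype.card F = p ^ n) : (univ.filter fun u : Fˣ => u ^ d = 1).card = e := by
  have h := IsCyclic.card_powMonoidHom_ker Fˣ d
  rw [Nat.card_eq_fintype_card (α := Fˣ), Fintype.card_units, hF, he] at h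
  rw [← h, ← Fintype.card_subtype, ← Nat.card_eq_fintype_card]
  exact Nat.card_congr (Equiv.refl _)

omit [Fact p.Prime] [CharP F p] in
open scoped Classical in
theorem card_units_pow {e : ℕ} (he : Nat.gcd (p ^ n - 1) d = e)
    (hF : Fintype.card F = p ^ n) :
    (univ.filter fun w : Fˣ => ∃ u : Fˣ, u ^ d = w).card = (p ^ n - 1) / e := by
  have h := IsCyclic.card_powMonoidHom_range Fˣ d
  rw [Nat.card_eq_fintype_card (α := Fˣ), Fintype.card_units, hF, he] at h
  rw [← h, ← Fintype.card_subtype, ← Nat.card_eq_fintype_card]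
  exact Nat.card_congr (Equiv.refl _)

theorem cdelta_of_not_pow (hp2 : p ≠ 2) (hF : Fintype.card F = p ^ n) (h2 : (2 : F) ≠ 0)
    (hn : Even n) (hk : Odd k) (hd : 2 * d = p ^ k + 1) {w : Fˣ} (hw : ¬ ∃ u : Fˣ, u ^ d = w) :
    cdelta F d (-1) (joukowski (w : F)) = 0 := by
  classical
  rw [cdelta_joukowski hp2 hF h2 hn hk hd, Finset.card_eq_zero, Finset.image_eq_empty,
    Finset.filter_eq_empty_iff]
  exact fun u _ hu => hw ⟨u, hu⟩

theorem cdelta_of_pow (hp2 : p ≠ 2) (hF : Fintype.card F = p ^ n) (h2 : (2 : F) ≠ 0)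
    (hn : Even n) (hk : Odd k) (hd : 2 * d = p ^ k + 1) {e : ℕ}
    (he : Nat.gcd (p ^ n - 1) d = e) {w : Fˣ} (hw : ∃ u : Fˣ, u ^ d = w) (hne : w ≠ w⁻¹) :
    cdelta F d (-1) (joukowski (w : F)) = e := by
  classical
  obtain ⟨v, hv⟩ := hw
  rw [cdelta_joukowski hp2 hF h2 hn hk hd, Finset.card_image_of_injOn,
    ← card_units_pow_eq_one (F := F) he hF]
  · refine Finset.card_equiv (Equiv.mulRight v⁻¹) fun u => ?_
    simp [mul_pow, hv, mul_inv_eq_one]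
  · intro u hu t ht hut
    simp only [Finset.coe_filter, Finset.mem_univ, true_and, Set.mem_ofPred_eq] at hu ht
    simp only [joukowski_eq_iff h2 u.ne_zero t.ne_zero, ← Units.val_inv_eq_inv_val,
      Units.val_inj] at hut
    rcases hut with h | h
    · exact h
    · refine absurd ?_ hne
      rw [← ht, ← inv_pow, ← h, hu, ht]

/-- Over `1 = joukowski 1`, the `2 * r + 1` solutions of `u ^ d = 1` are identified in pairs
`{u, u⁻¹}`, apart from `u = 1`. -/
theorem cdelta_one (hp2 : p ≠ 2) (hF : Fintype.card F = p ^ n) (h2 : (2 : F) ≠ 0)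
    (hn : Even n) (hk : Odd k) (hd : 2 * d = p ^ k + 1) (hdodd : Odd d) {r : ℕ}
    (he : Nat.gcd (p ^ n - 1) d = 2 * r + 1) :
    cdelta F d (-1) (1 : F) = r + 1 := by
  classical
  have h1 : joukowski ((1 : Fˣ) : F) = 1 := by
    simp only [joukowski, Units.val_one, inv_one]
    field_simp
    ring
  have hfib := cdelta_joukowski hp2 hF h2 hn hk hd (1 : Fˣ)
  rw [h1] at hfib
  rw [hfib]
  have hmem : (1 : Fˣ) ∈ univ.filter fun u : Fˣ => u ^ d = 1 := by simp
  have hS := two_mul_card_image_joukowski h2 ((univ.filter fun u : Fˣ => u ^ d = 1).erase 1)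
    (by simp) (by
      intro u hu h
      simp only [Finset.mem_erase, Finset.mem_filter, Finset.mem_univ, true_and] at hu
      have hu2 : u ^ 2 = 1 := by
        rw [pow_two]
        nth_rw 2 [h]
        exact mul_inv_cancel u
      have := Nat.dvd_gcd (orderOf_dvd_of_pow_eq_one hu.2) (orderOf_dvd_of_pow_eq_one hu2)
      rw [Nat.coprime_two_right.2 hdodd, Nat.dvd_one, orderOf_eq_one_iff] at this
      exact hu.1 this)
  rw [Finset.card_erase_of_mem hmem, card_units_pow_eq_one he hF] at hS
  rw [← Finset.insert_erase hmem, Finset.image_insert, Finset.card_insert_of_notMem]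
  · omega
  · simp only [Finset.mem_image, Finset.mem_erase, not_exists, not_and]
    rintro u ⟨hu, -⟩ h
    simp only [joukowski_eq_iff h2 u.ne_zero (1 : Fˣ).ne_zero, ← Units.val_inv_eq_inv_val,
      Units.val_inj, inv_one, or_self] at h
    exact hu h

end Split

/-! ### The spectrum -/

theorem stmt_16 (p n k : ℕ) (hp : p.Prime) (hp4 : p % 4 = 1)
    (hn : 1 ≤ n) (hk : 1 ≤ k) (hgcd : Nat.gcd n k = 1)
    (heven : Even (2 * n / Nat.gcd (2 * n) k)) (hneven : Even n)
    (F : Type*) [Field F] [Fintype F] (hF : Fintype.card F = p ^ n) :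
    comega F ((p ^ k + 1) / 2) (-1 : F) 0 = (p ^ n - 1) * (p - 1) / (2 * (p + 1)) ∧
    comega F ((p ^ k + 1) / 2) (-1 : F) 1 = (p ^ n - 1) / 2 ∧
    comega F ((p ^ k + 1) / 2) (-1 : F) ((p + 3) / 4) = 2 ∧
    comega F ((p ^ k + 1) / 2) (-1 : F) ((p + 1) / 2) = (p ^ n - p - 2) / (p + 1) ∧
    ∀ i, i ≠ 0 → i ≠ 1 → i ≠ (p + 3) / 4 → i ≠ (p + 1) / 2 →
      comega F ((p ^ k + 1) / 2) (-1 : F) i = 0 := by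
  classical
  have : Fact p.Prime := ⟨hp⟩
  have : CharP F p := charP_of_card_eq_prime_pow hF
  have hp2 : p ≠ 2 := by omega
  have hp1 : 1 < p := hp.one_lt
  have h2 : (2 : F) ≠ 0 := Ring.two_ne_zero (by rwa [ringChar.eq F p])
  have hkodd : Odd k := by
    by_contra h
    rw [Nat.not_odd_iff_even] at h
    have := Nat.dvd_gcd hneven.two_dvd h.two_dvd
    rw [hgcd] at this
    omega
  have hpk : p ^ k % 4 = 1 := by rw [Nat.pow_mod, hp4]; simp
  have hgcd' := p_add_one_half_gcd (k := k) hp4 hgcd hneven hp1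
  obtain ⟨d, hd⟩ : ∃ d, (p ^ k + 1) / 2 = d := ⟨_, rfl⟩
  have hd2 : 2 * d = p ^ k + 1 := by omega
  have hdodd : Odd d := Nat.odd_iff.2 (by omega)
  obtain ⟨r, hr⟩ : ∃ r, p = 4 * r + 1 := ⟨p / 4, by omega⟩
  have hr1 : 1 ≤ r := by omega
  rw [hd] at hgcd' ⊢
  have e1 : (p + 1) / 2 = 2 * r + 1 := by omega
  have e2 : (p + 3) / 4 = r + 1 := by omega
  rw [e1] at hgcd' ⊢
  rw [e2]
  -- `q - 1 = 2 * (2 * r + 1) * M = (p + 1) * M`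
  have hqpos : 0 < p ^ n := by positivity
  obtain ⟨M, hM⟩ : ∃ M, p ^ n = 2 * ((2 * r + 1) * M) + 1 := by
    have ha : 2 * r + 1 ∣ p ^ n - 1 := hgcd' ▸ Nat.gcd_dvd_left _ _
    have hb : 2 ∣ p ^ n - 1 := by
      have : p ^ n % 4 = 1 := by rw [Nat.pow_mod, hp4]; simp
      omega
    obtain ⟨M, hM⟩ := Nat.Coprime.mul_dvd_of_dvd_of_dvd (by simp) hb ha
    exact ⟨M, by rw [mul_assoc] at hM; omega⟩
  have hq1 : p ^ n - 1 = 2 * ((2 * r + 1) * M) := by omega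
  have hself : ∀ u : Fˣ, u = u⁻¹ ↔ u = 1 ∨ u = -1 := by
    intro u
    rw [eq_inv_iff_mul_eq_one, ← Units.val_inj, ← Units.val_inj, ← Units.val_inj, Units.val_mul,
      Units.val_neg, Units.val_one, mul_self_eq_one_iff]
  have hone : (1 : Fˣ) ≠ -1 := by
    intro h
    have := congrArg (Units.val) h
    rw [Units.val_neg, Units.val_one] at this
    exact h2 (by linear_combination this)
  have hj1 : joukowski (1 : F) = 1 := by
    simp only [joukowski, inv_one]
    field_simp
    ring
  have hjn1 : joukowski (-1 : F) = -1 := by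
    simp only [joukowski, inv_neg, inv_one]
    field_simp
    ring
  let P : Finset Fˣ := univ.filter fun w : Fˣ => ∃ u : Fˣ, u ^ d = w
  have hPcard : P.card = 2 * M := by
    rw [card_units_pow hgcd' hF, hq1]
    apply Nat.div_eq_of_eq_mul_right (by omega)
    ring
  let S₁ : Finset Fˣ := P \ {1, -1}
  let S₂ : Finset Fˣ := Pᶜ
  let J : Finset Fˣ → Finset F := fun S => S.image fun u : Fˣ => joukowski (u : F)
  have hsub : ({1, -1} : Finset Fˣ) ⊆ P := by
    intro u hu
    simp only [Finset.mem_insert, Finset.mem_singleton] at hu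
    simp only [P, Finset.mem_filter, Finset.mem_univ, true_and]
    rcases hu with rfl | rfl
    · exact ⟨1, one_pow d⟩
    · exact ⟨-1, hdodd.neg_one_pow⟩
  have hPinv : ∀ u, u⁻¹ ∈ P ↔ u ∈ P := by
    have key : ∀ u, u ∈ P → u⁻¹ ∈ P := by
      intro u hu
      simp only [P, Finset.mem_filter, Finset.mem_univ, true_and] at hu ⊢
      obtain ⟨v, rfl⟩ := hu
      exact ⟨v⁻¹, inv_pow v d⟩
    exact fun u => ⟨fun h => inv_inv u ▸ key _ h, key u⟩
  have hc₁ : 2 * (J S₁).card = 2 * M - 2 := by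
    have := two_mul_card_image_joukowski h2 S₁
      (by
        intro u hu
        simp only [S₁, Finset.mem_sdiff, Finset.mem_insert, Finset.mem_singleton, ← hself,
          hPinv, inv_inv] at hu ⊢
        exact ⟨hu.1, fun h => hu.2 h.symm⟩)
      (by
        intro u hu
        simp only [S₁, Finset.mem_sdiff, Finset.mem_insert, Finset.mem_singleton, ← hself] at hu
        exact hu.2)
    rw [this, Finset.card_sdiff_of_subset hsub, hPcard, Finset.card_pair hone]
  have hc₂ : (J S₂).card = 2 * (r * M) := by
    have := two_mul_card_image_joukowski h2 S₂
      (by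
        intro u hu
        simpa only [S₂, Finset.mem_compl, hPinv] using hu)
      (by
        intro u hu h
        have hu' : u ∉ P := by simpa [S₂] using hu
        exact hu' (hsub (by simpa [hself] using h)))
    rw [Finset.card_compl, hPcard, Fintype.card_units, hF, hq1] at this
    have h3 : 2 * ((2 * r + 1) * M) = 4 * (r * M) + 2 * M := by ring
    simp only [J]
    omega
  -- the value of `cdelta` on each of the four classes of `b`
  have v₁ : ∀ b ∈ J S₁, cdelta F d (-1) b = 2 * r + 1 := by
    intro b hb
    obtain ⟨w, hw, rfl⟩ := Finset.mem_image.1 hb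
    simp only [S₁, P, Finset.mem_sdiff, Finset.mem_insert, Finset.mem_singleton, ← hself,
      Finset.mem_filter, Finset.mem_univ, true_and] at hw
    exact cdelta_of_pow hp2 hF h2 hneven hkodd hd2 hgcd' hw.1 hw.2
  have v₂ : ∀ b ∈ J S₂, cdelta F d (-1) b = 0 := by
    intro b hb
    obtain ⟨w, hw, rfl⟩ := Finset.mem_image.1 hb
    simp only [S₂, P, Finset.mem_compl, Finset.mem_filter, Finset.mem_univ, true_and] at hw
    exact cdelta_of_not_pow hp2 hF h2 hneven hkodd hd2 hw
  have v₃ : ∀ b ∈ ({1, -1} : Finset F), cdelta F d (-1) b = r + 1 := by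
    intro b hb
    have h1 := cdelta_one hp2 hF h2 hneven hkodd hd2 hdodd hgcd'
    simp only [Finset.mem_insert, Finset.mem_singleton] at hb
    rcases hb with rfl | rfl
    · exact h1
    · rw [cdelta_neg h2 hdodd, h1]
  have cover : ∀ b : F, b ∈ J S₁ ∨ b ∈ J S₂ ∨ b ∈ ({1, -1} : Finset F) ∨
      cdelta F d (-1) b = 1 := by
    intro b
    by_cases hb : ∃ s : F, s ≠ 0 ∧ joukowski s = b
    · obtain ⟨s, hs, rfl⟩ := hb
      obtain ⟨u, rfl⟩ : ∃ u : Fˣ, (u : F) = s := ⟨Units.mk0 s hs, rfl⟩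
      by_cases hP : u ∈ P
      · by_cases h1 : u = 1 ∨ u = -1
        · right; right; left
          rcases h1 with rfl | rfl
          · simp [hj1]
          · simp [hjn1]
        · left
          exact Finset.mem_image.2 ⟨u, by simp [S₁, hP, h1], rfl⟩
      · right; left
        exact Finset.mem_image.2 ⟨u, by simpa [S₂] using hP, rfl⟩
    · push Not at hb
      exact Or.inr (Or.inr (Or.inr (cdelta_of_not_split hp2 hF h2 hneven hkodd hd2 hdodd hb)))
  have hω : ∀ i, comega F d (-1) i = (univ.filter fun b : F => cdelta F d (-1) b = i).card := by
    intro i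
    rw [comega, ← Fintype.card_subtype, ← Nat.card_eq_fintype_card]
  have ω₁ : comega F d (-1) (2 * r + 1) = (J S₁).card := by
    rw [hω]
    congr 1
    ext b
    simp only [Finset.mem_filter, Finset.mem_univ, true_and]
    refine ⟨fun h => ?_, v₁ b⟩
    rcases cover b with hb | hb | hb | hb
    · exact hb
    · have := v₂ b hb; omega
    · have := v₃ b hb; omega
    · omega
  have ω₂ : comega F d (-1) 0 = (J S₂).card := by
    rw [hω]
    congr 1
    ext b
    simp only [Finset.mem_filter, Finset.mem_univ, true_and]
    refine ⟨fun h => ?_, v₂ b⟩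
    rcases cover b with hb | hb | hb | hb
    · have := v₁ b hb; omega
    · exact hb
    · have := v₃ b hb; omega
    · omega
  have ω₃ : comega F d (-1) (r + 1) = 2 := by
    have hne : (1 : F) ≠ -1 := fun h => hone (Units.ext (by simpa using h))
    rw [hω, ← Finset.card_pair hne]
    congr 1
    ext b
    constructor
    · intro h
      simp only [Finset.mem_filter, Finset.mem_univ, true_and] at h
      rcases cover b with hb | hb | hb | hb
      · have := v₁ b hb; omega
      · have := v₂ b hb; omega
      · exact hb
      · omega
    · intro h
      simpa using v₃ b h
  have values : ∀ b : F, cdelta F d (-1) b ∈ ({0, 1, r + 1, 2 * r + 1} : Finset ℕ) := by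
    intro b
    rcases cover b with hb | hb | hb | hb
    · simp [v₁ b hb]
    · simp [v₂ b hb]
    · simp [v₃ b hb]
    · simp [hb]
  have total : p ^ n = comega F d (-1) 0 + (comega F d (-1) 1 + (comega F d (-1) (r + 1) +
      comega F d (-1) (2 * r + 1))) := by
    have h := Finset.card_eq_sum_card_fiberwise (s := (univ : Finset F))
      (f := fun b => cdelta F d (-1) b) (t := {0, 1, r + 1, 2 * r + 1}) (fun b _ => values b)
    rw [Finset.card_univ, hF, Finset.sum_insert (by simp), Finset.sum_insert (by simp; omega),
      Finset.sum_insert (by simp; omega), Finset.sum_singleton] at h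
    simpa only [hω] using h
  have hMpos : 1 ≤ M := by
    have : 2 ≤ P.card := by
      rw [← Finset.card_pair hone]
      exact Finset.card_le_card hsub
    omega
  have expand : (2 * r + 1) * M = 2 * (r * M) + M := by ring
  refine ⟨?_, ?_, ω₃, ?_, ?_⟩
  · rw [ω₂, hc₂, hq1, hr]
    symm
    apply Nat.div_eq_of_eq_mul_right (by omega)
    rw [Nat.add_sub_cancel]
    ring
  · omega
  · rw [ω₁]
    symm
    apply Nat.div_eq_of_eq_mul_right (by omega)
    obtain ⟨m, rfl⟩ : ∃ m, M = m + 1 := ⟨M - 1, by omega⟩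
    rw [show (J S₁).card = m by omega, hM, hr, Nat.sub_sub]
    apply Nat.sub_eq_of_eq_add
    ring
  · intro i h0 h1 h3 h4
    rw [hω, Finset.card_eq_zero, Finset.filter_eq_empty_iff]
    intro b _ hb
    have := values b
    simp only [hb, Finset.mem_insert, Finset.mem_singleton] at this
    omega
end

section
/- Let p be a prime with p > 7 and p ≡ 3 (mod 4), and let n, k be positive integers with gcd(n, k) = 1 and 2n/gcd(2n, k) even. Let F(x) = x^{(p^k + 1)/2} be a power function over GF(p^n). If n is odd, then the (−1)-differential spectrum of F is ω_0 = (p^n(3p − 1) − (p + 5))/(4(p + 1)), ω_2 = (p^n − 3)/4, ω_{(p+1)/4} = 1, ω_{(p+5)/4} = 1, ω_{(p+1)/2} = (p^n − p)/(p + 1), and ω_i = 0 for all other i. If n is even, then the (−1)-differential spectrum of F is ω_0 = (p^n − 1)(3p − 1)/(4(p + 1)), ω_2 = (p^n − 1)/4, ω_{(p+1)/4} = 1, ω_{(p+5)/4} = 1, ω_{(p+1)/2} = (p^n − p − 2)/(p + 1), and ω_i = 0 for all other i. -/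
open Finset

/-!
The condition that `2 * n / gcd (2 * n) k` is even, together with `gcd n k = 1`, says that `k` is
odd. Put `q = p ^ n`, `d = (p ^ k + 1) / 2` and `e = (p + 1) / 2`, so `e` is even and `d` is an odd
multiple of `e`.

Write `4 * x + 2 = w + w⁻¹` with `w` in an algebraic closure `K` of `F`. The identity
`dickson_identity` turns `2 * ((x + 1) ^ d + x ^ d)` into `w ^ d + w⁻¹ ^ d`: up to affine changes of
variable on both sides, `Δ_{-1}` is the Dickson polynomial `w + w⁻¹ ↦ w ^ d + w⁻¹ ^ d`. By
`frobenius_fixed_iff`, `w + w⁻¹` lies in `F` exactly when `w` is in `μ_{q-1} ∪ μ_{q+1}`. Hence the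
preimage sizes can be read off from the `d`-th power maps on these two cyclic groups, whose
intersection is `{±1}`, after identifying `w` with `w⁻¹` (`half_count`).

One of the groups, `μ_{N₁}`, has `gcd N₁ d = 2` and `N₁ = 2 * M₁` with `M₁` odd; the other has
`gcd N₂ d = e` and `N₂ = e * M₂` with `M₂` even. Here `N₁ = q - 1` for odd `n` and `N₁ = q + 1` for
even `n`. For `v ≠ ±1` the value `b = (v + v⁻¹) / 2` has `2` preimages if `v ∈ μ_{M₁}`, `e` if
`v ∈ μ_{M₂}`, and none otherwise. The value `b = 1` comes from `w ∈ μ_e` and has `e / 2 + 1`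
preimages; `b = -1` has `e / 2`, all from `μ_{N₂}` (`DicksonData.classify`). Counting the `b` of
each kind gives `ω_2 = (M₁ - 1) / 2` and `ω_e = (M₂ - 2) / 2`, and `ω_0` follows because the
`ω_i` sum to `q`.
-/

/-! ### Roots of unity and the map `w ↦ w + w⁻¹` -/

/-- The group of `N`-th roots of unity has exactly `N` elements when `N` is invertible. -/
lemma card_mu {K : Type*} [Field K] [IsAlgClosed K] {N : ℕ} (hN : (N : K) ≠ 0) :
    #(Polynomial.nthRootsFinset N (1 : K)) = N := by
  have : NeZero (N : K) := ⟨hN⟩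
  obtain ⟨ζ, hζ⟩ := HasEnoughRootsOfUnity.exists_primitiveRoot K N
  exact hζ.card_nthRootsFinset

/-- The `d`-th power map on the group `μ_N` of `N`-th roots of unity: every element of its image
`μ_{N / gcd N d}` has exactly `gcd N d` preimages. -/
lemma card_pow_fiber_s17 {K : Type*} [Field K] [IsAlgClosed K] [DecidableEq K] {N g M d : ℕ}
    (hN : (N : K) ≠ 0) (hg : Nat.gcd N d = g) (hM : N = g * M) {v : K} (hv : v ^ M = 1) :
    #{w ∈ Polynomial.nthRootsFinset N (1 : K) | w ^ d = v} = g := by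
  have hN0 : 0 < N := Nat.pos_of_ne_zero (by rintro rfl; simp at hN)
  have hg0 : 0 < g := hg ▸ Nat.gcd_pos_of_pos_left d hN0
  have hgK : (g : K) ≠ 0 := by
    intro h; apply hN; rw [hM]; push_cast; rw [h, zero_mul]
  have hM0 : M ≠ 0 := by rintro rfl; simp at hM; omega
  have hv0 : v ≠ 0 := by rintro rfl; rw [zero_pow hM0] at hv; exact zero_ne_one hv
  -- a solution: take a `g`-th root `u` of `v` and use a Bezout relation `g = N * s + d * t`
  obtain ⟨u, hu⟩ := IsAlgClosed.exists_pow_nat_eq v hg0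
  have hu0 : u ≠ 0 := by rintro rfl; rw [zero_pow hg0.ne'] at hu; exact hv0 hu.symm
  have huN : u ^ N = 1 := by rw [hM, pow_mul, hu, hv]
  obtain ⟨w₀, hw₀N, hw₀d⟩ : ∃ w : K, w ^ N = 1 ∧ w ^ d = v := by
    refine ⟨u ^ (Nat.gcdB N d), ?_, ?_⟩
    · rw [← zpow_natCast, zpow_comm, zpow_natCast, huN, one_zpow]
    · have h := Nat.gcd_eq_gcd_ab N d
      have e : (Nat.gcdB N d) * (d : ℤ) = g - N * Nat.gcdA N d := by rw [← hg, h]; ring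
      rw [← zpow_natCast, ← zpow_mul, e, zpow_sub₀ hu0, zpow_mul, zpow_natCast, zpow_natCast,
        huN, one_zpow, div_one, hu]
  have hw₀ : w₀ ≠ 0 := by rintro rfl; rw [zero_pow hN0.ne'] at hw₀N; exact zero_ne_one hw₀N
  rw [← card_mu hgK]
  -- the solutions form the coset `w₀ * μ_g`
  refine Finset.card_bij' (fun w _ => w / w₀) (fun w _ => w * w₀) ?_ ?_ ?_ ?_
  · intro w hw
    rw [mem_filter, Polynomial.mem_nthRootsFinset hN0] at hw
    rw [Polynomial.mem_nthRootsFinset hg0, ← hg]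
    exact pow_gcd_eq_one.2 ⟨by rw [div_pow, hw.1, hw₀N, div_one],
      by rw [div_pow, hw.2, hw₀d, div_self hv0]⟩
  · intro w hw
    rw [Polynomial.mem_nthRootsFinset hg0] at hw
    rw [mem_filter, Polynomial.mem_nthRootsFinset hN0]
    have h1 : w ^ N = 1 := by rw [hM, pow_mul, hw, one_pow]
    have h2 : w ^ d = 1 := by
      obtain ⟨c, hc⟩ := hg ▸ Nat.gcd_dvd_right N d
      rw [hc, pow_mul, hw, one_pow]
    exact ⟨by rw [mul_pow, h1, hw₀N, one_mul], by rw [mul_pow, h2, hw₀d, one_mul]⟩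
  · intro w _; exact div_mul_cancel₀ w hw₀
  · intro w _; exact mul_div_cancel_right₀ w hw₀

lemma add_inv_eq_iff {K : Type*} [Field K] {a b : K} (ha : a ≠ 0) (hb : b ≠ 0) :
    a + a⁻¹ = b + b⁻¹ ↔ a = b ∨ a = b⁻¹ := by
  constructor
  · intro h
    have : (a - b) * (a - b⁻¹) = 0 := by
      field_simp at h ⊢
      linear_combination h
    rcases mul_eq_zero.1 this with h | h
    · exact Or.inl (sub_eq_zero.1 h)
    · exact Or.inr (sub_eq_zero.1 h)
  · rintro (rfl | rfl)
    · rfl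
    · rw [inv_inv, add_comm]

/-- The map `w ↦ w + w⁻¹` identifies exactly `w` with `w⁻¹`, so it is two-to-one away from `±1`. -/
lemma half_count {K : Type*} [Field K] [DecidableEq K] (T : Finset K)
    (h0 : ∀ w ∈ T, w ≠ 0) (hinv : ∀ w ∈ T, w⁻¹ ∈ T) :
    2 * #(T.image fun w => w + w⁻¹) = #T + #{w ∈ T | w = 1 ∨ w = -1} := by
  have h1 := card_eq_sum_card_image (fun w : K => w + w⁻¹) T
  have h2 : #{w ∈ T | w = 1 ∨ w = -1} =
      ∑ b ∈ T.image (fun w : K => w + w⁻¹), #{a ∈ {w ∈ T | w = 1 ∨ w = -1} | a + a⁻¹ = b} :=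
    card_eq_sum_card_fiberwise fun w hw =>
      mem_coe.2 (mem_image_of_mem _ (mem_filter.1 (mem_coe.1 hw)).1)
  rw [h1, h2, ← sum_add_distrib, mul_comm, ← smul_eq_mul, ← sum_const]
  refine sum_congr rfl fun b hb => ?_
  obtain ⟨w, hw, rfl⟩ := mem_image.1 hb
  have hfib : {a ∈ T | a + a⁻¹ = w + w⁻¹} = ({w, w⁻¹} : Finset K) := by
    ext a
    simp only [mem_filter, mem_insert, mem_singleton]
    constructor
    · rintro ⟨ha, h⟩; exact (add_inv_eq_iff (h0 a ha) (h0 w hw)).1 h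
    · rintro (rfl | rfl)
      · exact ⟨hw, rfl⟩
      · exact ⟨hinv w hw, by rw [inv_inv, add_comm]⟩
  have hcomm : {a ∈ {w ∈ T | w = 1 ∨ w = -1} | a + a⁻¹ = w + w⁻¹} =
      {a ∈ {a ∈ T | a + a⁻¹ = w + w⁻¹} | a = 1 ∨ a = -1} := by
    simp only [filter_filter, and_comm]
  rw [hcomm, hfib]
  by_cases hs : w = 1 ∨ w = -1
  · have hi : w⁻¹ = w := by rcases hs with rfl | rfl <;> norm_num
    simp [hi, filter_singleton, hs]
  · have hi : w ≠ w⁻¹ := by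
      intro h
      apply hs
      have : w * w = 1 := by nth_rewrite 2 [h]; exact mul_inv_cancel₀ (h0 w hw)
      exact mul_self_eq_one_iff.1 this
    have hs' : ¬ (w⁻¹ = 1 ∨ w⁻¹ = -1) := by
      rwa [inv_eq_one, inv_eq_iff_eq_inv, show (-1 : K)⁻¹ = -1 by norm_num]
    rw [card_pair hi]
    rw [not_or] at hs hs'
    simp [filter_insert, filter_singleton, hs.1, hs.2, hs'.2]

/-! ### Preimage sizes of the Dickson polynomial map -/

/-- The situation to which the problem reduces. After the substitution `w + w⁻¹ = 4 x + 2`, the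
function `2 * ((x + 1) ^ d + x ^ d)` on `F` becomes the Dickson polynomial map
`w + w⁻¹ ↦ w ^ d + w⁻¹ ^ d`, and `F` is parametrised by the union of the groups `μ_{N₁}` and
`μ_{N₂}` of roots of unity in `K` (which are `μ_{q-1}` and `μ_{q+1}` in some order). On `μ_{N₁}` the
`d`-th power map is `2`-to-one with image `μ_{M₁}`; on `μ_{N₂}` it is `e`-to-one with
image `μ_{M₂}`. -/
structure DicksonData (F K : Type*) [Field F] [Field K] [Algebra F K]
    (d e N₁ M₁ N₂ M₂ : ℕ) : Prop where
  dickson : ∀ (x : F) (w : K), w ≠ 0 → w + w⁻¹ = 4 * algebraMap F K x + 2 →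
    2 * algebraMap F K ((x + 1) ^ d + x ^ d) = w ^ d + (w ^ d)⁻¹
  range : ∀ w : K, w ^ N₁ = 1 ∨ w ^ N₂ = 1 → ∃ x : F, algebraMap F K x = w + w⁻¹
  cover : ∀ x : F, ∃ w : K, (w ^ N₁ = 1 ∨ w ^ N₂ = 1) ∧ w + w⁻¹ = algebraMap F K x
  two : (2 : K) ≠ 0
  cast₁ : (N₁ : K) ≠ 0
  cast₂ : (N₂ : K) ≠ 0
  eq₁ : N₁ = 2 * M₁
  eq₂ : N₂ = e * M₂
  odd₁ : Odd M₁
  even₂ : Even M₂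
  gcd₁ : Nat.gcd N₁ d = 2
  gcd₂ : Nat.gcd N₂ d = e
  gcd₁₂ : Nat.gcd N₁ N₂ = 2
  six_le : 6 ≤ e
  even_e : Even e

namespace DicksonData

variable {F K : Type*} [Field F] [Field K] [Algebra F K] {d e N₁ M₁ N₂ M₂ : ℕ}

lemma pos₁ (h : DicksonData F K d e N₁ M₁ N₂ M₂) : 0 < N₁ :=
  Nat.pos_of_ne_zero (by rintro rfl; exact h.cast₁ (by simp))

lemma pos₂ (h : DicksonData F K d e N₁ M₁ N₂ M₂) : 0 < N₂ :=
  Nat.pos_of_ne_zero (by rintro rfl; exact h.cast₂ (by simp))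

lemma posM₁ (h : DicksonData F K d e N₁ M₁ N₂ M₂) : 0 < M₁ := h.odd₁.pos

lemma posM₂ (h : DicksonData F K d e N₁ M₁ N₂ M₂) : 0 < M₂ :=
  Nat.pos_of_ne_zero (by rintro rfl; have := h.pos₂; have := h.eq₂; omega)

lemma even_d (h : DicksonData F K d e N₁ M₁ N₂ M₂) : Even d :=
  even_iff_two_dvd.2 (h.gcd₁ ▸ Nat.gcd_dvd_right N₁ d)

lemma one_ne_neg_one (h : DicksonData F K d e N₁ M₁ N₂ M₂) : (1 : K) ≠ -1 := by
  intro h1; apply h.two; linear_combination h1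

lemma ne_zero (h : DicksonData F K d e N₁ M₁ N₂ M₂) {w : K}
    (hw : w ^ N₁ = 1 ∨ w ^ N₂ = 1) : w ≠ 0 := by
  rintro rfl
  rw [zero_pow h.pos₁.ne', zero_pow h.pos₂.ne'] at hw
  simp at hw

lemma inv_mem {w : K} (hw : w ^ N₁ = 1 ∨ w ^ N₂ = 1) : w⁻¹ ^ N₁ = 1 ∨ w⁻¹ ^ N₂ = 1 := by
  rwa [inv_pow, inv_pow, inv_eq_one, inv_eq_one]

lemma eq_one_or (h : DicksonData F K d e N₁ M₁ N₂ M₂) {w : K}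
    (h1 : w ^ N₁ = 1) (h2 : w ^ N₂ = 1) : w = 1 ∨ w = -1 := by
  have := pow_gcd_eq_one.2 ⟨h1, h2⟩
  rw [h.gcd₁₂] at this
  exact mul_self_eq_one_iff.1 (by rw [← sq, this])

lemma ncard_image_affine (a c : K) (ha : a ≠ 0) (s : Set F) :
    Set.ncard ((fun x : F => a * algebraMap F K x + c) '' s) = s.ncard := by
  refine Set.ncard_image_of_injective _ fun x y hxy => ?_
  exact (algebraMap F K).injective (mul_left_cancel₀ ha (add_right_cancel hxy))

section
variable [DecidableEq K]

/-- The number of preimages `x` of `b` is the number of pairs `{w, w⁻¹}` of roots of unity with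
`w ^ d + w⁻¹ ^ d = 2 * b`, and such pairs are counted by `half_count`. -/
lemma two_mul_cdelta (h : DicksonData F K d e N₁ M₁ N₂ M₂) {b : F} {v : K}
    (hv : v ≠ 0) (hb : v + v⁻¹ = 2 * algebraMap F K b) (T : Finset K)
    (hT : ∀ w, w ∈ T ↔ (w ^ N₁ = 1 ∨ w ^ N₂ = 1) ∧ (w ^ d = v ∨ w ^ d = v⁻¹)) :
    2 * cdelta F d (-1) b = #T + #{w ∈ T | w = 1 ∨ w = -1} := by
  have h4 : (4 : K) ≠ 0 := by
    rw [show (4 : K) = 2 * 2 by norm_num]; exact mul_ne_zero h.two h.two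
  have key (w : K) (hw : w ≠ 0) : (w ^ d = v ∨ w ^ d = v⁻¹) ↔
      w ^ d + (w ^ d)⁻¹ = 2 * algebraMap F K b := by
    rw [← add_inv_eq_iff (pow_ne_zero _ hw) hv, hb]
  rw [← half_count T]
  · congr 1
    rw [cdelta, ← Set.ncard_coe_finset, ← Set.coe_ofPred, Nat.card_coe_set_eq,
      ← ncard_image_affine 4 2 h4]
    congr 1
    ext y
    simp only [Set.mem_image, Set.mem_ofPred_eq, coe_image, mem_coe]
    constructor
    · rintro ⟨x, hx, rfl⟩
      obtain ⟨w, hw, hwx⟩ := h.cover (4 * x + 2)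
      have hwx' : w + w⁻¹ = 4 * algebraMap F K x + 2 := by
        rw [hwx, map_add, map_mul, map_ofNat, map_ofNat]
      refine ⟨w, (hT w).2 ⟨hw, (key w (h.ne_zero hw)).2 ?_⟩, hwx'⟩
      rw [← h.dickson x w (h.ne_zero hw) hwx', ← hx]
      simp
    · rintro ⟨w, hw, rfl⟩
      obtain ⟨hw, hwd⟩ := (hT w).1 hw
      obtain ⟨x, hx⟩ := h.range w hw
      have h4F : (4 : F) ≠ 0 := by
        intro h0; apply h4; rw [← map_ofNat (algebraMap F K) 4, h0, map_zero]
      have hx' : w + w⁻¹ = 4 * algebraMap F K ((x - 2) / 4) + 2 := by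
        rw [← hx, map_div₀, map_sub, map_ofNat, map_ofNat]
        field_simp
        ring
      refine ⟨(x - 2) / 4, ?_, hx'.symm⟩
      have := h.dickson _ w (h.ne_zero hw) hx'
      rw [(key w (h.ne_zero hw)).1 hwd] at this
      have := (algebraMap F K).injective (mul_left_cancel₀ h.two this)
      rw [← this]; ring
  · intro w hw; exact h.ne_zero ((hT w).1 hw).1
  · intro w hw
    obtain ⟨h1, h2⟩ := (hT w).1 hw
    refine (hT _).2 ⟨inv_mem h1, ?_⟩
    rw [inv_pow, inv_inj, inv_eq_iff_eq_inv]
    exact h2.symm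

/-- The values `v + v⁻¹` coming from `v ∈ μ_M`, `v ≠ ±1`. -/
noncomputable def values (K : Type*) [Field K] [DecidableEq K] (M : ℕ) : Finset K :=
  ((Polynomial.nthRootsFinset M (1 : K)).filter fun v => v ≠ 1 ∧ v ≠ -1).image fun v => v + v⁻¹

lemma mem_values {M : ℕ} (hM : 0 < M) {y : K} :
    y ∈ values K M ↔ ∃ v : K, v ^ M = 1 ∧ v ≠ 1 ∧ v ≠ -1 ∧ v + v⁻¹ = y := by
  simp only [values, mem_image, mem_filter, Polynomial.mem_nthRootsFinset hM, and_assoc]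

/-- If the `i`-element fibres are exactly those over the `b` with `2 * b` in `values K M`, then
`ω_i` is the cardinality of `values K M`. -/
lemma comega_eq_card (h : DicksonData F K d e N₁ M₁ N₂ M₂) {M i : ℕ} (hM0 : 0 < M)
    (hsub : ∀ v : K, v ^ M = 1 → v ^ N₁ = 1 ∨ v ^ N₂ = 1)
    (hmem : ∀ b : F, cdelta F d (-1) b = i ↔ 2 * algebraMap F K b ∈ values K M) :
    comega F d (-1) i = #(values K M) := by
  rw [comega, ← Set.coe_ofPred, Nat.card_coe_set_eq, ← ncard_image_affine 2 0 h.two,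
    ← Set.ncard_coe_finset]
  congr 1
  ext y
  simp only [Set.mem_image, Set.mem_ofPred_eq, mem_coe, add_zero, hmem]
  constructor
  · rintro ⟨b, hb, rfl⟩; exact hb
  · intro hy
    obtain ⟨v, hvM, hv1, hv2, rfl⟩ := (mem_values hM0).1 hy
    obtain ⟨x, hx⟩ := h.range v (hsub v hvM)
    have h2F : (2 : F) ≠ 0 := by
      intro h0; apply h.two; rw [← map_ofNat (algebraMap F K) 2, h0, map_zero]
    have hx' : 2 * algebraMap F K (x / 2) = v + v⁻¹ := by
      rw [← hx, map_div₀, map_ofNat, mul_div_cancel₀ _ h.two]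
    exact ⟨x / 2, by rwa [hx'], hx'⟩

variable [IsAlgClosed K]

/-- The generic values `v + v⁻¹` with `v ∈ μ_N`, `v ≠ ±1`, where `N` is one of `N₁`, `N₂`. -/
lemma cdelta_generic (h : DicksonData F K d e N₁ M₁ N₂ M₂) {N N' g M : ℕ}
    (hS : ∀ w : K, (w ^ N₁ = 1 ∨ w ^ N₂ = 1) ↔ (w ^ N = 1 ∨ w ^ N' = 1))
    (hNN : ∀ w : K, w ^ N = 1 → w ^ N' = 1 → w = 1 ∨ w = -1)
    (hN : (N : K) ≠ 0) (hg : Nat.gcd N d = g) (hM : N = g * M)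
    {b : F} {v : K} (hvN : v ^ N = 1) (hv1 : v ≠ 1) (hv2 : v ≠ -1)
    (hb : v + v⁻¹ = 2 * algebraMap F K b) :
    (v ^ M = 1 → cdelta F d (-1) b = g) ∧ (v ^ M ≠ 1 → cdelta F d (-1) b = 0) := by
  have hN0 : 0 < N := Nat.pos_of_ne_zero (by rintro rfl; simp at hN)
  have hv0 : v ≠ 0 := h.ne_zero ((hS v).2 (Or.inl hvN))
  have hvv : v ≠ v⁻¹ := by
    intro h1
    have : v * v = 1 := by nth_rewrite 2 [h1]; exact mul_inv_cancel₀ hv0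
    rcases mul_self_eq_one_iff.1 this with h2 | h2
    exacts [hv1 h2, hv2 h2]
  have hN' (w : K) (hwd : w ^ d = v ∨ w ^ d = v⁻¹) : ¬ w ^ N' = 1 := by
    intro hw
    have hvN' : v ^ N' = 1 := by
      rcases hwd with hwd | hwd
      · rw [← hwd, pow_right_comm, hw, one_pow]
      · rw [← inv_inv v, ← hwd, inv_pow, pow_right_comm, hw, one_pow, inv_one]
    rcases hNN v hvN hvN' with h2 | h2
    exacts [hv1 h2, hv2 h2]
  have hd := h.even_d
  set T : Finset K := {w ∈ Polynomial.nthRootsFinset N (1 : K) | w ^ d = v} ∪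
    {w ∈ Polynomial.nthRootsFinset N (1 : K) | w ^ d = v⁻¹} with hTdef
  have hT : ∀ w, w ∈ T ↔ (w ^ N₁ = 1 ∨ w ^ N₂ = 1) ∧ (w ^ d = v ∨ w ^ d = v⁻¹) := by
    intro w
    rw [hTdef, mem_union, mem_filter, mem_filter, Polynomial.mem_nthRootsFinset hN0, hS,
      ← and_or_left]
    constructor
    · rintro ⟨h1, h2⟩; exact ⟨Or.inl h1, h2⟩
    · rintro ⟨h1, h2⟩; exact ⟨h1.resolve_right (hN' w h2), h2⟩
  have h2 := h.two_mul_cdelta hv0 hb T hT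
  have hempty : {w ∈ T | w = 1 ∨ w = -1} = ∅ := by
    refine filter_eq_empty_iff.2 fun {w} hw hw1 => ?_
    have hwd : w ^ d = 1 := by
      rcases hw1 with rfl | rfl
      exacts [one_pow d, hd.neg_one_pow]
    rcases ((hT w).1 hw).2 with h3 | h3
    · exact hv1 (h3.symm.trans hwd)
    · exact hv1 (inv_eq_one.1 (h3.symm.trans hwd))
  rw [hempty, card_empty, add_zero] at h2
  constructor
  · intro hvM
    rw [hTdef, card_union_of_disjoint, card_pow_fiber_s17 hN hg hM hvM,
      card_pow_fiber_s17 hN hg hM (by rw [inv_pow, hvM, inv_one])] at h2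
    · omega
    · refine disjoint_filter.2 fun w _ h3 h4 => hvv (h3.symm.trans h4)
  · intro hvM
    have hTe : T = ∅ := by
      refine eq_empty_of_forall_notMem fun w hw => hvM ?_
      have hwN := ((hS w).1 ((hT w).1 hw).1).resolve_right (hN' w ((hT w).1 hw).2)
      obtain ⟨c, hc⟩ := hg ▸ Nat.gcd_dvd_right N d
      have hwdM : (w ^ d) ^ M = 1 := by
        rw [hc, ← pow_mul, show g * c * M = N * c by rw [hM]; ring, pow_mul, hwN, one_pow]
      rcases ((hT w).1 hw).2 with h3 | h3
      · rw [← h3, hwdM]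
      · rwa [h3, inv_pow, inv_eq_one] at hwdM
    rw [hTe, card_empty] at h2
    omega

/-- The equation `w ^ d = 1` is solved by `μ_2 ∪ μ_e = μ_e`, and `±1 ∈ μ_e` are self-inverse. -/
lemma cdelta_one (h : DicksonData F K d e N₁ M₁ N₂ M₂) :
    cdelta F d (-1) (1 : F) = e / 2 + 1 := by
  have hd := h.even_d
  have h2 := h.two_mul_cdelta (b := 1) (v := 1) one_ne_zero (by rw [map_one]; norm_num)
    {w ∈ Polynomial.nthRootsFinset N₂ (1 : K) | w ^ d = 1} (by
      intro w
      rw [mem_filter, Polynomial.mem_nthRootsFinset h.pos₂, inv_one, or_self]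
      constructor
      · rintro ⟨h1, h2⟩; exact ⟨Or.inr h1, h2⟩
      · rintro ⟨h1 | h1, h2⟩
        · have h3 := pow_gcd_eq_one.2 ⟨h1, h2⟩
          rw [h.gcd₁, ← h.gcd₁₂] at h3
          exact ⟨(pow_gcd_eq_one.1 h3).2, h2⟩
        · exact ⟨h1, h2⟩)
  have hN₂ : Even N₂ := h.eq₂ ▸ h.even_e.mul_right _
  have h3 : {w ∈ {w ∈ Polynomial.nthRootsFinset N₂ (1 : K) | w ^ d = 1} | w = 1 ∨ w = -1}
      = {1, -1} := by
    ext w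
    simp only [mem_filter, Polynomial.mem_nthRootsFinset h.pos₂, mem_insert, mem_singleton,
      and_iff_right_iff_imp]
    rintro (rfl | rfl)
    · simp
    · exact ⟨hN₂.neg_one_pow, hd.neg_one_pow⟩
  rw [h3, card_pair h.one_ne_neg_one, card_pow_fiber_s17 h.cast₂ h.gcd₂ h.eq₂ (one_pow _)] at h2
  omega

/-- The equation `w ^ d = -1` has `e` solutions, all in `μ_{N₂}` and none of them self-inverse. -/
lemma cdelta_neg_one (h : DicksonData F K d e N₁ M₁ N₂ M₂) :
    cdelta F d (-1) (-1 : F) = e / 2 := by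
  have hd := h.even_d
  have h2 := h.two_mul_cdelta (b := -1) (v := -1) (neg_ne_zero.2 one_ne_zero)
    (by rw [map_neg, map_one]; norm_num)
    {w ∈ Polynomial.nthRootsFinset N₂ (1 : K) | w ^ d = -1} (by
      intro w
      rw [mem_filter, Polynomial.mem_nthRootsFinset h.pos₂, show (-1 : K)⁻¹ = -1 by norm_num,
        or_self]
      constructor
      · rintro ⟨h1, h2⟩; exact ⟨Or.inr h1, h2⟩
      · rintro ⟨h1 | h1, h2⟩
        -- `-1` is not a `d`-th power in `μ_{N₁}` because `M₁` is odd
        · exfalso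
          obtain ⟨c, hc⟩ := hd.two_dvd
          have h3 : (w ^ d) ^ M₁ = 1 := by
            rw [hc, ← pow_mul, show 2 * c * M₁ = N₁ * c by rw [h.eq₁]; ring, pow_mul, h1, one_pow]
          rw [h2, h.odd₁.neg_one_pow] at h3
          exact h.one_ne_neg_one h3.symm
        · exact ⟨h1, h2⟩)
  have h3 : {w ∈ {w ∈ Polynomial.nthRootsFinset N₂ (1 : K) | w ^ d = -1} | w = 1 ∨ w = -1}
      = ∅ := by
    refine filter_eq_empty_iff.2 fun {w} hw hw1 => h.one_ne_neg_one ?_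
    rw [← (mem_filter.1 hw).2]
    rcases hw1 with rfl | rfl
    exacts [(one_pow d).symm, hd.neg_one_pow.symm]
  rw [h3, card_empty, card_pow_fiber_s17 h.cast₂ h.gcd₂ h.eq₂ h.even₂.neg_one_pow] at h2
  omega

lemma card_values {M : ℕ} (hM : (M : K) ≠ 0) :
    2 * #(values K M) + #{v ∈ Polynomial.nthRootsFinset M (1 : K) | v = 1 ∨ v = -1} = M := by
  have hM0 : 0 < M := Nat.pos_of_ne_zero (by rintro rfl; simp at hM)
  rw [values, half_count]
  · have h1 : {w ∈ (Polynomial.nthRootsFinset M (1 : K)).filter fun v => v ≠ 1 ∧ v ≠ -1 |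
        w = 1 ∨ w = -1} = ∅ := by
      refine filter_eq_empty_iff.2 fun {w} hw hw1 => ?_
      obtain ⟨_, h2, h3⟩ := mem_filter.1 hw
      rcases hw1 with h4 | h4
      exacts [h2 h4, h3 h4]
    rw [h1, card_empty, add_zero]
    conv_rhs => rw [← card_mu hM,
      ← card_filter_add_card_filter_not (p := fun v : K => v = 1 ∨ v = -1)]
    simp only [not_or, ne_eq]
    rw [add_comm]
  · intro w hw
    rw [mem_filter, Polynomial.mem_nthRootsFinset hM0] at hw
    rintro rfl
    rw [zero_pow hM0.ne'] at hw
    exact zero_ne_one hw.1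
  · intro w hw
    rw [mem_filter, Polynomial.mem_nthRootsFinset hM0] at hw ⊢
    rw [inv_pow, hw.1, inv_one, ne_eq, ne_eq, inv_eq_one, inv_eq_iff_eq_inv,
      show (-1 : K)⁻¹ = -1 by norm_num]
    exact ⟨rfl, hw.2⟩

lemma card_values₁ (h : DicksonData F K d e N₁ M₁ N₂ M₂) : 2 * #(values K M₁) + 1 = M₁ := by
  have hM : (M₁ : K) ≠ 0 := by
    intro h0; apply h.cast₁; rw [h.eq₁]; push_cast; rw [h0, mul_zero]
  have h1 : {v ∈ Polynomial.nthRootsFinset M₁ (1 : K) | v = 1 ∨ v = -1} = {1} := by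
    ext v
    simp only [mem_filter, Polynomial.mem_nthRootsFinset h.posM₁, mem_singleton]
    constructor
    · rintro ⟨h2, h3 | h3⟩
      · exact h3
      · rw [h3, h.odd₁.neg_one_pow] at h2
        exact (h.one_ne_neg_one h2.symm).elim
    · rintro rfl; simp
  have := card_values hM
  rwa [h1, card_singleton] at this

lemma card_values₂ (h : DicksonData F K d e N₁ M₁ N₂ M₂) : 2 * #(values K M₂) + 2 = M₂ := by
  have hM : (M₂ : K) ≠ 0 := by
    intro h0; apply h.cast₂; rw [h.eq₂]; push_cast; rw [h0, mul_zero]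
  have h1 : {v ∈ Polynomial.nthRootsFinset M₂ (1 : K) | v = 1 ∨ v = -1} = {1, -1} := by
    ext v
    simp only [mem_filter, Polynomial.mem_nthRootsFinset h.posM₂, mem_insert, mem_singleton,
      and_iff_right_iff_imp]
    rintro (rfl | rfl)
    · simp
    · exact h.even₂.neg_one_pow
  have := card_values hM
  rwa [h1, card_pair h.one_ne_neg_one] at this

/-- All preimage sizes: `b = 1` and `b = -1` are exceptional, the `b` with `2 * b` in `values K M₁`
have two preimages, those with `2 * b` in `values K M₂` have `e`, and all others have none. -/
lemma classify (h : DicksonData F K d e N₁ M₁ N₂ M₂) (b : F) :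
    (b = 1 ∧ cdelta F d (-1) b = e / 2 + 1) ∨
    (b = -1 ∧ cdelta F d (-1) b = e / 2) ∨
    (b ≠ 1 ∧ b ≠ -1 ∧ 2 * algebraMap F K b ∈ values K M₁ ∧ cdelta F d (-1) b = 2) ∨
    (b ≠ 1 ∧ b ≠ -1 ∧ 2 * algebraMap F K b ∈ values K M₂ ∧ cdelta F d (-1) b = e) ∨
    (b ≠ 1 ∧ b ≠ -1 ∧ cdelta F d (-1) b = 0) := by
  by_cases hb1 : b = 1
  · exact Or.inl ⟨hb1, hb1 ▸ h.cdelta_one⟩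
  by_cases hb2 : b = -1
  · exact Or.inr (Or.inl ⟨hb2, hb2 ▸ h.cdelta_neg_one⟩)
  obtain ⟨v, hv, hvb⟩ := h.cover (2 * b)
  rw [map_mul, map_ofNat] at hvb
  have hv1 : v ≠ 1 := by
    rintro rfl
    apply hb1
    apply (algebraMap F K).injective
    apply mul_left_cancel₀ h.two
    rw [← hvb, map_one]; norm_num
  have hv2 : v ≠ -1 := by
    rintro rfl
    apply hb2
    apply (algebraMap F K).injective
    apply mul_left_cancel₀ h.two
    rw [← hvb, map_neg, map_one]; norm_num
  rcases hv with hv | hv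
  · have hc := h.cdelta_generic (fun w => Iff.rfl) (fun w => h.eq_one_or) h.cast₁ h.gcd₁ h.eq₁
      hv hv1 hv2 hvb
    by_cases hvM : v ^ M₁ = 1
    · exact Or.inr (Or.inr (Or.inl
        ⟨hb1, hb2, (mem_values h.posM₁).2 ⟨v, hvM, hv1, hv2, hvb⟩, hc.1 hvM⟩))
    · exact Or.inr (Or.inr (Or.inr (Or.inr ⟨hb1, hb2, hc.2 hvM⟩)))
  · have hc := h.cdelta_generic (fun w => or_comm) (fun w h2 h1 => h.eq_one_or h1 h2)
      h.cast₂ h.gcd₂ h.eq₂ hv hv1 hv2 hvb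
    by_cases hvM : v ^ M₂ = 1
    · exact Or.inr (Or.inr (Or.inr (Or.inl
        ⟨hb1, hb2, (mem_values h.posM₂).2 ⟨v, hvM, hv1, hv2, hvb⟩, hc.1 hvM⟩)))
    · exact Or.inr (Or.inr (Or.inr (Or.inr ⟨hb1, hb2, hc.2 hvM⟩)))

/-- A converse to the middle cases of `classify`, stated for `N` either of `N₁`, `N₂`. -/
lemma cdelta_of_mem_values (h : DicksonData F K d e N₁ M₁ N₂ M₂) {N g M : ℕ}
    (hM0 : 0 < M) {N' : ℕ}
    (hS : ∀ w : K, (w ^ N₁ = 1 ∨ w ^ N₂ = 1) ↔ (w ^ N = 1 ∨ w ^ N' = 1))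
    (hNN : ∀ w : K, w ^ N = 1 → w ^ N' = 1 → w = 1 ∨ w = -1)
    (hN : (N : K) ≠ 0) (hg : Nat.gcd N d = g) (hM : N = g * M) {b : F}
    (hb : 2 * algebraMap F K b ∈ values K M) : cdelta F d (-1) b = g := by
  obtain ⟨v, hvM, hv1, hv2, hvb⟩ := (mem_values hM0).1 hb
  exact (h.cdelta_generic hS hNN hN hg hM (by rw [hM, mul_comm, pow_mul, hvM, one_pow])
    hv1 hv2 hvb).1 hvM

lemma spectrum_two (h : DicksonData F K d e N₁ M₁ N₂ M₂) :
    comega F d (-1 : F) 2 = #(values K M₁) := by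
  have he := h.six_le
  refine h.comega_eq_card h.posM₁
    (fun v hv => Or.inl (by rw [h.eq₁, mul_comm, pow_mul, hv, one_pow])) fun b => ⟨fun hb => ?_, ?_⟩
  · rcases h.classify b with h1 | h1 | h1 | h1 | h1
    · omega
    · omega
    · exact h1.2.2.1
    · omega
    · omega
  · exact h.cdelta_of_mem_values h.posM₁ (fun w => Iff.rfl) (fun w => h.eq_one_or) h.cast₁ h.gcd₁ h.eq₁

lemma spectrum_e (h : DicksonData F K d e N₁ M₁ N₂ M₂) :
    comega F d (-1 : F) e = #(values K M₂) := by
  have he := h.six_le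
  refine h.comega_eq_card h.posM₂
    (fun v hv => Or.inr (by rw [h.eq₂, mul_comm, pow_mul, hv, one_pow])) fun b => ⟨fun hb => ?_, ?_⟩
  · rcases h.classify b with h1 | h1 | h1 | h1 | h1
    · omega
    · omega
    · omega
    · exact h1.2.2.1
    · omega
  · exact h.cdelta_of_mem_values h.posM₂ (fun w => or_comm) (fun w h2 h1 => h.eq_one_or h1 h2)
      h.cast₂ h.gcd₂ h.eq₂

end

variable [IsAlgClosed K]

lemma spectrum_half (h : DicksonData F K d e N₁ M₁ N₂ M₂) :
    comega F d (-1 : F) (e / 2) = 1 := by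
  classical
  have he := h.six_le
  have : {b : F | cdelta F d (-1) b = e / 2} = {-1} := by
    ext b
    simp only [Set.mem_ofPred_eq, Set.mem_singleton_iff]
    refine ⟨fun hb => ?_, fun hb => hb ▸ h.cdelta_neg_one⟩
    rcases h.classify b with h1 | h1 | h1 | h1 | h1
    · omega
    · exact h1.1
    all_goals omega
  rw [comega, ← Set.coe_ofPred, Nat.card_coe_set_eq, this, Set.ncard_singleton]

lemma spectrum_half_add_one (h : DicksonData F K d e N₁ M₁ N₂ M₂) :
    comega F d (-1 : F) (e / 2 + 1) = 1 := by
  classical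
  have he := h.six_le
  have : {b : F | cdelta F d (-1) b = e / 2 + 1} = {1} := by
    ext b
    simp only [Set.mem_ofPred_eq, Set.mem_singleton_iff]
    refine ⟨fun hb => ?_, fun hb => hb ▸ h.cdelta_one⟩
    rcases h.classify b with h1 | h1 | h1 | h1 | h1
    · exact h1.1
    all_goals omega
  rw [comega, ← Set.coe_ofPred, Nat.card_coe_set_eq, this, Set.ncard_singleton]

lemma spectrum_other (h : DicksonData F K d e N₁ M₁ N₂ M₂) {i : ℕ} (h0 : i ≠ 0) (h2 : i ≠ 2)
    (h3 : i ≠ e / 2) (h4 : i ≠ e / 2 + 1) (h5 : i ≠ e) : comega F d (-1 : F) i = 0 := by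
  classical
  have : {b : F | cdelta F d (-1) b = i} = ∅ := by
    ext b
    simp only [Set.mem_ofPred_eq, Set.mem_empty_iff_false, iff_false]
    intro hb
    rcases h.classify b with h1 | h1 | h1 | h1 | h1 <;> omega
  rw [comega, ← Set.coe_ofPred, Nat.card_coe_set_eq, this, Set.ncard_empty]

/-- The preimage counts partition `F`, which determines `ω_0` from the other values. -/
lemma spectrum_sum [Fintype F] (h : DicksonData F K d e N₁ M₁ N₂ M₂) :
    comega F d (-1 : F) 0 + comega F d (-1 : F) 2 + comega F d (-1 : F) e + 2 =
      Fintype.card F := by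
  classical
  have he := h.six_le
  have hev := h.even_e.two_dvd
  have hmaps : Set.MapsTo (fun b : F => cdelta F d (-1) b) (univ : Finset F)
      ({0, 2, e / 2, e / 2 + 1, e} : Finset ℕ) := by
    intro b _
    simp only [coe_insert, coe_singleton, Set.mem_insert_iff, Set.mem_singleton_iff]
    rcases h.classify b with h1 | h1 | h1 | h1 | h1 <;> omega
  have hc (i : ℕ) : #{b : F | cdelta F d (-1) b = i} = comega F d (-1 : F) i := by
    rw [comega, Nat.card_eq_fintype_card, Fintype.card_subtype]
  rw [← card_univ, card_eq_sum_card_fiberwise hmaps]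
  simp only [hc]
  rw [sum_insert, sum_insert, sum_insert, sum_insert, sum_singleton, h.spectrum_half,
    h.spectrum_half_add_one]
  · ring
  all_goals simp only [mem_insert, mem_singleton]; omega

end DicksonData

/-! ### Reduction of `x ↦ (x + 1) ^ d + x ^ d` to a Dickson polynomial -/

/-- Writing `w = z ^ 2`, one has `x = ((z - z⁻¹) / 2) ^ 2` and `x + 1 = ((z + z⁻¹) / 2) ^ 2`; since
`2 * d = p ^ k + 1`, the Frobenius `z ↦ z ^ (p ^ k)` is additive and the cross terms cancel. -/
lemma dickson_identity {K : Type*} [Field K] [IsAlgClosed K] {p k d : ℕ} [Fact p.Prime] [CharP K p]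
    (h2 : (2 : K) ≠ 0) (hd : p ^ k + 1 = 2 * d) {x w : K} (hw : w ≠ 0)
    (hx : w + w⁻¹ = 4 * x + 2) : 2 * ((x + 1) ^ d + x ^ d) = w ^ d + (w ^ d)⁻¹ := by
  obtain ⟨z, rfl⟩ := IsAlgClosed.exists_pow_nat_eq w (n := 2) (by norm_num)
  have hz : z ≠ 0 := by rintro rfl; simp at hw
  have h22 : (2 : K) ^ p ^ k = 2 := by
    have := add_pow_char_pow (1 : K) 1 p k
    rw [one_pow] at this
    rwa [show (2 : K) = 1 + 1 by norm_num]
  have h4 : (4 : K) ≠ 0 := by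
    rw [show (4 : K) = 2 * 2 by norm_num]; exact mul_ne_zero h2 h2
  have e1 : x = ((z - z⁻¹) / 2) ^ 2 := by
    apply mul_left_cancel₀ h4
    field_simp at hx ⊢
    linear_combination -hx
  have e2 : x + 1 = ((z + z⁻¹) / 2) ^ 2 := by
    apply mul_left_cancel₀ h4
    field_simp at hx ⊢
    linear_combination -hx
  rw [e2, e1, ← pow_mul, ← pow_mul, ← pow_mul, ← hd, pow_succ, pow_succ _ (p ^ k),
    pow_succ z, div_pow, div_pow, add_pow_char_pow, sub_pow_char_pow, h22, inv_pow]
  have hA : z ^ p ^ k ≠ 0 := pow_ne_zero _ hz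
  generalize z ^ p ^ k = A at hA
  field_simp
  ring

/-- The Frobenius-fixed elements of an extension of a finite field lie in the base field. -/
lemma exists_algebraMap_eq {F K : Type*} [Field F] [Fintype F] [Field K] [Algebra F K] {t : K}
    (ht : t ^ Fintype.card F = t) : ∃ x : F, algebraMap F K x = t := by
  classical
  have hq : 1 < Fintype.card F := Fintype.one_lt_card
  have h0 : (Polynomial.X ^ Fintype.card F - Polynomial.X : Polynomial K) ≠ 0 :=
    FiniteField.X_pow_card_sub_X_ne_zero K hq
  have hsub : univ.image (algebraMap F K) ⊆
      (Polynomial.X ^ Fintype.card F - Polynomial.X : Polynomial K).roots.toFinset := by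
    intro y hy
    obtain ⟨x, _, rfl⟩ := mem_image.1 hy
    rw [Multiset.mem_toFinset, Polynomial.mem_roots h0]
    simp [Polynomial.IsRoot, ← map_pow, FiniteField.pow_card]
  have hcard : #(Polynomial.X ^ Fintype.card F - Polynomial.X : Polynomial K).roots.toFinset ≤
      #(univ.image (algebraMap F K)) := by
    rw [card_image_of_injective _ (algebraMap F K).injective, card_univ]
    calc _ ≤ _ := Multiset.toFinset_card_le _
      _ ≤ _ := Polynomial.card_roots' _
      _ = _ := FiniteField.X_pow_card_sub_X_natDegree_eq K hq
  have ht' : t ∈ univ.image (algebraMap F K) := by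
    rw [eq_of_subset_of_card_le hsub hcard, Multiset.mem_toFinset, Polynomial.mem_roots h0]
    simp [Polynomial.IsRoot, ht]
  obtain ⟨x, _, hx⟩ := mem_image.1 ht'
  exact ⟨x, hx⟩

lemma exists_add_inv {K : Type*} [Field K] [IsAlgClosed K] (h2 : (2 : K) ≠ 0) (y : K) :
    ∃ w : K, w ≠ 0 ∧ w + w⁻¹ = y := by
  obtain ⟨s, hs⟩ := IsAlgClosed.exists_pow_nat_eq (y ^ 2 - 4) (n := 2) (by norm_num)
  have h4 : (4 : K) ≠ 0 := by
    rw [show (4 : K) = 2 * 2 by norm_num]; exact mul_ne_zero h2 h2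
  have h0 : (y + s) / 2 ≠ 0 := by
    intro h
    have h' : y + s = 0 := by simpa [h2] using h
    apply h4
    linear_combination (y - s) * h' + hs
  refine ⟨(y + s) / 2, h0, ?_⟩
  have h1 : y + s ≠ 0 := fun h => h0 (by rw [h, zero_div])
  field_simp
  linear_combination hs

/-- The elements `w + w⁻¹` fixed by the `q`-th power map are exactly those with
`w ∈ μ_{q-1} ∪ μ_{q+1}`. -/
lemma frobenius_fixed_iff {K : Type*} [Field K] {p n : ℕ}
    [Fact p.Prime] [CharP K p] {w : K} (hw : w ≠ 0) :
    (w + w⁻¹) ^ p ^ n = w + w⁻¹ ↔ w ^ (p ^ n - 1) = 1 ∨ w ^ (p ^ n + 1) = 1 := by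
  have hq : 0 < p ^ n := pow_pos (Fact.out : p.Prime).pos n
  rw [add_pow_char_pow, inv_pow, add_inv_eq_iff (pow_ne_zero _ hw) hw, pow_succ]
  refine or_congr ?_ ⟨fun h => by rw [h, inv_mul_cancel₀ hw], eq_inv_of_mul_eq_one_left⟩
  obtain ⟨m, hm⟩ : ∃ m, p ^ n = m + 1 := ⟨p ^ n - 1, by omega⟩
  rw [hm, Nat.add_sub_cancel, pow_succ]
  exact mul_eq_right₀ hw

/-- The field-theoretic part of `DicksonData` is automatic for `{N₁, N₂} = {p ^ n - 1, p ^ n + 1}`, so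
only the divisibility conditions have to be supplied. -/
lemma dicksonData_of_arith {F K : Type*} [Field F] [Fintype F] [Field K] [Algebra F K]
    [IsAlgClosed K] {p n k d e N₁ M₁ N₂ M₂ : ℕ} (hp : p.Prime) (hp2 : p ≠ 2) (hn : n ≠ 0)
    (hF : Fintype.card F = p ^ n) (hd : p ^ k + 1 = 2 * d)
    (hN : N₁ = p ^ n - 1 ∧ N₂ = p ^ n + 1 ∨ N₁ = p ^ n + 1 ∧ N₂ = p ^ n - 1)
    (eq₁ : N₁ = 2 * M₁) (eq₂ : N₂ = e * M₂) (odd₁ : Odd M₁) (even₂ : Even M₂)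
    (gcd₁ : Nat.gcd N₁ d = 2) (gcd₂ : Nat.gcd N₂ d = e) (six_le : 6 ≤ e) (even_e : Even e) :
    DicksonData F K d e N₁ M₁ N₂ M₂ := by
  have : Fact p.Prime := ⟨hp⟩
  have : CharP F p := charP_of_card_eq_prime_pow hF
  have : CharP K p := charP_of_injective_algebraMap (algebraMap F K).injective p
  have hq1 : 1 ≤ p ^ n := pow_pos hp.pos n
  have hpn : p ∣ p ^ n := dvd_pow_self p hn
  have hcq : ((p ^ n : ℕ) : K) = 0 := (CharP.cast_eq_zero_iff K p _).2 hpn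
  have two : (2 : K) ≠ 0 := by
    intro h
    have h' : ((2 : ℕ) : K) = 0 := by exact_mod_cast h
    have := (CharP.cast_eq_zero_iff K p 2).1 h'
    exact hp2 ((Nat.prime_dvd_prime_iff_eq hp Nat.prime_two).1 this)
  have c1 : ((p ^ n - 1 : ℕ) : K) ≠ 0 := by
    rw [Nat.cast_sub hq1, hcq]; simp
  have c2 : ((p ^ n + 1 : ℕ) : K) ≠ 0 := by
    rw [Nat.cast_add, hcq]; simp
  have hS (w : K) : (w ^ N₁ = 1 ∨ w ^ N₂ = 1) ↔
      (w ^ (p ^ n - 1) = 1 ∨ w ^ (p ^ n + 1) = 1) := by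
    rcases hN with ⟨rfl, rfl⟩ | ⟨rfl, rfl⟩
    · exact Iff.rfl
    · exact or_comm
  have hN₁0 : N₁ ≠ 0 := by have := odd₁.pos; omega
  have hN₂0 : N₂ ≠ 0 := by
    intro h0
    rcases hN with ⟨h1, h2⟩ | ⟨h1, h2⟩
    · omega
    · exact c1 (by rw [← h2, h0, Nat.cast_zero])
  have hne (w : K) (hw : w ^ N₁ = 1 ∨ w ^ N₂ = 1) : w ≠ 0 := by
    rintro rfl
    rw [zero_pow hN₁0, zero_pow hN₂0] at hw
    simp at hw
  refine
    { dickson := fun x w hw hx => ?_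
      range := fun w hw => exists_algebraMap_eq ?_
      cover := fun x => ?_
      two := two
      cast₁ := ?_
      cast₂ := ?_
      eq₁ := eq₁
      eq₂ := eq₂
      odd₁ := odd₁
      even₂ := even₂
      gcd₁ := gcd₁
      gcd₂ := gcd₂
      gcd₁₂ := ?_
      six_le := six_le
      even_e := even_e }
  · rw [map_add, map_pow, map_pow, map_add, map_one]
    exact dickson_identity two hd hw hx
  · rw [hF, frobenius_fixed_iff (hne w hw)]
    exact (hS w).1 hw
  · obtain ⟨w, hw0, hw⟩ := exists_add_inv two (algebraMap F K x)
    refine ⟨w, (hS w).2 ?_, hw⟩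
    rw [← frobenius_fixed_iff hw0, hw, ← map_pow, ← hF, FiniteField.pow_card]
  · rcases hN with ⟨rfl, _⟩ | ⟨rfl, _⟩ <;> assumption
  · rcases hN with ⟨_, rfl⟩ | ⟨_, rfl⟩ <;> assumption
  · have h2 : 2 ∣ Nat.gcd N₁ N₂ :=
      Nat.dvd_gcd (Dvd.intro _ eq₁.symm) (eq₂ ▸ Dvd.dvd.mul_right even_e.two_dvd _)
    refine Nat.dvd_antisymm ?_ h2
    have h3 := Nat.gcd_dvd_left N₁ N₂
    have h4 := Nat.gcd_dvd_right N₁ N₂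
    rcases hN with ⟨h5, h6⟩ | ⟨h5, h6⟩
    · exact (Nat.dvd_add_right h3).1 (by rwa [show N₁ + 2 = N₂ by omega])
    · exact (Nat.dvd_add_right h4).1 (by rwa [show N₂ + 2 = N₁ by omega])

/-! ### Greatest common divisors of `p ^ k + 1` with `p ^ n ± 1` -/

lemma pow_modEq_of_odd {p t k : ℕ} (h : p ^ 2 ≡ 1 [MOD t]) (hk : Odd k) : p ^ k ≡ p [MOD t] := by
  obtain ⟨j, rfl⟩ := hk
  have := (h.pow j).mul_right p
  rwa [one_pow, one_mul, ← pow_mul, ← pow_succ] at this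

lemma pow_modEq_of_even {p t k : ℕ} (h : p ^ 2 ≡ 1 [MOD t]) (hk : Even k) :
    p ^ k ≡ 1 [MOD t] := by
  obtain ⟨j, rfl⟩ := hk.two_dvd
  have := h.pow j
  rwa [one_pow, ← pow_mul] at this

lemma dvd_pow_gcd_sub_one {p g a b : ℕ} (ha : g ∣ p ^ a - 1) (hb : g ∣ p ^ b - 1) :
    g ∣ p ^ Nat.gcd a b - 1 :=
  Nat.pow_sub_one_gcd_pow_sub_one p a b ▸ Nat.dvd_gcd ha hb

lemma pow_two_mul_sub_one (p a : ℕ) : p ^ (2 * a) - 1 = (p ^ a + 1) * (p ^ a - 1) := by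
  have := Nat.sq_sub_sq (p ^ a) 1
  rwa [one_pow, ← pow_mul, mul_comm a] at this

/-- Modulo a divisor of `p - 1` one has `p ^ k + 1 = 2`. -/
lemma dvd_two_of_dvd {p g k : ℕ} (hp : 0 < p) (h1 : g ∣ p ^ k + 1) (h2 : g ∣ p - 1) : g ∣ 2 := by
  have h3 : g ∣ p ^ k - 1 := h2.trans (by simpa using Nat.sub_dvd_pow_sub_pow p 1 k)
  have h4 : 1 ≤ p ^ k := pow_pos hp k
  exact (Nat.dvd_add_right h3).1 (by rwa [show p ^ k - 1 + 2 = p ^ k + 1 by omega])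

/-- The parity hypothesis on `2 * n / gcd (2 * n) k` just says that `k` is odd. -/
lemma odd_k {n k : ℕ} (hgcd : Nat.gcd n k = 1) (heven : Even (2 * n / Nat.gcd (2 * n) k)) :
    Odd k := by
  by_contra hk
  rw [Nat.not_odd_iff_even] at hk
  obtain ⟨j, rfl⟩ := hk.two_dvd
  have h1 : Nat.gcd n j = 1 :=
    Nat.dvd_one.1 (hgcd ▸ Nat.gcd_dvd_gcd_mul_left_right n j 2)
  rw [Nat.gcd_mul_left, h1, mul_one, Nat.mul_div_cancel_left _ two_pos] at heven
  have := Nat.dvd_gcd heven.two_dvd (Dvd.intro j rfl)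
  omega

lemma sq_modEq (p : ℕ) (hp : Odd p) : p ^ 2 ≡ 1 [MOD 2 * (p + 1)] := by
  obtain ⟨j, rfl⟩ := hp
  have h1 : 1 ≤ (2 * j + 1) ^ 2 := pow_pos (Nat.succ_pos _) 2
  refine ((Nat.modEq_iff_dvd' h1).2 ⟨j, ?_⟩).symm
  rw [Nat.sub_eq_iff_eq_add h1]
  ring

/-- `(p ^ k + 1) / (p + 1)` is odd when `k` is. -/
lemma exists_odd_cofactor {p k : ℕ} (hp : Odd p) (hk : Odd k) :
    ∃ m, Odd m ∧ p ^ k + 1 = (p + 1) * m := by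
  obtain ⟨m, hm⟩ : p + 1 ∣ p ^ k + 1 := by simpa using hk.nat_add_dvd_pow_add_pow p 1
  refine ⟨m, ?_, hm⟩
  by_contra h
  obtain ⟨j, rfl⟩ := (Nat.not_odd_iff_even.1 h).two_dvd
  have h1 : p ^ k + 1 ≡ p + 1 [MOD 2 * (p + 1)] :=
    (pow_modEq_of_odd (sq_modEq p hp) hk).add_right 1
  have h2 : p ^ k + 1 ≡ 0 [MOD 2 * (p + 1)] :=
    (Nat.modEq_zero_iff_dvd).2 ⟨j, by rw [hm]; ring⟩
  have h3 := Nat.le_of_dvd (Nat.succ_pos p) ((Nat.modEq_zero_iff_dvd).1 (h1.symm.trans h2))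
  omega

/-- The gcd of `d = e * m = (p ^ k + 1) / 2` with whichever of `p ^ n ± 1` is divisible by
`p + 1` with quotient `r`: since `gcd (p ^ (2 * k) - 1) (p ^ (2 * n) - 1) = p ^ 2 - 1`, the common
factor of `m` and `r` divides `p - 1`, hence `2`, hence is trivial. -/
lemma gcd_eq_e {p n k e m r : ℕ} (hp : 1 < p) (hgcd : Nat.gcd n k = 1) (he : p + 1 = 2 * e)
    (hm : Odd m) (hk : p ^ k + 1 = (p + 1) * m) (hr : (p + 1) * r ∣ p ^ (2 * n) - 1) :
    Nat.gcd ((p + 1) * r) (e * m) = e := by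
  have hg : Nat.gcd r m = 1 := by
    set g := Nat.gcd r m with hgdef
    have h1 : (p + 1) * g ∣ p ^ (2 * n) - 1 :=
      (Nat.mul_dvd_mul_left _ (Nat.gcd_dvd_left r m)).trans hr
    have h2 : (p + 1) * g ∣ p ^ (2 * k) - 1 := by
      rw [pow_two_mul_sub_one, hk]
      exact Dvd.dvd.mul_right (Nat.mul_dvd_mul_left _ (Nat.gcd_dvd_right r m)) _
    have h3 := dvd_pow_gcd_sub_one h1 h2
    rw [Nat.gcd_mul_left, hgcd, pow_two_mul_sub_one, pow_one] at h3
    have h4 : g ∣ p - 1 := Nat.dvd_of_mul_dvd_mul_left (Nat.succ_pos p) h3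
    have h5 : g ∣ 2 := dvd_two_of_dvd (k := k) (by omega)
      (hk ▸ Dvd.dvd.mul_left (Nat.gcd_dvd_right r m) _) h4
    have h6 : Nat.Coprime m 2 := hm.coprime_two_right
    exact Nat.eq_one_of_dvd_coprimes h6 (Nat.gcd_dvd_right r m) h5
  have h2 : Nat.gcd (2 * r) m = 1 :=
    Nat.Coprime.mul_left hm.coprime_two_left hg
  rw [show (p + 1) * r = e * (2 * r) by rw [he]; ring, Nat.gcd_mul_left, h2, mul_one]

theorem stmt_17 (p n k : ℕ) (hp : p.Prime) (hp7 : 7 < p) (hp4 : p % 4 = 3)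
    (hn : 1 ≤ n) (hk : 1 ≤ k) (hgcd : Nat.gcd n k = 1)
    (heven : Even (2 * n / Nat.gcd (2 * n) k))
    (F : Type*) [Field F] [Fintype F] (hF : Fintype.card F = p ^ n) :
    (Odd n →
      comega F ((p ^ k + 1) / 2) (-1 : F) 0 = (p ^ n * (3 * p - 1) - (p + 5)) / (4 * (p + 1)) ∧
      comega F ((p ^ k + 1) / 2) (-1 : F) 2 = (p ^ n - 3) / 4 ∧
      comega F ((p ^ k + 1) / 2) (-1 : F) ((p + 1) / 4) = 1 ∧
      comega F ((p ^ k + 1) / 2) (-1 : F) ((p + 5) / 4) = 1 ∧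
      comega F ((p ^ k + 1) / 2) (-1 : F) ((p + 1) / 2) = (p ^ n - p) / (p + 1) ∧
      ∀ i, i ≠ 0 → i ≠ 2 → i ≠ (p + 1) / 4 → i ≠ (p + 5) / 4 → i ≠ (p + 1) / 2 →
        comega F ((p ^ k + 1) / 2) (-1 : F) i = 0) ∧
    (Even n →
      comega F ((p ^ k + 1) / 2) (-1 : F) 0 = (p ^ n - 1) * (3 * p - 1) / (4 * (p + 1)) ∧
      comega F ((p ^ k + 1) / 2) (-1 : F) 2 = (p ^ n - 1) / 4 ∧
      comega F ((p ^ k + 1) / 2) (-1 : F) ((p + 1) / 4) = 1 ∧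
      comega F ((p ^ k + 1) / 2) (-1 : F) ((p + 5) / 4) = 1 ∧
      comega F ((p ^ k + 1) / 2) (-1 : F) ((p + 1) / 2) = (p ^ n - p - 2) / (p + 1) ∧
      ∀ i, i ≠ 0 → i ≠ 2 → i ≠ (p + 1) / 4 → i ≠ (p + 5) / 4 → i ≠ (p + 1) / 2 →
        comega F ((p ^ k + 1) / 2) (-1 : F) i = 0) := by
  classical
  have hkodd := odd_k hgcd heven
  have hpodd : Odd p := Nat.odd_iff.2 (by omega)
  obtain ⟨m, hm, hkm⟩ := exists_odd_cofactor hpodd hkodd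
  set e := (p + 1) / 2 with hedef
  have he : p + 1 = 2 * e := by omega
  have he6 : 6 ≤ e := by omega
  have heev : Even e := Nat.even_iff.2 (by omega)
  have hd : (p ^ k + 1) / 2 = e * m := by
    rw [hkm, he, mul_assoc, Nat.mul_div_cancel_left _ two_pos]
  have hd2 : p ^ k + 1 = 2 * (e * m) := by rw [hkm, he, mul_assoc]
  have hd2' : 2 ∣ e * m := Dvd.dvd.mul_right heev.two_dvd m
  have h4 : p ^ 2 ≡ 1 [MOD 4] := by
    have : p ≡ 3 [MOD 4] := hp4
    exact this.pow 2
  have hp4' : (p + 1) / 4 = e / 2 := by omega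
  have hp5' : (p + 5) / 4 = e / 2 + 1 := by omega
  have hq1 : 1 ≤ p ^ n := pow_pos hp.pos n
  rw [hd, hp4', hp5']
  constructor
  · intro hnodd
    have hq4 : p ^ n % 4 = 3 := Eq.trans (pow_modEq_of_odd h4 hnodd) hp4
    obtain ⟨r, hr⟩ : p + 1 ∣ p ^ n + 1 := by simpa using hnodd.nat_add_dvd_pow_add_pow p 1
    have D : DicksonData F (AlgebraicClosure F) (e * m) e
        (p ^ n - 1) ((p ^ n - 1) / 2) (p ^ n + 1) (2 * r) := by
      refine dicksonData_of_arith hp (by omega) (by omega) hF hd2 (Or.inl ⟨rfl, rfl⟩) (by omega)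
        (by rw [hr, he]; ring) (Nat.odd_iff.2 (by omega)) (even_two_mul r) ?_ ?_ he6 heev
      · refine Nat.dvd_antisymm ?_ (Nat.dvd_gcd (by omega) hd2')
        have h1 : Nat.gcd (p ^ n - 1) (e * m) ∣ p ^ k + 1 :=
          hd2 ▸ Dvd.dvd.mul_left (Nat.gcd_dvd_right _ _) 2
        have h2 : Nat.gcd (p ^ n - 1) (e * m) ∣ p ^ (2 * k) - 1 := by
          rw [pow_two_mul_sub_one]; exact Dvd.dvd.mul_right h1 _
        have h3 := dvd_pow_gcd_sub_one (Nat.gcd_dvd_left _ _) h2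
        have h5 : Nat.gcd n (2 * k) = 1 := Nat.Coprime.mul_right hnodd.coprime_two_right hgcd
        rw [h5, pow_one] at h3
        exact dvd_two_of_dvd hp.pos h1 h3
      · rw [hr]
        refine gcd_eq_e hp.one_lt hgcd he hm hkm ?_
        rw [← hr, pow_two_mul_sub_one]
        exact Dvd.intro _ rfl
    have s0 := D.spectrum_sum
    have s2 := D.card_values₁
    have se := D.card_values₂
    rw [← D.spectrum_two] at s2
    rw [← D.spectrum_e] at se
    rw [hF] at s0
    have hr' : r = comega F (e * m) (-1 : F) e + 1 := by omega
    refine ⟨?_, by omega, D.spectrum_half, D.spectrum_half_add_one, ?_,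
      fun i h0 h2 h3 h5 h6 => D.spectrum_other h0 h2 h3 h5 h6⟩
    · symm
      apply Nat.div_eq_of_eq_mul_left (by omega)
      generalize comega F (e * m) (-1 : F) 0 = w0 at *
      generalize comega F (e * m) (-1 : F) 2 = w2 at *
      generalize comega F (e * m) (-1 : F) e = we at *
      have s2' : p ^ n = 4 * w2 + 3 := by omega
      rw [hr'] at hr
      have h3p : 1 ≤ 3 * p := by omega
      rw [Nat.sub_eq_iff_eq_add (by nlinarith [Nat.sub_add_cancel h3p])]
      zify [h3p] at *
      linear_combination (-4 * p - 4 : ℤ) * s0 - (p + 1 : ℤ) * s2' - 4 * hr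
    · symm
      apply Nat.div_eq_of_eq_mul_left (by omega)
      rw [hr'] at hr
      have : p ^ n + 1 = comega F (e * m) (-1 : F) e * (p + 1) + (p + 1) := by rw [hr]; ring
      omega
  · intro hneven
    have hq4 : p ^ n % 4 = 1 := pow_modEq_of_even h4 hneven
    have hpp : p ^ 2 - 1 = (p + 1) * (p - 1) := by simpa using pow_two_mul_sub_one p 1
    have hdvd : p ^ 2 - 1 ∣ p ^ n - 1 := by
      obtain ⟨j, rfl⟩ := hneven.two_dvd
      rw [pow_mul]
      simpa using Nat.sub_dvd_pow_sub_pow (p ^ 2) 1 j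
    obtain ⟨r, hr⟩ : p + 1 ∣ p ^ n - 1 := (Dvd.intro _ hpp.symm).trans hdvd
    have D : DicksonData F (AlgebraicClosure F) (e * m) e
        (p ^ n + 1) ((p ^ n + 1) / 2) (p ^ n - 1) (2 * r) := by
      refine dicksonData_of_arith hp (by omega) (by omega) hF hd2 (Or.inr ⟨rfl, rfl⟩) (by omega)
        (by rw [hr, he]; ring) (Nat.odd_iff.2 (by omega)) (even_two_mul r) ?_ ?_ he6 heev
      · refine Nat.dvd_antisymm ?_ (Nat.dvd_gcd (by omega) hd2')
        have h1 : Nat.gcd (p ^ n + 1) (e * m) ∣ p ^ (2 * k) - 1 := by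
          rw [pow_two_mul_sub_one, hd2]
          exact Dvd.dvd.mul_right (Dvd.dvd.mul_left (Nat.gcd_dvd_right _ _) 2) _
        have h2 : Nat.gcd (p ^ n + 1) (e * m) ∣ p ^ (2 * n) - 1 := by
          rw [pow_two_mul_sub_one]; exact Dvd.dvd.mul_right (Nat.gcd_dvd_left _ _) _
        have h3 := dvd_pow_gcd_sub_one h2 h1
        rw [Nat.gcd_mul_left, hgcd, mul_one] at h3
        exact (Nat.dvd_add_right (h3.trans hdvd)).1
          (by rw [show p ^ n - 1 + 2 = p ^ n + 1 by omega]; exact Nat.gcd_dvd_left _ _)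
      · rw [hr]
        refine gcd_eq_e hp.one_lt hgcd he hm hkm ?_
        rw [← hr, pow_two_mul_sub_one]
        exact Dvd.intro_left _ rfl
    have s0 := D.spectrum_sum
    have s2 := D.card_values₁
    have se := D.card_values₂
    rw [← D.spectrum_two] at s2
    rw [← D.spectrum_e] at se
    rw [hF] at s0
    have hr' : r = comega F (e * m) (-1 : F) e + 1 := by omega
    refine ⟨?_, by omega, D.spectrum_half, D.spectrum_half_add_one, ?_,
      fun i h0 h2 h3 h5 h6 => D.spectrum_other h0 h2 h3 h5 h6⟩
    · symm
      apply Nat.div_eq_of_eq_mul_left (by omega)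
      generalize comega F (e * m) (-1 : F) 0 = w0 at *
      generalize comega F (e * m) (-1 : F) 2 = w2 at *
      generalize comega F (e * m) (-1 : F) e = we at *
      have s2' : p ^ n = 4 * w2 + 1 := by omega
      rw [hr'] at hr
      have h3p : 1 ≤ 3 * p := by omega
      zify [h3p, hq1] at *
      linear_combination (-4 * p - 4 : ℤ) * s0 - (p + 1 : ℤ) * s2' - 4 * hr
    · symm
      apply Nat.div_eq_of_eq_mul_left (by omega)
      rw [hr'] at hr
      have : p ^ n - 1 = comega F (e * m) (-1 : F) e * (p + 1) + (p + 1) := by rw [hr]; ring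
      omega
end
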